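/- arXiv:1810.05718 — 9 statements merged into one kernel-verified Lean document; each statement's English description precedes it below -/
import Mathlib

section
/- If v : [a,b] → ℝ is continuous and satisfies v(Φ(t)) = v(t) for all t ∈ [a,b], then v is constant. -/
/-!
The shift `Φ t = t + α * φ t` moves every point of `(a, b)` strictly to the right without reaching
beyond `b`. For `t ∈ (a, b)` the level set `{x ∈ [t, b] | v x = v t}` is compact, nonempty, and
stable under `Φ`, so its largest element cannot lie below `b`; hence `v t = v b`. Thus `v` equals
`v b` on `(a, b]`, and on `[a, b]` by continuity.
-/

theorem stmt_1
    (a b : ℝ) (hab : a < b)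
    (φ : ℝ → ℝ) (L : ℝ) (hLpos : 0 < L)
    (hLip : LipschitzOnWith (Real.toNNReal L) φ (Set.Icc a b))
    (hLeast : ∀ L' : ℝ, 0 ≤ L' →
      LipschitzOnWith (Real.toNNReal L') φ (Set.Icc a b) → L ≤ L')
    (hφa : φ a = 0) (hφb : φ b = 0)
    (hφpos : ∀ t ∈ Set.Ioo a b, 0 < φ t)
    (α : ℝ) (hα0 : 0 < α * L) (hα1 : α * L < 1)
    (v : ℝ → ℝ) (hv : ContinuousOn v (Set.Icc a b))
    (hinv : ∀ t ∈ Set.Icc a b, v (t + α * φ t) = v t) :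
    ∀ s ∈ Set.Icc a b, ∀ t ∈ Set.Icc a b, v s = v t := by
  have hα : 0 < α := pos_of_mul_pos_left hα0 hLpos.le
  have hΦ_le : ∀ t ∈ Set.Icc a b, t + α * φ t ≤ b := by
    intro t ht
    have h := hLip.dist_le_mul t ht b (Set.right_mem_Icc.2 hab.le)
    rw [Real.coe_toNNReal L hLpos.le, Real.dist_eq, Real.dist_eq, hφb, sub_zero,
      abs_sub_comm t b, abs_of_nonneg (sub_nonneg.2 ht.2)] at h
    have h1 : α * φ t ≤ α * (L * (b - t)) :=
      mul_le_mul_of_nonneg_left ((le_abs_self _).trans h) hα.le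
    nlinarith [mul_nonneg (sub_nonneg.2 hα1.le) (sub_nonneg.2 ht.2)]
  have hIoo : ∀ t ∈ Set.Ioo a b, v t = v b := by
    intro t ht
    have hcont : ContinuousOn v (Set.Icc t b) := hv.mono (Set.Icc_subset_Icc_left ht.1.le)
    have hcomp : IsCompact (Set.Icc t b ∩ v ⁻¹' {v t}) :=
      isCompact_Icc.of_isClosed_subset
        (hcont.preimage_isClosed_of_isClosed isClosed_Icc isClosed_singleton)
        Set.inter_subset_left
    obtain ⟨m, ⟨hm, hvm⟩, hmax⟩ :=
      hcomp.exists_isGreatest ⟨t, Set.left_mem_Icc.2 ht.2.le, rfl⟩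
    have hvm : v m = v t := hvm
    rcases hm.2.eq_or_lt with rfl | hmb
    · exact hvm.symm
    · have ham : a < m := ht.1.trans_le hm.1
      have hmem : m ∈ Set.Icc a b := ⟨ham.le, hm.2⟩
      have hpos : 0 < α * φ m := mul_pos hα (hφpos m ⟨ham, hmb⟩)
      have hle : m + α * φ m ≤ m :=
        hmax ⟨⟨by linarith [hm.1], hΦ_le m hmem⟩, (hinv m hmem).trans hvm⟩
      linarith
  have hconst : ∀ t ∈ Set.Icc a b, v t = v b := by
    have hclosed : IsClosed (Set.Icc a b ∩ v ⁻¹' {v b}) :=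
      hv.preimage_isClosed_of_isClosed isClosed_Icc isClosed_singleton
    have hsub : closure (Set.Ioo a b) ⊆ Set.Icc a b ∩ v ⁻¹' {v b} :=
      closure_minimal (fun t ht => ⟨Set.Ioo_subset_Icc_self ht, hIoo t ht⟩) hclosed
    rw [closure_Ioo hab.ne] at hsub
    exact fun t ht => (hsub ht).2
  intro s hs t ht
  rw [hconst s hs, hconst t ht]
end

section
/- Let ε ∈ (0,(b−a)/2) and m > 0 satisfy φ(t) ≥ m for all t ∈ [a+ε, b−ε], and let N be a positive integer with N ≥ (b−a−2ε)/(α·m) + 1. Then for every t ∈ [a+ε, b−ε] and every integer k ≥ N, Φ^k t ∈ (b−ε, b) and Φ^{−k} t ∈ (a, a+ε). -/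
/-!
Fix `t` and let `u k = Ψ k t` be its orbit. Since `φ ≥ 0` on `[a, b]`, the orbit is monotone, and as
long as it stays in `[a + ε, b - ε]` each step advances it by at least `α m`. The orbit therefore
cannot remain in that interval, of length `b - a - 2ε`, for `N` consecutive steps
(`add_mul_le_of_orbit`); applied to the stretches `0, …, N` and `-N, …, 0` this gives
`u N > b - ε` and `u (-N) < a + ε`, and monotonicity extends it to all `k ≥ N`.

The endpoints are never reached: a backward orbit point equal to `a` would be fixed, forcing `t = a`,
and `α L < 1` gives `b - u (k + 1) ≥ (1 - α L) (b - u k)`.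
-/

/-- A monotone orbit of `x ↦ x + α φ x` that lies in `[c, d]`, where `φ ≥ m`, during `n` steps
advances by at least `n α m`. -/
lemma add_mul_le_of_orbit {φ : ℝ → ℝ} {α m c d : ℝ} (hα : 0 < α) {u : ℤ → ℝ} (hu : Monotone u)
    (hs : ∀ k, u (k + 1) = u k + α * φ (u k)) (hφ : ∀ x ∈ Set.Icc c d, m ≤ φ x)
    (i : ℤ) (hi : c ≤ u i) (n : ℕ) (hn : u (i + n) ≤ d) :
    u i + n * (α * m) ≤ u (i + n) := by
  induction n with
  | zero => simp
  | succ n ih =>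
    have e : i + ((n + 1 : ℕ) : ℤ) = i + n + 1 := by push_cast; ring
    rw [e] at hn ⊢
    have h1 : u (i + n) ≤ u (i + n + 1) := hu (by omega)
    have h2 : u i ≤ u (i + n) := hu (by omega)
    have h3 := ih (h1.trans hn)
    have h4 := mul_le_mul_of_nonneg_left (hφ _ ⟨hi.trans h2, h1.trans hn⟩) hα.le
    rw [hs]
    push_cast
    linarith

theorem stmt_7
    (a b : ℝ) (hab : a < b)
    (φ : ℝ → ℝ) (L : ℝ) (hLpos : 0 < L)
    (hLip : LipschitzOnWith (Real.toNNReal L) φ (Set.Icc a b))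
    (hLeast : ∀ L' : ℝ, 0 ≤ L' →
      LipschitzOnWith (Real.toNNReal L') φ (Set.Icc a b) → L ≤ L')
    (hφa : φ a = 0) (hφb : φ b = 0)
    (hφpos : ∀ t ∈ Set.Ioo a b, 0 < φ t)
    (α : ℝ) (hα0 : 0 < α * L) (hα1 : α * L < 1)
    (Ψ : ℤ → ℝ → ℝ)
    (hΨ0 : ∀ t ∈ Set.Icc a b, Ψ 0 t = t)
    (hΨsucc : ∀ (k : ℤ), ∀ t ∈ Set.Icc a b, Ψ (k + 1) t = Ψ k t + α * φ (Ψ k t))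
    (hΨmem : ∀ (k : ℤ), ∀ t ∈ Set.Icc a b, Ψ k t ∈ Set.Icc a b)
    (ε m : ℝ) (hε0 : 0 < ε) (hεlt : ε < (b - a) / 2)
    (hm : 0 < m) (hφm : ∀ t ∈ Set.Icc (a + ε) (b - ε), m ≤ φ t)
    (N : ℕ) (hN : 0 < N) (hNge : (b - a - 2 * ε) / (α * m) + 1 ≤ (N : ℝ)) :
    ∀ t ∈ Set.Icc (a + ε) (b - ε), ∀ k : ℤ, (N : ℤ) ≤ k →
      Ψ k t ∈ Set.Ioo (b - ε) b ∧ Ψ (-k) t ∈ Set.Ioo a (a + ε) := by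
  intro t ht k hk
  have hα : 0 < α := pos_of_mul_pos_left hα0 hLpos.le
  have htI : t ∈ Set.Icc a b := ⟨by linarith [ht.1], by linarith [ht.2]⟩
  obtain ⟨u, hu⟩ : ∃ u : ℤ → ℝ, u = fun k => Ψ k t := ⟨_, rfl⟩
  have h0 : u 0 = t := by rw [hu]; exact hΨ0 t htI
  have hs : ∀ k, u (k + 1) = u k + α * φ (u k) := fun k => by rw [hu]; exact hΨsucc k t htI
  have hI : ∀ k, u k ∈ Set.Icc a b := fun k => by rw [hu]; exact hΨmem k t htI
  have hφ0 : ∀ x ∈ Set.Icc a b, 0 ≤ φ x := by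
    intro x hx
    rcases hx.1.eq_or_lt with h | h
    · rw [← h, hφa]
    rcases hx.2.eq_or_lt with h' | h'
    · rw [h', hφb]
    exact (hφpos x ⟨h, h'⟩).le
  have hmono : Monotone u := monotone_int_of_le_succ fun k => by
    rw [hs]
    have := mul_nonneg hα.le (hφ0 _ (hI k))
    linarith
  have hNm : b - a - 2 * ε < N * (α * m) := by
    rw [← div_lt_iff₀ (mul_pos hα hm)]
    linarith
  have hfwd : b - ε < u N := by
    by_contra! h
    have := add_mul_le_of_orbit hα hmono hs hφm 0 (by rw [h0]; exact ht.1) N (by simpa using h)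
    rw [zero_add, h0] at this
    linarith [ht.1]
  have hbwd : u (-N) < a + ε := by
    by_contra! h
    have := add_mul_le_of_orbit hα hmono hs hφm (-N) h N (by simpa [h0] using ht.2)
    rw [neg_add_cancel, h0] at this
    linarith [ht.2]
  have hb : ∀ n : ℕ, u n < b := by
    intro n
    induction n with
    | zero => rw [Nat.cast_zero, h0]; linarith [ht.2]
    | succ n ih =>
      have h1 := hLip.dist_le_mul _ (hI n) b ⟨hab.le, le_rfl⟩
      rw [Real.coe_toNNReal _ hLpos.le, Real.dist_eq, Real.dist_eq, hφb, sub_zero,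
        abs_of_nonneg (hφ0 _ (hI n)), abs_of_neg (by linarith)] at h1
      have h2 := mul_le_mul_of_nonneg_left h1 hα.le
      have h3 : 0 < (1 - α * L) * (b - u n) := mul_pos (by linarith) (by linarith)
      rw [Nat.cast_succ, hs]
      linarith
  have ha : ∀ n : ℕ, a < u (-n) := by
    intro n
    induction n with
    | zero => rw [Nat.cast_zero, neg_zero, h0]; linarith [ht.1]
    | succ n ih =>
      refine lt_of_le_of_ne (hI _).1 fun h => ?_
      -- `a` is fixed by the shift, so the next orbit point would be `a` as well.
      have h1 := hs (-((n + 1 : ℕ) : ℤ))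
      rw [← h, hφa, show -((n + 1 : ℕ) : ℤ) + 1 = -n by push_cast; ring] at h1
      linarith
  obtain ⟨n, rfl⟩ := Int.eq_ofNat_of_zero_le (by omega : 0 ≤ k)
  have key : u n ∈ Set.Ioo (b - ε) b ∧ u (-n) ∈ Set.Ioo a (a + ε) :=
    ⟨⟨hfwd.trans_le (hmono hk), hb n⟩, ⟨ha n, (hmono (by omega)).trans_lt hbwd⟩⟩
  rw [hu] at key
  exact key
end

section
/- Let δ ∈ (0,1/2), ε > 0, and let E₊ : [a,b] → ℝ be a Lipschitz function with E₊(b) = 0 and φ(t) = φ'(b)·(1 + E₊(t))·(t − b) for all t ∈ [a,b], such that |E₊(t)| ≤ δ for all t ∈ [b−ε, b] and Lip(E₊)·ε ≤ δ. Then for all t_a, t_b ∈ [b−ε, b], |Φ(t_b) − Φ(t_a)| ≤ (1 − α·(−φ'(b))·(1−2δ))·|t_b − t_a|. -/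
/-!
Near `b` the shift `Φ(t) = t + α φ(t)` is nondecreasing, because `α L < 1`, so only an upper bound
for its increments is needed. For `s ≤ t` within `ε` of `b`,
`φ t - φ s = db * ((1 + Ep t) * (t - s) + (Ep t - Ep s) * (s - b))`.
Here `1 + Ep t ≥ 1 - δ`, and the Lipschitz bound for `Ep` together with `|s - b| ≤ ε` and
`KEp * ε ≤ δ` bounds the second summand below by `-δ * (t - s)`. Since `db < 0`, this gives
`φ t - φ s ≤ db * (1 - 2 * δ) * (t - s)`.
-/

theorem stmt_8
    (a b : ℝ) (hab : a < b)
    (φ : ℝ → ℝ) (L : ℝ) (hLpos : 0 < L)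
    (hLip : LipschitzOnWith (Real.toNNReal L) φ (Set.Icc a b))
    (hLeast : ∀ L' : ℝ, 0 ≤ L' →
      LipschitzOnWith (Real.toNNReal L') φ (Set.Icc a b) → L ≤ L')
    (hφa : φ a = 0) (hφb : φ b = 0)
    (hφpos : ∀ t ∈ Set.Ioo a b, 0 < φ t)
    (α : ℝ) (hα0 : 0 < α * L) (hα1 : α * L < 1)
    (da db : ℝ)
    (hda : HasDerivWithinAt φ da (Set.Icc a b) a)
    (hdb : HasDerivWithinAt φ db (Set.Icc a b) b)
    (hda0 : 0 < da) (hdb0 : db < 0)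
    (C : ℝ) (hC : 0 ≤ C)
    (hTa : ∀ t ∈ Set.Icc a b, |φ t - da * (t - a)| ≤ C * (t - a) ^ 2)
    (hTb : ∀ t ∈ Set.Icc a b, |φ t - db * (t - b)| ≤ C * (t - b) ^ 2)
    (δ ε : ℝ) (hδ0 : 0 < δ) (hδhalf : δ < 1 / 2) (hε0 : 0 < ε)
    (Ep : ℝ → ℝ) (KEp : ℝ) (hKEp0 : 0 ≤ KEp)
    (hEpLip : LipschitzOnWith (Real.toNNReal KEp) Ep (Set.Icc a b))
    (hEpb : Ep b = 0)
    (hEpEq : ∀ t ∈ Set.Icc a b, φ t = db * (1 + Ep t) * (t - b))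
    (hEpδ : ∀ t ∈ Set.Icc (b - ε) b, |Ep t| ≤ δ)
    (hKEpε : KEp * ε ≤ δ) :
    ∀ ta ∈ Set.Icc (b - ε) b ∩ Set.Icc a b, ∀ tb ∈ Set.Icc (b - ε) b ∩ Set.Icc a b,
      |(tb + α * φ tb) - (ta + α * φ ta)| ≤ (1 - α * (-db) * (1 - 2 * δ)) * |tb - ta| := by
  have hα : 0 < α := pos_of_mul_pos_left hα0 hLpos.le
  have key : ∀ s ∈ Set.Icc (b - ε) b ∩ Set.Icc a b, ∀ t ∈ Set.Icc (b - ε) b ∩ Set.Icc a b, s ≤ t →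
      |(t + α * φ t) - (s + α * φ s)| ≤ (1 - α * (-db) * (1 - 2 * δ)) * |t - s| := by
    rintro s ⟨⟨hs1, hs2⟩, hs⟩ t ⟨ht1, ht⟩ hst
    have hts : 0 ≤ t - s := sub_nonneg.2 hst
    have hE : |Ep t - Ep s| ≤ KEp * (t - s) := by
      have h := hEpLip.dist_le_mul t ht s hs
      rwa [Real.dist_eq, Real.dist_eq, Real.coe_toNNReal _ hKEp0, abs_of_nonneg hts] at h
    have hφ : |φ t - φ s| ≤ L * (t - s) := by
      have h := hLip.dist_le_mul t ht s hs
      rwa [Real.dist_eq, Real.dist_eq, Real.coe_toNNReal _ hLpos.le, abs_of_nonneg hts] at h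
    have hmono : 0 ≤ (t + α * φ t) - (s + α * φ s) := by
      have h1 := mul_le_mul_of_nonneg_left (neg_le_of_abs_le hφ) hα.le
      have h2 := mul_nonneg (sub_nonneg.2 hα1.le) hts
      linarith
    have hvar : -(δ * (t - s)) ≤ (Ep t - Ep s) * (s - b) := by
      refine neg_le_of_abs_le ?_
      calc |(Ep t - Ep s) * (s - b)| = |Ep t - Ep s| * (b - s) := by
            rw [abs_mul, abs_sub_comm s b, abs_of_nonneg (sub_nonneg.2 hs2)]
        _ ≤ KEp * (t - s) * ε :=
            mul_le_mul hE (by linarith) (sub_nonneg.2 hs2) (mul_nonneg hKEp0 hts)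
        _ = KEp * ε * (t - s) := by ring
        _ ≤ δ * (t - s) := mul_le_mul_of_nonneg_right hKEpε hts
    have hsize : (1 - δ) * (t - s) ≤ (1 + Ep t) * (t - s) :=
      mul_le_mul_of_nonneg_right (by linarith [neg_le_of_abs_le (hEpδ t ht1)]) hts
    have hinc : φ t - φ s ≤ db * ((1 - 2 * δ) * (t - s)) := by
      calc φ t - φ s = db * ((1 + Ep t) * (t - s) + (Ep t - Ep s) * (s - b)) := by
            rw [hEpEq t ht, hEpEq s hs]; ring
        _ ≤ db * ((1 - 2 * δ) * (t - s)) :=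
            mul_le_mul_of_nonpos_left (by linarith) hdb0.le
    rw [abs_of_nonneg hmono, abs_of_nonneg hts]
    linarith [mul_le_mul_of_nonneg_left hinc hα.le]
  intro ta hta tb htb
  rcases le_total ta tb with h | h
  · exact key ta hta tb htb h
  · rw [abs_sub_comm, abs_sub_comm tb ta]
    exact key tb htb ta hta h
end

section
/- Let w : [a,b] → ℝ be continuous. If there exists t ∈ (a,b) such that the series Σ_{j=0}^∞ w(Φ^j t) and Σ_{k=1}^∞ w(Φ^{−k} t) both converge, then w(a) = 0 and w(b) = 0. -/
/-!
Since `α > 0` and `φ ≥ 0` on `[a,b]`, the two-sided orbit `k ↦ Ψ k t` of an interior point `t` is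
nondecreasing in `k`. It stays in the compact interval `[a,b]`, so it converges in both directions;
by continuity of `φ` each limit is a zero of `φ` (`eq_endpoint_of_tendsto_step`), hence an endpoint.
As the orbit passes through `t ∈ (a,b)`, the forward limit is `b` and the backward limit is `a`.
The terms of a convergent series tend to `0`, so continuity of `w` gives `w b = 0` and `w a = 0`
(`eq_zero_of_tendsto_partial_sums`).
-/

/-- A limit of points whose displacement `α * φ` vanishes in the limit is a zero of `φ`, hence an
endpoint. Taking `u n` and `v n` to be consecutive orbit points in either order of time covers the
forward and the backward orbit at once. -/
lemma eq_endpoint_of_tendsto_step {a b c α : ℝ} {φ : ℝ → ℝ} {u v : ℕ → ℝ}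
    (hφ : ContinuousOn φ (Set.Icc a b)) (hφpos : ∀ t ∈ Set.Ioo a b, 0 < φ t) (hα : 0 < α)
    (hu : ∀ n, u n ∈ Set.Icc a b) (hc : c ∈ Set.Icc a b)
    (huc : Filter.Tendsto u Filter.atTop (nhds c))
    (hvc : Filter.Tendsto v Filter.atTop (nhds c))
    (huv : ∀ n, v n = u n + α * φ (u n)) : c = a ∨ c = b := by
  have hφu : Filter.Tendsto (fun n => φ (u n)) Filter.atTop (nhds (φ c)) :=
    (hφ c hc).tendsto.comp
      (tendsto_nhdsWithin_iff.2 ⟨huc, Filter.Eventually.of_forall hu⟩)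
  have hlim : Filter.Tendsto v Filter.atTop (nhds (c + α * φ c)) := by
    rw [funext huv]
    exact huc.add (hφu.const_mul α)
  have heq := tendsto_nhds_unique hvc hlim
  have hzero : φ c = 0 := by
    have : α * φ c = 0 := by linarith
    exact (mul_eq_zero.1 this).resolve_left hα.ne'
  by_contra! hne
  exact (hφpos c ⟨lt_of_le_of_ne hc.1 hne.1.symm, lt_of_le_of_ne hc.2 hne.2⟩).ne' hzero

lemma eq_zero_of_tendsto_partial_sums {a b c S : ℝ} {w : ℝ → ℝ} {u : ℕ → ℝ}
    (hw : ContinuousOn w (Set.Icc a b)) (hu : ∀ n, u n ∈ Set.Icc a b) (hc : c ∈ Set.Icc a b)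
    (huc : Filter.Tendsto u Filter.atTop (nhds c))
    (hS : Filter.Tendsto (fun n : ℕ => ∑ j ∈ Finset.range n, w (u j)) Filter.atTop (nhds S)) :
    w c = 0 := by
  have hwu : Filter.Tendsto (fun n => w (u n)) Filter.atTop (nhds (w c)) :=
    (hw c hc).tendsto.comp
      (tendsto_nhdsWithin_iff.2 ⟨huc, Filter.Eventually.of_forall hu⟩)
  have hdiff := ((Filter.tendsto_add_atTop_iff_nat 1).2 hS).sub hS
  simp only [Finset.sum_range_succ, add_sub_cancel_left, sub_self] at hdiff
  exact tendsto_nhds_unique hwu hdiff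


theorem stmt_10
    (a b : ℝ) (hab : a < b)
    (φ : ℝ → ℝ) (L : ℝ) (hLpos : 0 < L)
    (hLip : LipschitzOnWith (Real.toNNReal L) φ (Set.Icc a b))
    (hLeast : ∀ L' : ℝ, 0 ≤ L' →
      LipschitzOnWith (Real.toNNReal L') φ (Set.Icc a b) → L ≤ L')
    (hφa : φ a = 0) (hφb : φ b = 0)
    (hφpos : ∀ t ∈ Set.Ioo a b, 0 < φ t)
    (α : ℝ) (hα0 : 0 < α * L) (hα1 : α * L < 1)
    (Ψ : ℤ → ℝ → ℝ)
    (hΨ0 : ∀ t ∈ Set.Icc a b, Ψ 0 t = t)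
    (hΨsucc : ∀ (k : ℤ), ∀ t ∈ Set.Icc a b, Ψ (k + 1) t = Ψ k t + α * φ (Ψ k t))
    (hΨmem : ∀ (k : ℤ), ∀ t ∈ Set.Icc a b, Ψ k t ∈ Set.Icc a b)
    (w : ℝ → ℝ) (hw : ContinuousOn w (Set.Icc a b))
    (hconv : ∃ t ∈ Set.Ioo a b,
      (∃ S₁ : ℝ, Filter.Tendsto (fun n : ℕ => ∑ j ∈ Finset.range n, w (Ψ (j : ℤ) t))
        Filter.atTop (nhds S₁)) ∧
      (∃ S₂ : ℝ, Filter.Tendsto (fun n : ℕ => ∑ k ∈ Finset.range n, w (Ψ (-((k : ℤ) + 1)) t))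
        Filter.atTop (nhds S₂))) :
    w a = 0 ∧ w b = 0 := by
  obtain ⟨t, ht, ⟨S₁, hS₁⟩, S₂, hS₂⟩ := hconv
  have htI : t ∈ Set.Icc a b := Set.Ioo_subset_Icc_self ht
  have hα : 0 < α := pos_of_mul_pos_left hα0 hLpos.le
  have hφ := hLip.continuousOn
  have hφ_nonneg : ∀ s ∈ Set.Icc a b, 0 ≤ φ s := by
    intro s hs
    rcases hs.1.eq_or_lt with h | h
    · rw [← h, hφa]
    rcases hs.2.eq_or_lt with h' | h'
    · rw [h', hφb]
    exact (hφpos s ⟨h, h'⟩).le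
  have hmono : Monotone fun k : ℤ => Ψ k t := by
    refine monotone_int_of_le_succ fun k => ?_
    have := mul_nonneg hα.le (hφ_nonneg _ (hΨmem k t htI))
    simp only [hΨsucc k t htI]
    linarith
  have h0 : Ψ 0 t = t := hΨ0 t htI
  constructor
  · set y : ℕ → ℝ := fun n => Ψ (-((n : ℤ) + 1)) t with hy
    have hyI : ∀ n, y n ∈ Set.Icc a b := fun n => hΨmem _ t htI
    have hyanti : Antitone y := fun m n hmn => hmono (by omega)
    have hylim := tendsto_atTop_ciInf hyanti ⟨a, by rintro _ ⟨n, rfl⟩; exact (hyI n).1⟩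
    set c := ⨅ n, y n
    have hcI : c ∈ Set.Icc a b :=
      isClosed_Icc.mem_of_tendsto hylim (Filter.Eventually.of_forall hyI)
    have hct : c ≤ t := by
      refine le_of_tendsto' hylim fun n => ?_
      rw [← h0]
      exact hmono (by omega)
    have hstep : ∀ n, y n = y (n + 1) + α * φ (y (n + 1)) := by
      intro n
      have h := hΨsucc (-(((n + 1 : ℕ) : ℤ) + 1)) t htI
      rwa [show -(((n + 1 : ℕ) : ℤ) + 1) + 1 = -((n : ℤ) + 1) by push_cast; ring] at h
    have hca : c = a :=
      (eq_endpoint_of_tendsto_step hφ hφpos hα (fun n => hyI (n + 1)) hcI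
        ((Filter.tendsto_add_atTop_iff_nat 1).2 hylim) hylim hstep).resolve_right
        (hct.trans_lt ht.2).ne
    rw [← hca]
    exact eq_zero_of_tendsto_partial_sums hw hyI hcI hylim hS₂
  · set x : ℕ → ℝ := fun n => Ψ (n : ℤ) t with hx
    have hxI : ∀ n, x n ∈ Set.Icc a b := fun n => hΨmem _ t htI
    have hxmono : Monotone x := fun m n hmn => hmono (by omega)
    have hxlim := tendsto_atTop_ciSup hxmono ⟨b, by rintro _ ⟨n, rfl⟩; exact (hxI n).2⟩
    set c := ⨆ n, x n
    have hcI : c ∈ Set.Icc a b :=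
      isClosed_Icc.mem_of_tendsto hxlim (Filter.Eventually.of_forall hxI)
    have htc : t ≤ c := by
      refine ge_of_tendsto' hxlim fun n => ?_
      rw [← h0]
      exact hmono (by omega)
    have hstep : ∀ n, x (n + 1) = x n + α * φ (x n) := by
      intro n
      have h := hΨsucc (n : ℤ) t htI
      simpa [hx] using h
    have hcb : c = b :=
      (eq_endpoint_of_tendsto_step hφ hφpos hα hxI hcI hxlim
        ((Filter.tendsto_add_atTop_iff_nat 1).2 hxlim) hstep).resolve_left
        (ht.1.trans_le htc).ne'
    rw [← hcb]
    exact eq_zero_of_tendsto_partial_sums hw hxI hcI hxlim hS₁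
end

section
/- Let w : [a,b] → ℝ be Lipschitz with w(a) = w(b) = 0. Then for every t ∈ (a,b) the doubly infinite series Σ_{k=−∞}^{∞} w(Φ^k t) converges absolutely, and |Σ_{k=−∞}^{∞} w(Φ^k t)| ≤ Lip(w)·( 2/(α·(1−δ)·φ'_∞) + N )·(b−a). -/
/-!
Along an orbit `x k = Ψ k t` the increments are `x (k + 1) - x k = α * φ (x k) ≥ 0`, so the orbit is
monotone in `[a, b]` and its increments sum to at most `b - a`
(`sum_increment_le_of_mem_Icc`).

Put `c = α (1 - δ) min (da, -db)`. Within `ε` of an endpoint, `φ` is at least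
`(1 - δ) min (da, -db)` times the distance to that endpoint; since `w` vanishes at both endpoints,
`|w (x k)| ≤ Lw / c * (x (k + 1) - x k)` there. These terms therefore contribute at most
`Lw * (b - a) / c`. Away from the endpoints each increment is at least `α * m`, so at most `N`
orbit points lie there (`card_middle_le`), each contributing at most `Lw * (b - a)`. These bounds
hold uniformly over finite sets of indices, which gives absolute convergence and the estimate
together, even with `1 / c` in place of `2 / c`.
-/

theorem sum_Ico_int_increment (x : ℤ → ℝ) {p q : ℤ} (h : p ≤ q) :
    ∑ k ∈ Finset.Ico p q, (x (k + 1) - x k) = x q - x p := by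
  induction q, h using Int.leInduction with
  | base => simp
  | succ n hn ih =>
    have hI : Finset.Ico p (n + 1) = insert n (Finset.Ico p n) := by
      ext i; simp only [Finset.mem_Ico, Finset.mem_insert]; omega
    rw [hI, Finset.sum_insert (by simp), ih]
    ring

theorem sum_increment_le {x : ℤ → ℝ} (hx : Monotone x) {S : Finset ℤ} {p q : ℤ} (h : p ≤ q)
    (hS : S ⊆ Finset.Ico p q) : ∑ k ∈ S, (x (k + 1) - x k) ≤ x q - x p := by
  rw [← sum_Ico_int_increment x h]
  exact Finset.sum_le_sum_of_subset_of_nonneg hS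
    fun k _ _ => sub_nonneg.2 (hx (by omega))

theorem sum_increment_le_of_mem_Icc {x : ℤ → ℝ} (hx : Monotone x) {a b : ℝ}
    (hmem : ∀ k, x k ∈ Set.Icc a b) (S : Finset ℤ) :
    ∑ k ∈ S, (x (k + 1) - x k) ≤ b - a := by
  rcases S.eq_empty_or_nonempty with rfl | hne
  · have := hmem 0
    simpa using this.1.trans this.2
  · have h1 : S.min' hne ≤ S.max' hne := S.min'_le _ (S.max'_mem hne)
    have := sum_increment_le hx (S := S) (p := S.min' hne) (q := S.max' hne + 1) (by omega)
      (fun k hk => Finset.mem_Ico.2 ⟨S.min'_le k hk, by have := S.le_max' k hk; omega⟩)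
    linarith [(hmem (S.min' hne)).1, (hmem (S.max' hne + 1)).2]

/-- A monotone sequence whose increments are at least `μ` at the indices in `S` visits an interval
`[c, d]` at most `(d - c) / μ + 1` times along `S`: the increment at the last visit may leave the
interval, whereas all earlier ones fit inside it. -/
theorem card_middle_le {x : ℤ → ℝ} (hx : Monotone x) {c d μ : ℝ} (hcd : c ≤ d) (hμ : 0 < μ)
    {S : Finset ℤ} (hmem : ∀ k ∈ S, x k ∈ Set.Icc c d) (hstep : ∀ k ∈ S, μ ≤ x (k + 1) - x k) :
    (S.card : ℝ) ≤ (d - c) / μ + 1 := by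
  rcases S.eq_empty_or_nonempty with rfl | hne
  · have : 0 ≤ (d - c) / μ := div_nonneg (sub_nonneg.2 hcd) hμ.le
    simp only [Finset.card_empty, Nat.cast_zero]
    linarith
  · have h1 : S.min' hne ≤ S.max' hne := S.min'_le _ (S.max'_mem hne)
    have h2 := sum_increment_le hx (S := S.erase (S.max' hne)) h1
      (fun k hk => by
        obtain ⟨hk1, hk2⟩ := Finset.mem_erase.1 hk
        exact Finset.mem_Ico.2 ⟨S.min'_le k hk2, lt_of_le_of_ne (S.le_max' k hk2) hk1⟩)
    have h3 := Finset.card_nsmul_le_sum (S.erase (S.max' hne)) (fun k => x (k + 1) - x k) μ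
      (fun k hk => hstep k (Finset.mem_of_mem_erase hk))
    have h4 : ((S.erase (S.max' hne)).card : ℝ) + 1 = S.card := by
      exact_mod_cast Finset.card_erase_add_one (S.max'_mem hne)
    rw [nsmul_eq_mul] at h3
    have h5 : ((S.erase (S.max' hne)).card : ℝ) ≤ (d - c) / μ := by
      rw [le_div_iff₀ hμ]
      linarith [(hmem _ (S.min'_mem hne)).1, (hmem _ (S.max'_mem hne)).2]
    linarith

theorem stmt_12
    (a b : ℝ) (hab : a < b)
    (φ : ℝ → ℝ) (L : ℝ) (hLpos : 0 < L)
    (hLip : LipschitzOnWith (Real.toNNReal L) φ (Set.Icc a b))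
    (hLeast : ∀ L' : ℝ, 0 ≤ L' →
      LipschitzOnWith (Real.toNNReal L') φ (Set.Icc a b) → L ≤ L')
    (hφa : φ a = 0) (hφb : φ b = 0)
    (hφpos : ∀ t ∈ Set.Ioo a b, 0 < φ t)
    (α : ℝ) (hα0 : 0 < α * L) (hα1 : α * L < 1)
    (Ψ : ℤ → ℝ → ℝ)
    (hΨ0 : ∀ t ∈ Set.Icc a b, Ψ 0 t = t)
    (hΨsucc : ∀ (k : ℤ), ∀ t ∈ Set.Icc a b, Ψ (k + 1) t = Ψ k t + α * φ (Ψ k t))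
    (hΨmem : ∀ (k : ℤ), ∀ t ∈ Set.Icc a b, Ψ k t ∈ Set.Icc a b)
    (da db : ℝ)
    (hda : HasDerivWithinAt φ da (Set.Icc a b) a)
    (hdb : HasDerivWithinAt φ db (Set.Icc a b) b)
    (hda0 : 0 < da) (hdb0 : db < 0)
    (C : ℝ) (hC : 0 ≤ C)
    (hTa : ∀ t ∈ Set.Icc a b, |φ t - da * (t - a)| ≤ C * (t - a) ^ 2)
    (hTb : ∀ t ∈ Set.Icc a b, |φ t - db * (t - b)| ≤ C * (t - b) ^ 2)
    (Em Ep : ℝ → ℝ) (KEm KEp : ℝ) (hKEm0 : 0 ≤ KEm) (hKEp0 : 0 ≤ KEp)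
    (hEmLip : LipschitzOnWith (Real.toNNReal KEm) Em (Set.Icc a b))
    (hEpLip : LipschitzOnWith (Real.toNNReal KEp) Ep (Set.Icc a b))
    (hEma : Em a = 0) (hEpb : Ep b = 0)
    (hEmEq : ∀ t ∈ Set.Icc a b, φ t = da * (1 + Em t) * (t - a))
    (hEpEq : ∀ t ∈ Set.Icc a b, φ t = db * (1 + Ep t) * (t - b))
    (δ ε m : ℝ) (N : ℕ)
    (hδ0 : 0 < δ) (hδhalf : δ < 1 / 2)
    (hε0 : 0 < ε) (hεlt : ε < (b - a) / 4)
    (hEmδ : ∀ t ∈ Set.Icc a (a + ε), |Em t| ≤ δ)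
    (hEpδ : ∀ t ∈ Set.Icc (b - ε) b, |Ep t| ≤ δ)
    (hKEmε : KEm * ε ≤ δ) (hKEpε : KEp * ε ≤ δ)
    (hm : 0 < m) (hφm : ∀ t ∈ Set.Icc (a + ε) (b - ε), m ≤ φ t)
    (hN : 0 < N) (hNge : (b - a - 2 * ε) / (α * m) + 1 ≤ (N : ℝ))
    (w : ℝ → ℝ) (Lw : ℝ) (hLw0 : 0 ≤ Lw)
    (hwLip : LipschitzOnWith (Real.toNNReal Lw) w (Set.Icc a b))
    (hwLeast : ∀ L' : ℝ, 0 ≤ L' →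
      LipschitzOnWith (Real.toNNReal L') w (Set.Icc a b) → Lw ≤ L')
    (hwa : w a = 0) (hwb : w b = 0)
    :
    ∀ t ∈ Set.Ioo a b,
      Summable (fun k : ℤ => |w (Ψ k t)|) ∧
      |∑' k : ℤ, w (Ψ k t)| ≤
        Lw * (2 / (α * (1 - δ) * min da (-db)) + (N : ℝ)) * (b - a) := by
  intro t ht
  have ht' : t ∈ Set.Icc a b := ⟨ht.1.le, ht.2.le⟩
  have hα : 0 < α := pos_of_mul_pos_left hα0 hLpos.le
  obtain ⟨x, hxdef⟩ : ∃ x : ℤ → ℝ, ∀ k, x k = Ψ k t := ⟨fun k => Ψ k t, fun _ => rfl⟩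
  simp only [← hxdef]
  have hmem : ∀ k, x k ∈ Set.Icc a b := fun k => by rw [hxdef]; exact hΨmem k t ht'
  have hstep : ∀ k, x (k + 1) - x k = α * φ (x k) := fun k => by
    rw [hxdef, hxdef, hΨsucc k t ht']; ring
  have hφnn : ∀ s ∈ Set.Icc a b, 0 ≤ φ s := by
    intro s hs
    rcases hs.1.eq_or_lt with rfl | h1
    · exact hφa.ge
    rcases hs.2.eq_or_lt with rfl | h2
    · exact hφb.ge
    exact (hφpos s ⟨h1, h2⟩).le
  have hinc : ∀ k, 0 ≤ x (k + 1) - x k := fun k => by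
    rw [hstep]; exact mul_nonneg hα.le (hφnn _ (hmem k))
  have hmono : Monotone x := monotone_int_of_le_succ fun k => sub_nonneg.1 (hinc k)
  have hwl : ∀ s ∈ Set.Icc a b, |w s| ≤ Lw * (s - a) := by
    intro s hs
    have := hwLip.dist_le_mul s hs a ⟨le_rfl, hab.le⟩
    rwa [Real.dist_eq, Real.dist_eq, hwa, sub_zero, Real.coe_toNNReal _ hLw0,
      abs_of_nonneg (sub_nonneg.2 hs.1)] at this
  have hwr : ∀ s ∈ Set.Icc a b, |w s| ≤ Lw * (b - s) := by
    intro s hs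
    have := hwLip.dist_le_mul s hs b ⟨hab.le, le_rfl⟩
    rwa [Real.dist_eq, Real.dist_eq, hwb, sub_zero, Real.coe_toNNReal _ hLw0, abs_sub_comm,
      abs_of_nonneg (sub_nonneg.2 hs.2)] at this
  have hδ1 : 0 < 1 - δ := by linarith
  obtain ⟨p, hp⟩ : ∃ p, p = min da (-db) := ⟨_, rfl⟩
  rw [← hp]
  have hp0 : 0 < p := by rw [hp]; exact lt_min hda0 (by linarith)
  have hpa : p ≤ da := hp ▸ min_le_left _ _
  have hpb : p ≤ -db := hp ▸ min_le_right _ _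
  obtain ⟨c, hc⟩ : ∃ c, c = α * (1 - δ) * p := ⟨_, rfl⟩
  rw [← hc]
  have hc0 : 0 < c := by rw [hc]; positivity
  have hφl : ∀ s ∈ Set.Icc a b, s ≤ a + ε → (1 - δ) * p * (s - a) ≤ φ s := by
    intro s hs hsε
    rw [hEmEq s hs]
    have h1 := (abs_le.1 (hEmδ s ⟨hs.1, hsε⟩)).1
    have h2 : (1 - δ) * p ≤ da * (1 + Em s) := by
      rw [mul_comm]; exact mul_le_mul hpa (by linarith) hδ1.le hda0.le
    exact mul_le_mul_of_nonneg_right h2 (sub_nonneg.2 hs.1)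
  have hφr : ∀ s ∈ Set.Icc a b, b - ε ≤ s → (1 - δ) * p * (b - s) ≤ φ s := by
    intro s hs hsε
    rw [hEpEq s hs]
    have h1 := (abs_le.1 (hEpδ s ⟨hsε, hs.2⟩)).1
    have h2 : (1 - δ) * p ≤ -db * (1 + Ep s) := by
      rw [mul_comm]; exact mul_le_mul hpb (by linarith) hδ1.le (by linarith)
    have h3 := mul_le_mul_of_nonneg_right h2 (sub_nonneg.2 hs.2)
    linarith
  have hend : ∀ k, ¬ x k ∈ Set.Icc (a + ε) (b - ε) →
      |w (x k)| ≤ Lw / c * (x (k + 1) - x k) := by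
    intro k hk
    have key : ∀ r, |w (x k)| ≤ Lw * r → (1 - δ) * p * r ≤ φ (x k) →
        |w (x k)| ≤ Lw / c * (x (k + 1) - x k) := by
      intro r h1 h2
      have h3 : r ≤ (x (k + 1) - x k) / c := by
        rw [le_div_iff₀ hc0, hstep, hc]
        have := mul_le_mul_of_nonneg_left h2 hα.le
        linarith
      calc |w (x k)| ≤ Lw * r := h1
        _ ≤ Lw * ((x (k + 1) - x k) / c) := mul_le_mul_of_nonneg_left h3 hLw0
        _ = _ := by ring
    by_cases h : x k ≤ a + ε
    · exact key _ (hwl _ (hmem k)) (hφl _ (hmem k) h)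
    · have h' : b - ε ≤ x k := by
        by_contra h2
        exact hk ⟨by linarith, by linarith⟩
      exact key _ (hwr _ (hmem k)) (hφr _ (hmem k) h')
  have hfin : ∀ S : Finset ℤ,
      ∑ k ∈ S, |w (x k)| ≤ Lw * (2 / c + (N : ℝ)) * (b - a) := by
    classical
    intro S
    rw [← Finset.sum_filter_add_sum_filter_not S (fun k => x k ∈ Set.Icc (a + ε) (b - ε))]
    have hmid : ∑ k ∈ S with x k ∈ Set.Icc (a + ε) (b - ε), |w (x k)|
        ≤ N * (Lw * (b - a)) := by
      have hcard := card_middle_le hmono (c := a + ε) (d := b - ε) (μ := α * m) (by linarith)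
        (mul_pos hα hm) (S := S.filter fun k => x k ∈ Set.Icc (a + ε) (b - ε))
        (fun k hk => (Finset.mem_filter.1 hk).2)
        (fun k hk => by
          rw [hstep]
          exact mul_le_mul_of_nonneg_left (hφm _ (Finset.mem_filter.1 hk).2) hα.le)
      rw [show b - ε - (a + ε) = b - a - 2 * ε by ring] at hcard
      have h1 := Finset.sum_le_card_nsmul (S.filter fun k => x k ∈ Set.Icc (a + ε) (b - ε))
        (fun k => |w (x k)|) (Lw * (b - a)) (fun k _ => (hwl _ (hmem k)).trans
          (mul_le_mul_of_nonneg_left (by linarith [(hmem k).2]) hLw0))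
      rw [nsmul_eq_mul] at h1
      exact h1.trans (mul_le_mul_of_nonneg_right (hcard.trans hNge)
        (mul_nonneg hLw0 (by linarith)))
    have hout : ∑ k ∈ S with ¬ x k ∈ Set.Icc (a + ε) (b - ε), |w (x k)|
        ≤ Lw / c * (b - a) := by
      refine (Finset.sum_le_sum fun k hk => hend k (Finset.mem_filter.1 hk).2).trans ?_
      rw [← Finset.mul_sum]
      exact mul_le_mul_of_nonneg_left (sum_increment_le_of_mem_Icc hmono hmem _)
        (div_nonneg hLw0 hc0.le)
    have hpos : 0 ≤ Lw / c * (b - a) := mul_nonneg (div_nonneg hLw0 hc0.le) (by linarith)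
    calc _ ≤ N * (Lw * (b - a)) + (Lw / c * (b - a) + Lw / c * (b - a)) := by linarith
      _ = _ := by ring
  have hsum : Summable fun k => |w (x k)| := summable_of_sum_le (fun _ => abs_nonneg _) hfin
  refine ⟨hsum, ?_⟩
  have h1 : |∑' k, w (x k)| ≤ ∑' k, |w (x k)| := by
    simpa only [Real.norm_eq_abs] using norm_tsum_le_tsum_norm (f := fun k => w (x k)) hsum
  exact h1.trans (hsum.tsum_le_of_sum_le hfin)
end

section
/- Define K₁ := (2 + 2ε + α·N·(1−δ)·φ'_∞)/(α·(1−δ)·φ'_∞·(b−a−2ε)), V_φ := 2·(1 + α·Lip(φ))^N/(α·φ'_∞·(1−2δ)), and K_φ := max{K₁, V_φ}. Let w : [a,b] → ℝ be Lipschitz with w(a) = w(b) = 0, and suppose the doubly infinite series Σ_{k=−∞}^{∞} w(Φ^k t) converges for each t ∈ (a,b) to a value independent of t. Then there exists a Lipschitz function v : [a,b] → ℝ with v(Φ(t)) − v(t) = w(t) for all t ∈ [a,b] and Lip(v) ≤ K_φ·Lip(w); moreover, any two Lipschitz solutions of this equation differ by an additive constant. -/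
/-!
Write `F t = t + α φ t`. On the open interval the solution is the backward orbit sum
`v t = ∑_{n ≥ 1} w (F⁻ⁿ t)`, and since the full orbit sum is a constant `c`, it is also
`v t = c - ∑_{n ≥ 0} w (Fⁿ t)`. The two formulas are used on two pieces `[a, a + ε]` and `[a + ε, b]`.

* On `[a, a + ε]` the map `F` expands distances by the factor `1 + α da (1 - 2δ)`, so backward
  orbits approach each other geometrically (`sum_backward_le`).
* On `[b - ε, b]` it contracts them by the factor `1 - α (-db) (1 - 2δ)`, and every point of
  `[a + ε, b]` enters this zone within `N` steps (`reach_right`), during which distances grow by at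
  most `(1 + α L) ^ N`. Hence forward orbits also have summable distances (`sum_forward_le`).

Each piece gives a Lipschitz bound by the second entry of the maximum defining the constant, so the
first entry plays no role; the bounds are glued at `a + ε` and the function is extended from
`(a, b)` to the endpoints. For uniqueness, the difference of two Lipschitz solutions is
`F`-invariant, and since distances between orbits tend to zero, it is constant on each piece.
-/

/-! ### Sums of orbit distances -/

/-- Telescoping form of the geometric series for a sequence that shrinks by `1 + p`. -/
theorem sum_backward_le (D : ℕ → ℝ) (p : ℝ) (hp : 0 < p) (hD : ∀ n, 0 ≤ D n)
    (h : ∀ n, (1 + p) * D (n + 1) ≤ D n) (M : ℕ) :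
    ∑ n ∈ Finset.range M, D (n + 1) ≤ D 0 / p := by
  have key : p * (∑ n ∈ Finset.range M, D (n + 1)) + D M ≤ D 0 := by
    induction M with
    | zero => simp
    | succ k ih =>
      rw [Finset.sum_range_succ]
      have := h k
      nlinarith
  rw [le_div_iff₀ hp]
  have := hD M
  linarith

/-- A sequence that grows by at most the factor `1 + q` per step and shrinks by the factor `1 - p`
from step `N` on. -/
theorem sum_forward_le (D : ℕ → ℝ) (p q : ℝ) (N : ℕ) (hp : 0 < p) (hq : 0 < q)
    (hD : ∀ n, 0 ≤ D n) (h : ∀ n, D (n + 1) ≤ (1 + q) * D n)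
    (h' : ∀ n, N ≤ n → D (n + 1) ≤ (1 - p) * D n) (M : ℕ) :
    ∑ n ∈ Finset.range M, D n ≤ (((1 + q) ^ N - 1) / q + (1 + q) ^ N / p) * D 0 := by
  have pw : ∀ n, D n ≤ (1 + q) ^ n * D 0 := by
    intro n
    induction n with
    | zero => simp
    | succ k ih =>
      calc D (k + 1) ≤ (1 + q) * D k := h k
        _ ≤ (1 + q) * ((1 + q) ^ k * D 0) := by gcongr
        _ = (1 + q) ^ (k + 1) * D 0 := by ring
  have geo : ∀ k, ∑ n ∈ Finset.range k, D n ≤ ((1 + q) ^ k - 1) / q * D 0 := by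
    intro k
    induction k with
    | zero => simp
    | succ k ih =>
      rw [Finset.sum_range_succ]
      have e : ((1 + q) ^ (k + 1) - 1) / q * D 0
          = ((1 + q) ^ k - 1) / q * D 0 + (1 + q) ^ k * D 0 := by
        field_simp
        ring
      rw [e]
      exact add_le_add ih (pw k)
  have tail : ∀ k, N ≤ k → ∑ n ∈ Finset.range k, D n + D k / p
      ≤ (((1 + q) ^ N - 1) / q + (1 + q) ^ N / p) * D 0 := by
    intro k hk
    induction k, hk using Nat.le_induction with
    | base =>
      have h1 := geo N
      have h2 : D N / p ≤ (1 + q) ^ N * D 0 / p := by gcongr; exact pw N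
      have e : (1 + q) ^ N * D 0 / p = (1 + q) ^ N / p * D 0 := by ring
      rw [add_mul]
      linarith
    | succ k hk ih =>
      rw [Finset.sum_range_succ]
      have h1 : D (k + 1) / p ≤ (1 - p) * D k / p := by gcongr; exact h' k hk
      have e : (1 - p) * D k / p = D k / p - D k := by field_simp
      linarith
  have h1 : ∑ n ∈ Finset.range M, D n ≤ ∑ n ∈ Finset.range (max M N), D n :=
    Finset.sum_le_sum_of_subset_of_nonneg
      (Finset.range_mono (le_max_left _ _)) (fun n _ _ => hD n)
  have h2 := tail (max M N) (le_max_right _ _)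
  have h3 : 0 ≤ D (max M N) / p := div_nonneg (hD _) hp.le
  linarith

theorem abs_tsum_sub_tsum_le (g₁ g₂ D : ℕ → ℝ) (K B : ℝ) (hK : 0 ≤ K) (h₁ : Summable g₁)
    (h₂ : Summable g₂) (h : ∀ n, |g₁ n - g₂ n| ≤ K * D n)
    (hB : ∀ M, ∑ n ∈ Finset.range M, D n ≤ B) :
    |∑' n, g₁ n - ∑' n, g₂ n| ≤ K * B := by
  have ht := ((h₁.hasSum.sub h₂.hasSum).tendsto_sum_nat).abs
  refine le_of_tendsto' ht (fun M => ?_)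
  calc |∑ n ∈ Finset.range M, (g₁ n - g₂ n)|
      ≤ ∑ n ∈ Finset.range M, |g₁ n - g₂ n| := Finset.abs_sum_le_sum_abs _ _
    _ ≤ ∑ n ∈ Finset.range M, K * D n := Finset.sum_le_sum (fun n _ => h n)
    _ = K * ∑ n ∈ Finset.range M, D n := by rw [Finset.mul_sum]
    _ ≤ K * B := mul_le_mul_of_nonneg_left (hB M) hK

/-- If `u` is constant along each of two sequences whose distances are summable, and `u` is
Lipschitz between corresponding terms, then the two constants agree. -/
theorem eq_of_invariant (u : ℝ → ℝ) (x y : ℕ → ℝ) (K B us ut : ℝ)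
    (hu : ∀ n, |u (x n) - u (y n)| ≤ K * |x n - y n|)
    (hx : ∀ n, u (x n) = us) (hy : ∀ n, u (y n) = ut)
    (hB : ∀ M, ∑ n ∈ Finset.range M, |x n - y n| ≤ B) : us = ut := by
  have hs : Summable (fun n => |x n - y n|) :=
    summable_of_sum_range_le (fun n => abs_nonneg _) hB
  have ht := hs.tendsto_atTop_zero.const_mul K
  have h0 : |us - ut| ≤ K * 0 :=
    ge_of_tendsto' ht (fun n => by simpa only [hx, hy] using hu n)
  rw [mul_zero] at h0
  exact sub_eq_zero.mp (abs_nonpos_iff.mp h0)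

/-! ### Local estimates -/

/-- Lipschitz bounds on both sides of a point `c` glue to a global one. -/
theorem glue_bound (S : Set ℝ) (c : ℝ) (hc : c ∈ S) (f : ℝ → ℝ) (K : ℝ)
    (h₁ : ∀ s ∈ S, ∀ t ∈ S, s ≤ c → t ≤ c → |f s - f t| ≤ K * |s - t|)
    (h₂ : ∀ s ∈ S, ∀ t ∈ S, c ≤ s → c ≤ t → |f s - f t| ≤ K * |s - t|)
    (s : ℝ) (hs : s ∈ S) (t : ℝ) (ht : t ∈ S) : |f s - f t| ≤ K * |s - t| := by
  have mix : ∀ s ∈ S, ∀ t ∈ S, s ≤ c → c ≤ t → |f s - f t| ≤ K * |s - t| := by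
    intro s hs t ht hsc hct
    have e1 := h₁ s hs c hc hsc le_rfl
    have e2 := h₂ c hc t ht le_rfl hct
    have e3 := abs_sub_le (f s) (f c) (f t)
    rw [abs_of_nonpos (sub_nonpos.mpr hsc)] at e1
    rw [abs_of_nonpos (sub_nonpos.mpr hct)] at e2
    rw [abs_of_nonpos (sub_nonpos.mpr (hsc.trans hct))]
    nlinarith
  rcases le_total s c with h | h <;> rcases le_total t c with h' | h'
  · exact h₁ s hs t ht h h'
  · exact mix s hs t ht h h'
  · rw [abs_sub_comm, abs_sub_comm s]
    exact mix t ht s hs h' h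
  · exact h₂ s hs t ht h h'

/-- The nonlinear part `E(t)(t - e)` of `φ / φ'(e)` near a zero `e` has Lipschitz constant `2δ`. -/
theorem remainder_bound (E : ℝ → ℝ) (e x y δ ε K : ℝ) (hK : 0 ≤ K) (hx : |E x| ≤ δ)
    (hxy : |E x - E y| ≤ K * |x - y|) (hy : |y - e| ≤ ε) (hKε : K * ε ≤ δ) :
    |E x * (x - e) - E y * (y - e)| ≤ 2 * δ * |x - y| := by
  have e1 : E x * (x - e) - E y * (y - e) = E x * (x - y) + (E x - E y) * (y - e) := by ring
  rw [e1]
  have h1 : |E x * (x - y)| ≤ δ * |x - y| := by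
    rw [abs_mul]; gcongr
  have h2 : |(E x - E y) * (y - e)| ≤ δ * |x - y| := by
    rw [abs_mul]
    calc |E x - E y| * |y - e| ≤ (K * |x - y|) * ε := by gcongr
      _ = (K * ε) * |x - y| := by ring
      _ ≤ δ * |x - y| := by gcongr
  have := abs_add_le (E x * (x - y)) ((E x - E y) * (y - e))
  linarith

/-- An increasing orbit that advances by at least `η` per step while it lies in `[l, r]` has passed
`r` after `N` steps. -/
theorem reach_right (x : ℕ → ℝ) (l r η : ℝ) (N : ℕ) (hη : 0 < η) (hmono : Monotone x)
    (hl : l ≤ x 0) (hstep : ∀ n, x n ∈ Set.Icc l r → x n + η ≤ x (n + 1))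
    (hN : (r - l) / η + 1 ≤ N) (n : ℕ) (hn : N ≤ n) : r ≤ x n := by
  by_contra! hlt
  have adv : ∀ k, k ≤ n → l + k * η ≤ x k := by
    intro k
    induction k with
    | zero => intro _; simpa using hl
    | succ k ih =>
      intro hk
      have h1 := ih (by omega)
      have h2 : x k ≤ x n := hmono (by omega)
      have h3 : 0 ≤ (k : ℝ) * η := by positivity
      have h4 := hstep k ⟨by linarith, by linarith⟩
      push_cast
      linarith
  have h1 := adv n le_rfl
  have h2 : (N : ℝ) ≤ n := by exact_mod_cast hn
  have h3 : (r - l) / η ≤ n - 1 := by linarith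
  rw [div_le_iff₀ hη] at h3
  nlinarith

theorem abs_sub_le_of_lipschitzOnWith {f : ℝ → ℝ} {K : ℝ} (hK : 0 ≤ K) {S : Set ℝ}
    (h : LipschitzOnWith (Real.toNNReal K) f S) {s t : ℝ} (hs : s ∈ S) (ht : t ∈ S) :
    |f s - f t| ≤ K * |s - t| := by
  have := h.dist_le_mul s hs t ht
  rwa [Real.dist_eq, Real.dist_eq, Real.coe_toNNReal K hK] at this

/-! ### The cohomological equation -/

set_option maxHeartbeats 1600000 in

theorem stmt_13
    (a b : ℝ) (hab : a < b)
    (φ : ℝ → ℝ) (L : ℝ) (hLpos : 0 < L)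
    (hLip : LipschitzOnWith (Real.toNNReal L) φ (Set.Icc a b))
    (hLeast : ∀ L' : ℝ, 0 ≤ L' →
      LipschitzOnWith (Real.toNNReal L') φ (Set.Icc a b) → L ≤ L')
    (hφa : φ a = 0) (hφb : φ b = 0)
    (hφpos : ∀ t ∈ Set.Ioo a b, 0 < φ t)
    (α : ℝ) (hα0 : 0 < α * L) (hα1 : α * L < 1)
    (Ψ : ℤ → ℝ → ℝ)
    (hΨ0 : ∀ t ∈ Set.Icc a b, Ψ 0 t = t)
    (hΨsucc : ∀ (k : ℤ), ∀ t ∈ Set.Icc a b, Ψ (k + 1) t = Ψ k t + α * φ (Ψ k t))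
    (hΨmem : ∀ (k : ℤ), ∀ t ∈ Set.Icc a b, Ψ k t ∈ Set.Icc a b)
    (da db : ℝ)
    (hda : HasDerivWithinAt φ da (Set.Icc a b) a)
    (hdb : HasDerivWithinAt φ db (Set.Icc a b) b)
    (hda0 : 0 < da) (hdb0 : db < 0)
    (C : ℝ) (hC : 0 ≤ C)
    (hTa : ∀ t ∈ Set.Icc a b, |φ t - da * (t - a)| ≤ C * (t - a) ^ 2)
    (hTb : ∀ t ∈ Set.Icc a b, |φ t - db * (t - b)| ≤ C * (t - b) ^ 2)
    (Em Ep : ℝ → ℝ) (KEm KEp : ℝ) (hKEm0 : 0 ≤ KEm) (hKEp0 : 0 ≤ KEp)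
    (hEmLip : LipschitzOnWith (Real.toNNReal KEm) Em (Set.Icc a b))
    (hEpLip : LipschitzOnWith (Real.toNNReal KEp) Ep (Set.Icc a b))
    (hEma : Em a = 0) (hEpb : Ep b = 0)
    (hEmEq : ∀ t ∈ Set.Icc a b, φ t = da * (1 + Em t) * (t - a))
    (hEpEq : ∀ t ∈ Set.Icc a b, φ t = db * (1 + Ep t) * (t - b))
    (δ ε m : ℝ) (N : ℕ)
    (hδ0 : 0 < δ) (hδhalf : δ < 1 / 2)
    (hε0 : 0 < ε) (hεlt : ε < (b - a) / 4)
    (hEmδ : ∀ t ∈ Set.Icc a (a + ε), |Em t| ≤ δ)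
    (hEpδ : ∀ t ∈ Set.Icc (b - ε) b, |Ep t| ≤ δ)
    (hKEmε : KEm * ε ≤ δ) (hKEpε : KEp * ε ≤ δ)
    (hm : 0 < m) (hφm : ∀ t ∈ Set.Icc (a + ε) (b - ε), m ≤ φ t)
    (hN : 0 < N) (hNge : (b - a - 2 * ε) / (α * m) + 1 ≤ (N : ℝ))
    (w : ℝ → ℝ) (Lw : ℝ) (hLw0 : 0 ≤ Lw)
    (hwLip : LipschitzOnWith (Real.toNNReal Lw) w (Set.Icc a b))
    (hwLeast : ∀ L' : ℝ, 0 ≤ L' →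
      LipschitzOnWith (Real.toNNReal L') w (Set.Icc a b) → Lw ≤ L')
    (hwa : w a = 0) (hwb : w b = 0)
    (hsum : ∃ c : ℝ, ∀ t ∈ Set.Ioo a b, HasSum (fun k : ℤ => w (Ψ k t)) c) :
    ∃ v : ℝ → ℝ,
      LipschitzOnWith
        (Real.toNNReal
          (max
            ((2 + 2 * ε + α * (N : ℝ) * (1 - δ) * min da (-db)) /
              (α * (1 - δ) * min da (-db) * (b - a - 2 * ε)))
            (2 * (1 + α * L) ^ N / (α * min da (-db) * (1 - 2 * δ))) * Lw))
        v (Set.Icc a b) ∧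
      (∀ t ∈ Set.Icc a b, v (t + α * φ t) - v t = w t) ∧
      (∀ v₁ v₂ : ℝ → ℝ,
        (∃ K : NNReal, LipschitzOnWith K v₁ (Set.Icc a b)) →
        (∃ K : NNReal, LipschitzOnWith K v₂ (Set.Icc a b)) →
        (∀ t ∈ Set.Icc a b, v₁ (t + α * φ t) - v₁ t = w t) →
        (∀ t ∈ Set.Icc a b, v₂ (t + α * φ t) - v₂ t = w t) →
        ∃ c : ℝ, ∀ t ∈ Set.Icc a b, v₁ t = v₂ t + c) := by
  have hα : 0 < α := pos_of_mul_pos_left hα0 hLpos.le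
  have hφL : ∀ s ∈ Set.Icc a b, ∀ t ∈ Set.Icc a b, |φ s - φ t| ≤ L * |s - t| :=
    fun s hs t ht => abs_sub_le_of_lipschitzOnWith hLpos.le hLip hs ht
  have hφnn : ∀ t ∈ Set.Icc a b, 0 ≤ φ t := by
    intro t ht
    rcases eq_or_lt_of_le ht.1 with h | h
    · rw [← h, hφa]
    rcases eq_or_lt_of_le ht.2 with h' | h'
    · rw [h', hφb]
    exact (hφpos t ⟨h, h'⟩).le
  set F : ℝ → ℝ := fun t => t + α * φ t with hF
  have hFdef : ∀ t, F t = t + α * φ t := fun t => rfl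
  -- `F` is strictly increasing because `α L < 1`.
  have hFlt : ∀ s ∈ Set.Icc a b, ∀ t ∈ Set.Icc a b, s < t → F s < F t := by
    intro s hs t ht hst
    have h := hφL s hs t ht
    rw [abs_sub_comm s, abs_of_pos (sub_pos.mpr hst)] at h
    have h1 := (abs_le.mp h).2
    have h2 : α * (φ s - φ t) ≤ α * (L * (t - s)) := mul_le_mul_of_nonneg_left h1 hα.le
    simp only [hFdef]
    nlinarith
  have hFinj : Set.InjOn F (Set.Icc a b) := by
    intro s hs t ht h
    rcases lt_trichotomy s t with h' | h' | h'
    · exact absurd h (hFlt s hs t ht h').ne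
    · exact h'
    · exact absurd h (hFlt t ht s hs h').ne'
  have hFa : F a = a := by simp [hFdef, hφa]
  have hFb : F b = b := by simp [hFdef, hφb]
  have hamem : a ∈ Set.Icc a b := ⟨le_rfl, hab.le⟩
  have hbmem : b ∈ Set.Icc a b := ⟨hab.le, le_rfl⟩
  have hFIoo : ∀ t ∈ Set.Ioo a b, F t ∈ Set.Ioo a b := by
    intro t ht
    have ht' := Set.Ioo_subset_Icc_self ht
    refine ⟨?_, ?_⟩
    · have := hFlt a hamem t ht' ht.1
      rwa [hFa] at this
    · have := hFlt t ht' b hbmem ht.2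
      rwa [hFb] at this
  have hFIcc : ∀ t ∈ Set.Icc a b, F t ∈ Set.Icc a b := by
    intro t ht
    have h := hΨmem 1 t ht
    have h1 := hΨsucc 0 t ht
    rw [zero_add, hΨ0 t ht] at h1
    rwa [h1] at h
  have hstep : ∀ (k : ℤ), ∀ t ∈ Set.Icc a b, Ψ (k + 1) t = F (Ψ k t) := hΨsucc
  have hshift : ∀ t ∈ Set.Icc a b, ∀ k : ℤ, Ψ k (F t) = Ψ (k + 1) t := by
    intro t ht k
    have hFt := hFIcc t ht
    induction k using Int.induction_on with
    | zero => rw [hΨ0 _ hFt, hstep 0 t ht, hΨ0 t ht]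
    | succ i ih => rw [hstep _ _ hFt, ih, ← hstep _ _ ht]
    | pred i ih =>
      apply hFinj (hΨmem _ _ hFt) (hΨmem _ _ ht)
      rw [← hstep _ _ hFt, ← hstep _ _ ht, sub_add_cancel, ih]
  have hΨle : ∀ (k : ℤ), ∀ t ∈ Set.Icc a b, Ψ k t ≤ Ψ (k + 1) t := by
    intro k t ht
    rw [hΨsucc k t ht]
    have := mul_nonneg hα.le (hφnn _ (hΨmem k t ht))
    linarith
  have hnext : ∀ n : ℕ, ∀ t ∈ Set.Icc a b,
      F (Ψ (-((n : ℤ) + 1)) t) = Ψ (-(n : ℤ)) t := by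
    intro n t ht
    rw [← hstep _ t ht]
    congr 1
    ring
  have hεab : a + ε ∈ Set.Ioo a b := ⟨by linarith, by linarith⟩
  have h2δ : 0 < 1 - 2 * δ := by linarith
  set P : ℝ := α * da * (1 - 2 * δ) with hP
  have hPpos : 0 < P := by positivity
  set R : ℝ := α * (-db) * (1 - 2 * δ) with hR
  have hRpos : 0 < R := mul_pos (mul_pos hα (neg_pos.mpr hdb0)) h2δ
  -- Expansion near `a`.
  have hexp : ∀ x ∈ Set.Icc a (a + ε), ∀ y ∈ Set.Icc a (a + ε),
      (1 + P) * |x - y| ≤ |F x - F y| := by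
    intro x hx y hy
    have hx' : x ∈ Set.Icc a b := ⟨hx.1, by linarith [hx.2, hεab.2]⟩
    have hy' : y ∈ Set.Icc a b := ⟨hy.1, by linarith [hy.2, hεab.2]⟩
    have hr := remainder_bound Em a x y δ ε KEm hKEm0 (hEmδ x hx)
      (abs_sub_le_of_lipschitzOnWith hKEm0 hEmLip hx' hy')
      (by rw [abs_of_nonneg (by linarith [hy.1])]; linarith [hy.2]) hKEmε
    set r := Em x * (x - a) - Em y * (y - a) with hrdef
    have e : F x - F y = (1 + α * da) * (x - y) - -(α * da * r) := by
      rw [hFdef, hFdef, hEmEq x hx', hEmEq y hy', hrdef]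
      ring
    have hαd : 0 < α * da := mul_pos hα hda0
    rw [e]
    have h1 := abs_sub_abs_le_abs_sub ((1 + α * da) * (x - y)) (-(α * da * r))
    rw [abs_neg, abs_mul, abs_mul (α * da), abs_of_pos hαd,
      abs_of_pos (show 0 < 1 + α * da by linarith)] at h1
    have h2 := mul_le_mul_of_nonneg_left hr hαd.le
    rw [hP]
    nlinarith
  -- Contraction near `b`; monotonicity of `F` makes the sign of `1 + α db` irrelevant.
  have hcon : ∀ x ∈ Set.Icc (b - ε) b, ∀ y ∈ Set.Icc (b - ε) b,
      |F x - F y| ≤ (1 - R) * |x - y| := by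
    have main : ∀ x ∈ Set.Icc (b - ε) b, ∀ y ∈ Set.Icc (b - ε) b, y < x →
        |F x - F y| ≤ (1 - R) * |x - y| := by
      intro x hx y hy hyx
      have hx' : x ∈ Set.Icc a b := ⟨by linarith [hx.1], hx.2⟩
      have hy' : y ∈ Set.Icc a b := ⟨by linarith [hy.1], hy.2⟩
      have hr := remainder_bound Ep b x y δ ε KEp hKEp0 (hEpδ x hx)
        (abs_sub_le_of_lipschitzOnWith hKEp0 hEpLip hx' hy')
        (by rw [abs_of_nonpos (by linarith [hy.2])]; linarith [hy.1]) hKEpε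
      set r := Ep x * (x - b) - Ep y * (y - b) with hrdef
      have e : F x - F y = (x - y) - α * (-db) * (x - y) - α * (-db) * r := by
        rw [hFdef, hFdef, hEpEq x hx', hEpEq y hy', hrdef]
        ring
      have hαd : 0 < α * (-db) := mul_pos hα (neg_pos.mpr hdb0)
      rw [abs_of_pos (sub_pos.mpr (hFlt y hy' x hx' hyx)), e]
      rw [abs_of_pos (sub_pos.mpr hyx)] at hr ⊢
      have h2 := mul_le_mul_of_nonneg_left (abs_le.mp hr).1 hαd.le
      rw [hR]
      nlinarith
    intro x hx y hy
    rcases lt_trichotomy x y with h | h | h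
    · rw [abs_sub_comm, abs_sub_comm x]
      exact main y hy x hx h
    · simp [h]
    · exact main x hx y hy h
  have hgrow : ∀ x ∈ Set.Icc a b, ∀ y ∈ Set.Icc a b,
      |F x - F y| ≤ (1 + α * L) * |x - y| := by
    intro x hx y hy
    have e : F x - F y = (x - y) + α * (φ x - φ y) := by rw [hFdef, hFdef]; ring
    rw [e]
    have h1 := abs_add_le (x - y) (α * (φ x - φ y))
    rw [abs_mul, abs_of_pos hα] at h1
    have h2 := mul_le_mul_of_nonneg_left (hφL x hx y hy) hα.le
    nlinarith
  have hback : ∀ s ∈ Set.Icc a (a + ε), ∀ t ∈ Set.Icc a (a + ε), ∀ M : ℕ,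
      ∑ n ∈ Finset.range M, |Ψ (-((n : ℤ) + 1)) s - Ψ (-((n : ℤ) + 1)) t| ≤ |s - t| / P := by
    have hsub : ∀ t ∈ Set.Icc a (a + ε), t ∈ Set.Icc a b :=
      fun t ht => ⟨ht.1, by linarith [ht.2, hεab.2]⟩
    have hin : ∀ t ∈ Set.Icc a (a + ε), ∀ n : ℕ, Ψ (-(n : ℤ)) t ∈ Set.Icc a (a + ε) := by
      intro t ht n
      refine ⟨(hΨmem _ t (hsub t ht)).1, ?_⟩
      induction n with
      | zero => simpa [hΨ0 t (hsub t ht)] using ht.2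
      | succ k ih =>
        have := hΨle (-((k : ℤ) + 1)) t (hsub t ht)
        rw [show -((k : ℤ) + 1) + 1 = -(k : ℤ) by ring] at this
        push_cast
        linarith
    intro s hs t ht M
    have h := sum_backward_le (fun n => |Ψ (-(n : ℤ)) s - Ψ (-(n : ℤ)) t|) P hPpos
      (fun n => abs_nonneg _) (fun n => by
        have h1 := hexp _ (hin s hs (n + 1)) _ (hin t ht (n + 1))
        push_cast at h1 ⊢
        rwa [hnext n s (hsub s hs), hnext n t (hsub t ht)] at h1) M
    simpa [hΨ0 s (hsub s hs), hΨ0 t (hsub t ht)] using h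
  set B : ℝ := ((1 + α * L) ^ N - 1) / (α * L) + (1 + α * L) ^ N / R with hB
  have hfwd : ∀ s ∈ Set.Icc (a + ε) b, ∀ t ∈ Set.Icc (a + ε) b, ∀ M : ℕ,
      ∑ n ∈ Finset.range M, |Ψ (n : ℤ) s - Ψ (n : ℤ) t| ≤ B * |s - t| := by
    have hsub : ∀ t ∈ Set.Icc (a + ε) b, t ∈ Set.Icc a b :=
      fun t ht => ⟨by linarith [ht.1], ht.2⟩
    have hin : ∀ t ∈ Set.Icc (a + ε) b, ∀ n : ℕ, N ≤ n →
        Ψ (n : ℤ) t ∈ Set.Icc (b - ε) b := by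
      intro t ht n hn
      refine ⟨?_, (hΨmem _ t (hsub t ht)).2⟩
      refine reach_right (fun n : ℕ => Ψ (n : ℤ) t) (a + ε) (b - ε) (α * m) N (mul_pos hα hm)
        (monotone_nat_of_le_succ fun n => ?_) ?_ ?_ ?_ n hn
      · have := hΨle n t (hsub t ht)
        push_cast
        exact this
      · simpa [hΨ0 t (hsub t ht)] using ht.1
      · intro k hk
        push_cast
        rw [hΨsucc k t (hsub t ht)]
        have := mul_le_mul_of_nonneg_left (hφm _ hk) hα.le
        linarith
      · rwa [show b - ε - (a + ε) = b - a - 2 * ε by ring]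
    intro s hs t ht M
    have h := sum_forward_le (fun n => |Ψ (n : ℤ) s - Ψ (n : ℤ) t|) R (α * L) N hRpos hα0
      (fun n => abs_nonneg _) (fun n => by
        have h1 := hgrow _ (hΨmem n s (hsub s hs)) _ (hΨmem n t (hsub t ht))
        push_cast
        rwa [hstep _ s (hsub s hs), hstep _ t (hsub t ht)]) (fun n hn => by
        have h1 := hcon _ (hin s hs n hn) _ (hin t ht n hn)
        push_cast
        rwa [hstep _ s (hsub s hs), hstep _ t (hsub t ht)]) M
    simpa [hΨ0 s (hsub s hs), hΨ0 t (hsub t ht)] using h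
  -- Both constants are dominated by the second entry of the maximum.
  set μ : ℝ := min da (-db) with hμ
  have hμpos : 0 < μ := lt_min hda0 (neg_pos.mpr hdb0)
  set V : ℝ := 2 * (1 + α * L) ^ N / (α * μ * (1 - 2 * δ)) with hV
  have hQ1 : 1 ≤ (1 + α * L) ^ N := one_le_pow₀ (by linarith)
  have hden : 0 < α * μ * (1 - 2 * δ) := by positivity
  have hVpos : 0 < V := by positivity
  have hPV : 1 / P ≤ V := by
    rw [hV, hP]
    have : μ ≤ da := min_le_left _ _
    gcongr
    linarith
  have hBV : B ≤ V := by
    -- The quotient `φ t / (t - a)` at `t = a + ε` shows `da (1 - δ) ≤ L`.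
    have hmem := Set.Ioo_subset_Icc_self hεab
    have h1 := hφL (a + ε) hmem a hamem
    rw [hφa, sub_zero, hEmEq _ hmem, add_sub_cancel_left, abs_of_pos hε0] at h1
    have h2 := le_of_mul_le_mul_right ((le_abs_self _).trans h1) hε0
    have h3 := (abs_le.mp (hEmδ (a + ε) ⟨by linarith, le_rfl⟩)).1
    have h4 : da * (1 - 2 * δ) ≤ L := by nlinarith
    have h5 : μ ≤ da := min_le_left _ _
    have h5' : μ ≤ -db := min_le_right _ _
    have h6 : α * μ * (1 - 2 * δ) ≤ α * L := by
      rw [mul_assoc]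
      have : μ * (1 - 2 * δ) ≤ da * (1 - 2 * δ) := by gcongr
      exact mul_le_mul_of_nonneg_left (by linarith) hα.le
    have h7 : α * μ * (1 - 2 * δ) ≤ R := by
      rw [hR]
      gcongr
    have h8 : ((1 + α * L) ^ N - 1) / (α * L) ≤ (1 + α * L) ^ N / (α * μ * (1 - 2 * δ)) := by
      gcongr
      linarith
    have h9 : (1 + α * L) ^ N / R ≤ (1 + α * L) ^ N / (α * μ * (1 - 2 * δ)) := by
      gcongr
    have e : V = (1 + α * L) ^ N / (α * μ * (1 - 2 * δ))
        + (1 + α * L) ^ N / (α * μ * (1 - 2 * δ)) := by rw [hV]; ring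
    rw [e, hB]
    exact add_le_add h8 h9
  have hwL : ∀ s ∈ Set.Icc a b, ∀ t ∈ Set.Icc a b, |w s - w t| ≤ Lw * |s - t| :=
    fun s hs t ht => abs_sub_le_of_lipschitzOnWith hLw0 hwLip hs ht
  obtain ⟨c, hc⟩ := hsum
  have hsneg : ∀ t ∈ Set.Ioo a b, Summable (fun n : ℕ => w (Ψ (-((n : ℤ) + 1)) t)) := by
    intro t ht
    refine (hc t ht).summable.comp_injective (i := fun n : ℕ => -((n : ℤ) + 1)) ?_
    intro i j h
    simp only at h
    omega
  have hspos : ∀ t ∈ Set.Ioo a b, Summable (fun n : ℕ => w (Ψ (n : ℤ) t)) :=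
    fun t ht => (hc t ht).summable.comp_injective (i := fun n : ℕ => (n : ℤ)) Nat.cast_injective
  set v : ℝ → ℝ := fun t => ∑' n : ℕ, w (Ψ (-((n : ℤ) + 1)) t) with hv
  have hvfwd : ∀ t ∈ Set.Ioo a b, v t = c - ∑' n : ℕ, w (Ψ (n : ℤ) t) := by
    intro t ht
    have h := HasSum.of_nat_of_neg_add_one (f := fun k : ℤ => w (Ψ k t))
      (hspos t ht).hasSum (hsneg t ht).hasSum
    have := h.unique (hc t ht)
    simp only [hv]
    linarith
  have hveq : ∀ t ∈ Set.Ioo a b, v (F t) - v t = w t := by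
    intro t ht
    have ht' := Set.Ioo_subset_Icc_self ht
    have h := (hsneg (F t) (hFIoo t ht)).tsum_eq_zero_add
    have e : ∀ n : ℕ, Ψ (-((n : ℤ) + 1)) (F t) = Ψ (-(n : ℤ)) t := by
      intro n
      rw [hshift t ht']
      congr 1
      ring
    simp only [e] at h
    simp only [hv, e]
    rw [h]
    push_cast
    rw [neg_zero, hΨ0 t ht']
    ring
  have hvL : ∀ s ∈ Set.Ioo a b, ∀ t ∈ Set.Ioo a b, |v s - v t| ≤ (V * Lw) * |s - t| := by
    refine glue_bound (Set.Ioo a b) (a + ε) hεab v (V * Lw) ?_ ?_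
    · intro s hs t ht hsε htε
      have h := abs_tsum_sub_tsum_le _ _ _ Lw _ hLw0 (hsneg s hs) (hsneg t ht)
        (fun n => hwL _ (hΨmem _ s (Set.Ioo_subset_Icc_self hs)) _
          (hΨmem _ t (Set.Ioo_subset_Icc_self ht)))
        (hback s ⟨hs.1.le, hsε⟩ t ⟨ht.1.le, htε⟩)
      calc |v s - v t| ≤ Lw * (|s - t| / P) := h
        _ = (1 / P) * (Lw * |s - t|) := by ring
        _ ≤ V * (Lw * |s - t|) := by gcongr
        _ = V * Lw * |s - t| := by ring
    · intro s hs t ht hsε htε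
      have h := abs_tsum_sub_tsum_le _ _ _ Lw _ hLw0 (hspos s hs) (hspos t ht)
        (fun n => hwL _ (hΨmem _ s (Set.Ioo_subset_Icc_self hs)) _
          (hΨmem _ t (Set.Ioo_subset_Icc_self ht)))
        (hfwd s ⟨hsε, hs.2.le⟩ t ⟨htε, ht.2.le⟩)
      rw [hvfwd s hs, hvfwd t ht, sub_sub_sub_cancel_left, abs_sub_comm]
      calc _ ≤ Lw * (B * |s - t|) := h
        _ = B * (Lw * |s - t|) := by ring
        _ ≤ V * (Lw * |s - t|) := by gcongr
        _ = V * Lw * |s - t| := by ring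
  set A : ℝ := (2 + 2 * ε + α * (N : ℝ) * (1 - δ) * μ) / (α * (1 - δ) * μ * (b - a - 2 * ε))
    with hA
  have hmax : V * Lw ≤ max A V * Lw := mul_le_mul_of_nonneg_right (le_max_right _ _) hLw0
  have hmax0 : 0 ≤ max A V * Lw := (mul_nonneg hVpos.le hLw0).trans hmax
  have hvLip : LipschitzOnWith (Real.toNNReal (max A V * Lw)) v (Set.Ioo a b) := by
    refine LipschitzOnWith.of_dist_le_mul (fun s hs t ht => ?_)
    rw [Real.dist_eq, Real.dist_eq, Real.coe_toNNReal _ hmax0]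
    exact (hvL s hs t ht).trans (mul_le_mul_of_nonneg_right hmax (abs_nonneg _))
  obtain ⟨g, hg, hgv⟩ := hvLip.extend_real
  refine ⟨g, hg.lipschitzOnWith, ?_, ?_⟩
  · -- At the fixed points `a` and `b` of `F` both sides vanish.
    intro t ht
    change g (F t) - g t = w t
    rcases eq_or_lt_of_le ht.1 with h | h
    · rw [← h, hFa, hwa, sub_self]
    rcases eq_or_lt_of_le ht.2 with h' | h'
    · rw [h', hFb, hwb, sub_self]
    rw [← hgv (hFIoo t ⟨h, h'⟩), ← hgv ⟨h, h'⟩]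
    exact hveq t ⟨h, h'⟩
  · rintro v₁ v₂ ⟨K₁, hK₁⟩ ⟨K₂, hK₂⟩ hv₁ hv₂
    set u : ℝ → ℝ := fun t => v₁ t - v₂ t with hu
    have huL : ∀ s ∈ Set.Icc a b, ∀ t ∈ Set.Icc a b,
        |u s - u t| ≤ ((K₁ : ℝ) + K₂) * |s - t| := by
      intro s hs t ht
      have h1 := hK₁.dist_le_mul s hs t ht
      have h2 := hK₂.dist_le_mul s hs t ht
      rw [Real.dist_eq, Real.dist_eq] at h1 h2
      have e : u s - u t = (v₁ s - v₁ t) - (v₂ s - v₂ t) := by simp only [hu]; ring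
      rw [e, add_mul]
      exact (abs_sub _ _).trans (add_le_add h1 h2)
    have huF : ∀ t ∈ Set.Icc a b, u (F t) = u t := by
      intro t ht
      have h1 := hv₁ t ht
      have h2 := hv₂ t ht
      simp only [hu, hFdef]
      linarith
    have huΨ : ∀ t ∈ Set.Icc a b, ∀ k : ℤ, u (Ψ k t) = u t := by
      intro t ht k
      induction k using Int.induction_on with
      | zero => rw [hΨ0 t ht]
      | succ i ih => rw [hstep _ t ht, huF _ (hΨmem _ t ht), ih]
      | pred i ih => rw [← huF _ (hΨmem _ t ht), ← hstep _ t ht, sub_add_cancel, ih]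
    have hconst : ∀ s ∈ Set.Icc a b, ∀ t ∈ Set.Icc a b, |u s - u t| ≤ 0 * |s - t| := by
      refine glue_bound (Set.Icc a b) (a + ε) (Set.Ioo_subset_Icc_self hεab) u 0 ?_ ?_
      · intro s hs t ht hsε htε
        have h := eq_of_invariant u (fun n : ℕ => Ψ (-((n : ℤ) + 1)) s)
          (fun n : ℕ => Ψ (-((n : ℤ) + 1)) t) _ _ _ _
          (fun n => huL _ (hΨmem _ s hs) _ (hΨmem _ t ht))
          (fun n => huΨ s hs _) (fun n => huΨ t ht _) (hback s ⟨hs.1, hsε⟩ t ⟨ht.1, htε⟩)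
        simp [h]
      · intro s hs t ht hsε htε
        have h := eq_of_invariant u (fun n : ℕ => Ψ (n : ℤ) s)
          (fun n : ℕ => Ψ (n : ℤ) t) _ _ _ _
          (fun n => huL _ (hΨmem _ s hs) _ (hΨmem _ t ht))
          (fun n => huΨ s hs _) (fun n => huΨ t ht _) (hfwd s ⟨hsε, hs.2⟩ t ⟨htε, ht.2⟩)
        simp [h]
    refine ⟨u a, fun t ht => ?_⟩
    have h := hconst t ht a hamem
    rw [zero_mul] at h
    have h' : u t = u a := sub_eq_zero.mp (abs_nonpos_iff.mp h)
    rw [← h']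
    simp only [hu]
    ring
end

section
/- U₋ and U₊ are fixed points of F, and there exist ε > 0 and η ∈ (0,1) such that: if |U − U₊| < ε then |F(U) − U₊| ≤ (1−η)·|U − U₊|; and if |U − U₋| < ε then |U − U₋| ≤ (1−η)·|F(U) − U₋|. -/
/-!
At a fixed point `p = (c, 0, 0, 0)` with `φ c = 0` the Fréchet derivative of `F` is the scalar
map `κ • id` with `κ = 1 + α φ' c`: every off-diagonal contribution carries a factor that vanishes
at `p` (`hasFDerivAt_fixedPoint`). The hypotheses on `α` give `0 < κ < 1` at `c = b` and
`1 < κ < 2` at `c = a`. Since `F U - p = κ (U - p) + o(‖U - p‖)`, the map contracts by a fixed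
factor near `(b, 0, 0, 0)` and expands by a fixed factor near `(a, 0, 0, 0)`.
-/

/-- The derivative of `F` at `(c, 0, 0, 0)` is multiplication by `1 + α φ' c`. Four derivatives
of `φ` are needed so that the coefficient `φ'''` in the last coordinate is differentiable. -/
lemma hasFDerivAt_fixedPoint (φ : ℝ → ℝ) (hφ : ContDiff ℝ 4 φ) (α c : ℝ)
    (F : EuclideanSpace ℝ (Fin 4) → EuclideanSpace ℝ (Fin 4))
    (hF : ∀ U : EuclideanSpace ℝ (Fin 4),
      F U 0 = U 0 + α * φ (U 0) ∧
      F U 1 = (1 + α * deriv φ (U 0)) * U 1 ∧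
      F U 2 = (1 + α * deriv φ (U 0)) * U 2 + α * deriv (deriv φ) (U 0) * (U 1) ^ 2 ∧
      F U 3 = (1 + α * deriv φ (U 0)) * U 3 + 3 * α * deriv (deriv φ) (U 0) * U 1 * U 2
        + α * deriv (deriv (deriv φ)) (U 0) * (U 1) ^ 3)
    (p : EuclideanSpace ℝ (Fin 4)) (hp : p 0 = c ∧ p 1 = 0 ∧ p 2 = 0 ∧ p 3 = 0) :
    HasFDerivAt F ((1 + α * deriv φ c) •
      ContinuousLinearMap.id ℝ (EuclideanSpace ℝ (Fin 4))) p := by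
  obtain ⟨h0, h1, h2, h3⟩ := hp
  have c1 : ContDiff ℝ 3 (deriv φ) := ((contDiff_succ_iff_deriv (n := 3)).1 hφ).2.2
  have c2 : ContDiff ℝ 2 (deriv (deriv φ)) := ((contDiff_succ_iff_deriv (n := 2)).1 c1).2.2
  have c3 : ContDiff ℝ 1 (deriv (deriv (deriv φ))) :=
    ((contDiff_succ_iff_deriv (n := 1)).1 c2).2.2
  have hx : ∀ i : Fin 4, HasFDerivAt (fun U : EuclideanSpace ℝ (Fin 4) => U i)
      (EuclideanSpace.proj i : EuclideanSpace ℝ (Fin 4) →L[ℝ] ℝ) p :=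
    fun i => (EuclideanSpace.proj i : EuclideanSpace ℝ (Fin 4) →L[ℝ] ℝ).hasFDerivAt
  have comp : ∀ g : ℝ → ℝ, Differentiable ℝ g →
      HasFDerivAt (fun U : EuclideanSpace ℝ (Fin 4) => α * g (U 0))
        (α • (deriv g c • (EuclideanSpace.proj 0 : EuclideanSpace ℝ (Fin 4) →L[ℝ] ℝ))) p := by
    intro g hg
    have h : HasDerivAt g (deriv g c) (p 0) := h0 ▸ (hg (p 0)).hasDerivAt
    exact (h.comp_hasFDerivAt p (hx 0)).const_mul α
  have d0 := comp φ (hφ.differentiable (by norm_num))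
  have d1 := comp _ (c1.differentiable (by norm_num))
  have d2 := comp _ (c2.differentiable (by norm_num))
  have d3 := comp _ (c3.differentiable (by norm_num))
  rw [← hasFDerivWithinAt_univ, hasFDerivWithinAt_euclidean]
  intro i
  rw [hasFDerivWithinAt_univ]
  fin_cases i
  · refine (((hx 0).add d0).congr_fderiv ?_).congr_of_eventuallyEq
      (.of_forall fun U => (hF U).1)
    ext v
    simp
    ring
  · refine (((d1.const_add 1).mul (hx 1)).congr_fderiv ?_).congr_of_eventuallyEq
      (.of_forall fun U => (hF U).2.1)
    ext v
    simp [h0, h1]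
  · refine ((((d1.const_add 1).mul (hx 2)).add (d2.mul ((hx 1).pow 2))).congr_fderiv
      ?_).congr_of_eventuallyEq (.of_forall fun U => (hF U).2.2.1)
    ext v
    simp [h0, h1, h2]
  · refine (((((d1.const_add 1).mul (hx 3)).add
      (((d2.const_mul 3).mul (hx 1)).mul (hx 2))).add (d3.mul ((hx 1).pow 3))).congr_fderiv
      ?_).congr_of_eventuallyEq (.of_forall fun U => ?_)
    · ext v
      simp [h0, h1, h2, h3]
    · refine (hF U).2.2.2.trans ?_
      simp only [Pi.add_apply, Pi.mul_apply]
      ring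

lemma fixedPoint_eq (φ : ℝ → ℝ) (α c : ℝ) (hc : φ c = 0)
    (F : EuclideanSpace ℝ (Fin 4) → EuclideanSpace ℝ (Fin 4))
    (hF : ∀ U : EuclideanSpace ℝ (Fin 4),
      F U 0 = U 0 + α * φ (U 0) ∧
      F U 1 = (1 + α * deriv φ (U 0)) * U 1 ∧
      F U 2 = (1 + α * deriv φ (U 0)) * U 2 + α * deriv (deriv φ) (U 0) * (U 1) ^ 2 ∧
      F U 3 = (1 + α * deriv φ (U 0)) * U 3 + 3 * α * deriv (deriv φ) (U 0) * U 1 * U 2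
        + α * deriv (deriv (deriv φ)) (U 0) * (U 1) ^ 3)
    (p : EuclideanSpace ℝ (Fin 4)) (hp : p 0 = c ∧ p 1 = 0 ∧ p 2 = 0 ∧ p 3 = 0) :
    F p = p := by
  obtain ⟨h0, h1, h2, h3⟩ := hp
  obtain ⟨e0, e1, e2, e3⟩ := hF p
  ext i
  fin_cases i
  · simpa [h0, hc] using e0
  · simpa [h1] using e1
  · simpa [h1, h2] using e2
  · simpa [h1, h2, h3] using e3

/-- A map whose derivative at a fixed point is `κ • id` is `κ • id` near that point up to an
arbitrarily small relative error. -/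
lemma exists_ball_norm_sub_smul_le {E : Type*} [NormedAddCommGroup E] [NormedSpace ℝ E]
    {F : E → E} {p : E} {κ δ : ℝ} (hfix : F p = p)
    (h : HasFDerivAt F (κ • ContinuousLinearMap.id ℝ E) p) (hδ : 0 < δ) :
    ∃ ε > 0, ∀ U, ‖U - p‖ < ε → ‖(F U - p) - κ • (U - p)‖ ≤ δ * ‖U - p‖ := by
  obtain ⟨ε, hε, H⟩ := Metric.eventually_nhds_iff.1 (h.isLittleO.def hδ)
  refine ⟨ε, hε, fun U hU => ?_⟩
  have := H (show dist U p < ε by rwa [dist_eq_norm])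
  simpa [hfix] using this


theorem stmt_17
    (a b : ℝ) (hab : a < b)
    (φ : ℝ → ℝ) (hφreg : ContDiff ℝ 4 φ)
    (hbdd : BddAbove (Set.range fun t : ℝ => |deriv φ t|))
    (hφa : φ a = 0) (hφb : φ b = 0)
    (hφpos : ∀ t ∈ Set.Ioo a b, 0 < φ t)
    (hda : 0 < deriv φ a) (hdb : deriv φ b < 0)
    (α : ℝ) (hα0 : 0 < α * ⨆ t : ℝ, |deriv φ t|)
    (hα1 : α * (⨆ t : ℝ, |deriv φ t|) < 1)
    (F : EuclideanSpace ℝ (Fin 4) → EuclideanSpace ℝ (Fin 4))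
    (hF : ∀ U : EuclideanSpace ℝ (Fin 4),
      F U 0 = U 0 + α * φ (U 0) ∧
      F U 1 = (1 + α * deriv φ (U 0)) * U 1 ∧
      F U 2 = (1 + α * deriv φ (U 0)) * U 2 + α * deriv (deriv φ) (U 0) * (U 1) ^ 2 ∧
      F U 3 = (1 + α * deriv φ (U 0)) * U 3 + 3 * α * deriv (deriv φ) (U 0) * U 1 * U 2
        + α * deriv (deriv (deriv φ)) (U 0) * (U 1) ^ 3)
    (Um Up : EuclideanSpace ℝ (Fin 4))
    (hUm : Um 0 = a ∧ Um 1 = 0 ∧ Um 2 = 0 ∧ Um 3 = 0)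
    (hUp : Up 0 = b ∧ Up 1 = 0 ∧ Up 2 = 0 ∧ Up 3 = 0)
    :
    F Um = Um ∧ F Up = Up ∧
    ∃ ε : ℝ, 0 < ε ∧ ∃ η : ℝ, 0 < η ∧ η < 1 ∧
      (∀ U : EuclideanSpace ℝ (Fin 4), ‖U - Up‖ < ε → ‖F U - Up‖ ≤ (1 - η) * ‖U - Up‖) ∧
      (∀ U : EuclideanSpace ℝ (Fin 4), ‖U - Um‖ < ε → ‖U - Um‖ ≤ (1 - η) * ‖F U - Um‖) := by
  have hle : ∀ t, |deriv φ t| ≤ ⨆ t : ℝ, |deriv φ t| := fun t => le_ciSup hbdd t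
  have hα : 0 < α := pos_of_mul_pos_left hα0 ((abs_nonneg _).trans (hle a))
  have hFm := fixedPoint_eq φ α a hφa F hF Um hUm
  have hFp := fixedPoint_eq φ α b hφb F hF Up hUp
  have hDm := hasFDerivAt_fixedPoint φ hφreg α a F hF Um hUm
  have hDp := hasFDerivAt_fixedPoint φ hφreg α b F hF Up hUp
  have hm0 : 0 < α * deriv φ a := mul_pos hα hda
  have hn0 : α * deriv φ b < 0 := mul_neg_of_pos_of_neg hα hdb
  have hm1 : α * deriv φ a < 1 :=
    (mul_le_mul_of_nonneg_left ((le_abs_self _).trans (hle a)) hα.le).trans_lt hα1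
  have hn1 : -(α * deriv φ b) < 1 := by
    rw [← mul_neg]
    exact (mul_le_mul_of_nonneg_left ((neg_le_abs _).trans (hle b)) hα.le).trans_lt hα1
  refine ⟨hFm, hFp, ?_⟩
  generalize α * deriv φ a = m at *
  generalize α * deriv φ b = n at *
  obtain ⟨ε₁, hε₁, H₁⟩ := exists_ball_norm_sub_smul_le hFm hDm (half_pos hm0)
  obtain ⟨ε₂, hε₂, H₂⟩ := exists_ball_norm_sub_smul_le hFp hDp (half_pos (neg_pos.2 hn0))
  -- The contraction factor is at most `1 + n / 2`, the expansion factor at least `1 + m / 2`,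
  -- and `(1 - m / 4) * (1 + m / 2) ≥ 1` because `0 < m < 1`.
  have hη₁ : min (m / 4) (-n / 2) ≤ m / 4 := min_le_left _ _
  have hη₂ : min (m / 4) (-n / 2) ≤ -n / 2 := min_le_right _ _
  have hη₀ : 0 < min (m / 4) (-n / 2) := lt_min (by linarith) (by linarith)
  generalize min (m / 4) (-n / 2) = η at *
  refine ⟨min ε₁ ε₂, lt_min hε₁ hε₂, η, hη₀, by linarith, fun U hU => ?_, fun U hU => ?_⟩
  · have h := H₂ U (hU.trans_le (min_le_right _ _))
    have ht := norm_sub_norm_le (F U - Up) ((1 + n) • (U - Up))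
    rw [norm_smul, Real.norm_of_nonneg (by linarith : 0 ≤ 1 + n)] at ht
    calc ‖F U - Up‖ ≤ (1 + n / 2) * ‖U - Up‖ := by linarith
      _ ≤ (1 - η) * ‖U - Up‖ := by gcongr; linarith
  · have h := H₁ U (hU.trans_le (min_le_left _ _))
    have ht := norm_sub_norm_le ((1 + m) • (U - Um)) (F U - Um)
    rw [norm_smul, Real.norm_of_nonneg (by linarith : 0 ≤ 1 + m), norm_sub_rev ((1 + m) • (U - Um))] at ht
    have hexp : (1 + m / 2) * ‖U - Um‖ ≤ ‖F U - Um‖ := by linarith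
    have hone : 1 ≤ (1 - η) * (1 + m / 2) := by nlinarith
    calc ‖U - Um‖ ≤ ((1 - η) * (1 + m / 2)) * ‖U - Um‖ :=
          le_mul_of_one_le_left (norm_nonneg _) hone
      _ = (1 - η) * ((1 + m / 2) * ‖U - Um‖) := by ring
      _ ≤ (1 - η) * ‖F U - Um‖ := mul_le_mul_of_nonneg_left hexp (by linarith)
end

section
/- There exists ε > 0 (which may be taken so that |F(U) − U₊| ≤ (1−η)·|U − U₊| whenever |U − U₊| < ε, for some η ∈ (0,1)) with the following property: for every compact set K ⊂ ℝ⁴ there is a positive integer N such that for every U₀ = (t₀,s₀,r₀,q₀) ∈ K with t₀ ∈ [a+ε, b−ε], the forward iterates U_k := F^k(U₀) satisfy |U_k − U₊| < ε for all integers k ≥ N. -/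
/-!
The map `F` fixes `U₊`, and its derivative there is the scalar `1 + α φ'(b) ∈ (0, 1)` times the
identity: every off-diagonal term carries a factor `s` or `r`, and products of two coordinates
vanish to second order (`hasFDerivAt_scalar`). Hence `F` contracts a small ball
about `U₊` (`exists_contraction`), which is therefore forward invariant.

If `a < t₀ < b`, then `t_k` increases strictly inside `(a, b)`, because `t ↦ t + α φ t` is strictly
increasing and fixes `b`; its limit is a zero of `φ` in `(a, b]`, so it is `b`
(`tendsto_scalar_orbit`). The remaining coordinates then satisfy, one after the other, a recursion
`x (k + 1) = c k * x k + e k` with `c k → 1 + α φ'(b)` and `e k → 0`, and so tend to `0`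
(`tendsto_zero_of_linear_recursion`). Every orbit thus enters the ball. By continuity of `F` the
sets `{U | F^[n] U ∈ ball}` are open, and they increase with `n` by invariance, so a single `n`
serves for the compact set of admissible initial points.
-/

open Filter Topology

/-- A perturbed linear recursion whose multipliers converge to a number of absolute value less
than `1` and whose forcing tends to zero has solutions tending to zero. -/
lemma tendsto_zero_of_linear_recursion {x c e : ℕ → ℝ} {l : ℝ} (hl : |l| < 1)
    (hx : ∀ k, x (k + 1) = c k * x k + e k) (hc : Tendsto c atTop (𝓝 l))
    (he : Tendsto e atTop (𝓝 0)) : Tendsto x atTop (𝓝 0) := by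
  obtain ⟨ρ, hlρ, hρ1⟩ := exists_between hl
  have hρ0 : 0 ≤ ρ := (abs_nonneg l).trans hlρ.le
  rw [Metric.tendsto_atTop]
  intro δ hδ
  have h1 : ∀ᶠ k in atTop, |c k| < ρ := hc.abs.eventually_lt_const hlρ
  have h2 : ∀ᶠ k in atTop, |e k| < δ / 2 * (1 - ρ) := by
    have := he.abs
    rw [abs_zero] at this
    exact this.eventually_lt_const (mul_pos (half_pos hδ) (by linarith))
  obtain ⟨n, hn⟩ := eventually_atTop.1 (h1.and h2)
  -- The constant `δ / 2` is the fixed point of `y ↦ ρ y + (δ / 2) (1 - ρ)`.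
  have key : ∀ k, |x (n + k)| ≤ δ / 2 + ρ ^ k * |x n| := by
    intro k
    induction k with
    | zero => simp; positivity
    | succ k ih =>
      obtain ⟨hck, hek⟩ := hn (n + k) (Nat.le_add_right _ _)
      calc |x (n + (k + 1))| = |c (n + k) * x (n + k) + e (n + k)| := by rw [← add_assoc, hx]
        _ ≤ |c (n + k)| * |x (n + k)| + |e (n + k)| := by
          rw [← abs_mul]; exact abs_add_le _ _
        _ ≤ ρ * (δ / 2 + ρ ^ k * |x n|) + δ / 2 * (1 - ρ) := by gcongr
        _ = δ / 2 + ρ ^ (k + 1) * |x n| := by ring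
  have h3 : Tendsto (fun k => ρ ^ k * |x n|) atTop (𝓝 0) := by
    simpa using (tendsto_pow_atTop_nhds_zero_of_lt_one hρ0 hρ1).mul_const |x n|
  obtain ⟨m, hm⟩ := eventually_atTop.1 (h3.eventually_lt_const (half_pos hδ))
  refine ⟨n + m, fun k hk => ?_⟩
  obtain ⟨j, rfl⟩ := Nat.exists_eq_add_of_le hk
  rw [Real.dist_eq, sub_zero, add_assoc]
  have h4 := key (m + j)
  have h5 := hm (m + j) (Nat.le_add_right _ _)
  linarith

/-- An orbit of the scalar map `t ↦ t + α φ t` starting in `(a, b)` converges to the right-hand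
zero `b` of `φ`. -/
lemma tendsto_scalar_orbit {a b α : ℝ} {φ : ℝ → ℝ} (hφ : Continuous φ) (hα : 0 < α)
    (hφb : φ b = 0) (hφpos : ∀ t ∈ Set.Ioo a b, 0 < φ t)
    (hmono : StrictMono fun t => t + α * φ t) {t : ℕ → ℝ} (ht0 : t 0 ∈ Set.Ioo a b)
    (ht : ∀ k, t (k + 1) = t k + α * φ (t k)) : Tendsto t atTop (𝓝 b) := by
  have hmem : ∀ k, t k ∈ Set.Ioo a b := by
    intro k
    induction k with
    | zero => exact ht0
    | succ k ih =>
      have h1 := mul_pos hα (hφpos _ ih)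
      have h2 := hmono ih.2
      simp only [hφb, mul_zero, add_zero] at h2
      rw [ht]
      exact ⟨by linarith [ih.1], h2⟩
  have hm : Monotone t := monotone_nat_of_le_succ fun k => by
    have h1 := mul_pos hα (hφpos _ (hmem k))
    rw [ht]
    linarith
  obtain ⟨L, hL⟩ : ∃ L, Tendsto t atTop (𝓝 L) :=
    ⟨_, tendsto_atTop_ciSup hm ⟨b, by rintro _ ⟨k, rfl⟩; exact (hmem k).2.le⟩⟩
  have hLa : a < L := ht0.1.trans_le (hm.ge_of_tendsto hL 0)
  have hLb : L ≤ b := le_of_tendsto' hL fun k => (hmem k).2.le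
  have hfix : L = L + α * φ L := by
    refine tendsto_nhds_unique (hL.comp (tendsto_add_atTop_nat 1)) ?_
    have : Tendsto (fun k => t k + α * φ (t k)) atTop (𝓝 (L + α * φ L)) :=
      hL.add (((hφ.tendsto L).comp hL).const_mul α)
    exact this.congr fun k => (ht k).symm
  rcases hLb.eq_or_lt with h | h
  · exact h ▸ hL
  · have := mul_pos hα (hφpos L ⟨hLa, h⟩)
    linarith

/-- A map whose linearization at a fixed point is multiplication by a scalar in `[0, 1)` contracts
a neighbourhood of the fixed point. -/
lemma exists_contraction {E : Type*} [NormedAddCommGroup E] [NormedSpace ℝ E] {F : E → E} {p : E}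
    {l : ℝ} (hl0 : 0 ≤ l) (hl1 : l < 1) (hp : F p = p)
    (h : HasFDerivAt F (l • ContinuousLinearMap.id ℝ E) p) :
    ∃ ε : ℝ, 0 < ε ∧ ∃ η : ℝ, 0 < η ∧ η < 1 ∧
      ∀ U, ‖U - p‖ < ε → ‖F U - p‖ ≤ (1 - η) * ‖U - p‖ := by
  have h1 := h.isLittleO.def (c := (1 - l) / 2) (by linarith)
  obtain ⟨ε, hε, hball⟩ := Metric.eventually_nhds_iff.1 h1
  refine ⟨ε, hε, (1 - l) / 2, by linarith, by linarith, fun U hU => ?_⟩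
  have h2 := hball (by rwa [dist_eq_norm])
  rw [hp] at h2
  simp only [smul_apply, ContinuousLinearMap.id_apply] at h2
  calc ‖F U - p‖ = ‖(F U - p - l • (U - p)) + l • (U - p)‖ := by rw [sub_add_cancel]
    _ ≤ (1 - l) / 2 * ‖U - p‖ + l * ‖U - p‖ := by
      refine (norm_add_le _ _).trans (add_le_add h2 ?_)
      rw [norm_smul, Real.norm_of_nonneg hl0]
    _ = (1 - (1 - l) / 2) * ‖U - p‖ := by ring

/-- `F` is the map `t ↦ t + α φ t` acting on the third-order jet `(t, s, r, q)` of a curve. The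
functions `φ₁, φ₂, φ₃` stand for the first three derivatives of `φ`; that they are its derivatives
is not part of the definition. -/
def IsJetMap (α : ℝ) (φ φ₁ φ₂ φ₃ : ℝ → ℝ)
    (F : EuclideanSpace ℝ (Fin 4) → EuclideanSpace ℝ (Fin 4)) : Prop :=
  ∀ U : EuclideanSpace ℝ (Fin 4),
    F U 0 = U 0 + α * φ (U 0) ∧
    F U 1 = (1 + α * φ₁ (U 0)) * U 1 ∧
    F U 2 = (1 + α * φ₁ (U 0)) * U 2 + α * φ₂ (U 0) * (U 1) ^ 2 ∧
    F U 3 = (1 + α * φ₁ (U 0)) * U 3 + 3 * α * φ₂ (U 0) * U 1 * U 2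
      + α * φ₃ (U 0) * (U 1) ^ 3

lemma IsJetMap.continuous {α : ℝ} {φ φ₁ φ₂ φ₃ : ℝ → ℝ}
    {F : EuclideanSpace ℝ (Fin 4) → EuclideanSpace ℝ (Fin 4)} (hF : IsJetMap α φ φ₁ φ₂ φ₃ F)
    (h0 : Continuous φ) (h1 : Continuous φ₁) (h2 : Continuous φ₂) (h3 : Continuous φ₃) :
    Continuous F := by
  have h : Continuous fun U i => F U i := by
    refine continuous_pi fun i => ?_
    fin_cases i
    · exact Continuous.congr (by fun_prop) fun U => (hF U).1.symm
    · exact Continuous.congr (by fun_prop) fun U => (hF U).2.1.symm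
    · exact Continuous.congr (by fun_prop) fun U => (hF U).2.2.1.symm
    · exact Continuous.congr (by fun_prop) fun U => (hF U).2.2.2.symm
  exact (PiLp.continuous_toLp 2 _).comp h

/-- At a point `(b, 0, 0, 0)` the linearization of `F` is scalar. -/
lemma IsJetMap.hasFDerivAt_scalar {α b : ℝ} {φ φ₁ φ₂ φ₃ : ℝ → ℝ}
    {F : EuclideanSpace ℝ (Fin 4) → EuclideanSpace ℝ (Fin 4)} (hF : IsJetMap α φ φ₁ φ₂ φ₃ F)
    (h0 : HasDerivAt φ (φ₁ b) b) (h1 : DifferentiableAt ℝ φ₁ b) (h2 : DifferentiableAt ℝ φ₂ b)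
    (h3 : DifferentiableAt ℝ φ₃ b) {p : EuclideanSpace ℝ (Fin 4)}
    (hp : p 0 = b ∧ p 1 = 0 ∧ p 2 = 0 ∧ p 3 = 0) :
    HasFDerivAt F ((1 + α * φ₁ b) • ContinuousLinearMap.id ℝ (EuclideanSpace ℝ (Fin 4))) p := by
  obtain ⟨hp0, hp1, hp2, hp3⟩ := hp
  have hc (i : Fin 4) : HasFDerivAt (fun U : EuclideanSpace ℝ (Fin 4) => U i)
      (EuclideanSpace.proj i : EuclideanSpace ℝ (Fin 4) →L[ℝ] ℝ) p :=
    (EuclideanSpace.proj i : EuclideanSpace ℝ (Fin 4) →L[ℝ] ℝ).hasFDerivAt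
  rw [← hp0] at h0 h1 h2 h3 ⊢
  have g0 := h0.comp_hasFDerivAt p (hc 0)
  have g1 := h1.hasDerivAt.comp_hasFDerivAt p (hc 0)
  have g2 := h2.hasDerivAt.comp_hasFDerivAt p (hc 0)
  have g3 := h3.hasDerivAt.comp_hasFDerivAt p (hc 0)
  have k1 := (g1.const_mul α).const_add 1
  rw [← hasFDerivWithinAt_univ, hasFDerivWithinAt_euclidean]
  intro i
  rw [hasFDerivWithinAt_univ]
  fin_cases i
  · refine (((hc 0).add (g0.const_mul α)).congr_of_eventuallyEq
      (.of_forall fun U => (hF U).1)).congr_fderiv ?_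
    ext v; simp; ring
  · refine ((k1.mul (hc 1)).congr_of_eventuallyEq
      (.of_forall fun U => (hF U).2.1)).congr_fderiv ?_
    ext v; simp [hp1]
  · refine (((k1.mul (hc 2)).add ((g2.const_mul α).mul ((hc 1).pow 2))).congr_of_eventuallyEq
      (.of_forall fun U => (hF U).2.2.1)).congr_fderiv ?_
    ext v; simp [hp1, hp2]
  · refine ((((k1.mul (hc 3)).add (((g2.const_mul (3 * α)).mul (hc 1)).mul (hc 2))).add
      ((g3.const_mul α).mul ((hc 1).pow 3))).congr_of_eventuallyEq
      (.of_forall fun U => (hF U).2.2.2)).congr_fderiv ?_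
    ext v; simp [hp1, hp2, hp3]

/-- Once the first coordinate of an orbit converges to `b`, the whole orbit converges to
`(b, 0, 0, 0)`. -/
lemma IsJetMap.tendsto_orbit {α b : ℝ} {φ φ₁ φ₂ φ₃ : ℝ → ℝ}
    {F : EuclideanSpace ℝ (Fin 4) → EuclideanSpace ℝ (Fin 4)} (hF : IsJetMap α φ φ₁ φ₂ φ₃ F)
    (h1 : Continuous φ₁) (h2 : Continuous φ₂) (h3 : Continuous φ₃) (hl : |1 + α * φ₁ b| < 1)
    {p : EuclideanSpace ℝ (Fin 4)} (hp : p 0 = b ∧ p 1 = 0 ∧ p 2 = 0 ∧ p 3 = 0)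
    (U : EuclideanSpace ℝ (Fin 4)) (ht : Tendsto (fun k => F^[k] U 0) atTop (𝓝 b)) :
    Tendsto (fun k => F^[k] U) atTop (𝓝 p) := by
  obtain ⟨hp0, hp1, hp2, hp3⟩ := hp
  have hc : Tendsto (fun k => 1 + α * φ₁ (F^[k] U 0)) atTop (𝓝 (1 + α * φ₁ b)) :=
    (((h1.tendsto b).comp ht).const_mul α).const_add 1
  have t2 := (h2.tendsto b).comp ht
  have t3 := (h3.tendsto b).comp ht
  have hs : Tendsto (fun k => F^[k] U 1) atTop (𝓝 0) :=
    tendsto_zero_of_linear_recursion (e := fun _ => 0) hl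
      (fun k => by rw [Function.iterate_succ_apply', (hF _).2.1, add_zero]) hc tendsto_const_nhds
  have hr : Tendsto (fun k => F^[k] U 2) atTop (𝓝 0) :=
    tendsto_zero_of_linear_recursion hl
      (fun k => by rw [Function.iterate_succ_apply', (hF _).2.2.1]) hc
      (by simpa using (t2.const_mul α).mul (hs.pow 2))
  have hq : Tendsto (fun k => F^[k] U 3) atTop (𝓝 0) :=
    tendsto_zero_of_linear_recursion hl
      (fun k => by rw [Function.iterate_succ_apply', (hF _).2.2.2, add_assoc]) hc
      (by simpa using (((t2.const_mul (3 * α)).mul hs).mul hr).add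
            ((t3.const_mul α).mul (hs.pow 3)))
  have h : Tendsto (fun k i => F^[k] U i) atTop (𝓝 fun i => p i) := by
    refine tendsto_pi_nhds.2 fun i => ?_
    fin_cases i
    · exact hp0.symm ▸ ht
    · exact hp1.symm ▸ hs
    · exact hp2.symm ▸ hr
    · exact hp3.symm ▸ hq
  exact ((PiLp.continuous_toLp 2 _).tendsto _).comp h


theorem stmt_18
    (a b : ℝ) (hab : a < b)
    (φ : ℝ → ℝ) (hφreg : ContDiff ℝ 4 φ)
    (hbdd : BddAbove (Set.range fun t : ℝ => |deriv φ t|))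
    (hφa : φ a = 0) (hφb : φ b = 0)
    (hφpos : ∀ t ∈ Set.Ioo a b, 0 < φ t)
    (hda : 0 < deriv φ a) (hdb : deriv φ b < 0)
    (α : ℝ) (hα0 : 0 < α * ⨆ t : ℝ, |deriv φ t|)
    (hα1 : α * (⨆ t : ℝ, |deriv φ t|) < 1)
    (F : EuclideanSpace ℝ (Fin 4) → EuclideanSpace ℝ (Fin 4))
    (hF : ∀ U : EuclideanSpace ℝ (Fin 4),
      F U 0 = U 0 + α * φ (U 0) ∧
      F U 1 = (1 + α * deriv φ (U 0)) * U 1 ∧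
      F U 2 = (1 + α * deriv φ (U 0)) * U 2 + α * deriv (deriv φ) (U 0) * (U 1) ^ 2 ∧
      F U 3 = (1 + α * deriv φ (U 0)) * U 3 + 3 * α * deriv (deriv φ) (U 0) * U 1 * U 2
        + α * deriv (deriv (deriv φ)) (U 0) * (U 1) ^ 3)
    (Um Up : EuclideanSpace ℝ (Fin 4))
    (hUm : Um 0 = a ∧ Um 1 = 0 ∧ Um 2 = 0 ∧ Um 3 = 0)
    (hUp : Up 0 = b ∧ Up 1 = 0 ∧ Up 2 = 0 ∧ Up 3 = 0)
    :
    ∃ ε : ℝ, 0 < ε ∧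
      (∃ η : ℝ, 0 < η ∧ η < 1 ∧
        ∀ U : EuclideanSpace ℝ (Fin 4), ‖U - Up‖ < ε → ‖F U - Up‖ ≤ (1 - η) * ‖U - Up‖) ∧
      ∀ K : Set (EuclideanSpace ℝ (Fin 4)), IsCompact K →
        ∃ N : ℕ, 0 < N ∧
          ∀ U₀ ∈ K, U₀ 0 ∈ Set.Icc (a + ε) (b - ε) →
            ∀ k : ℕ, N ≤ k → ‖F^[k] U₀ - Up‖ < ε := by
  have hsup (t : ℝ) : |deriv φ t| ≤ ⨆ t : ℝ, |deriv φ t| := le_ciSup hbdd t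
  have hα : 0 < α := pos_of_mul_pos_left hα0 ((abs_nonneg _).trans (hsup 0))
  have hlpos (t : ℝ) : 0 < 1 + α * deriv φ t := by
    have h1 := mul_le_mul_of_nonneg_left (hsup t) hα.le
    have h2 := mul_le_mul_of_nonneg_left (neg_abs_le (deriv φ t)) hα.le
    linarith
  have hl1 : 1 + α * deriv φ b < 1 := by linarith [mul_neg_of_pos_of_neg hα hdb]
  have hr1 : ContDiff ℝ 3 (deriv φ) := ContDiff.deriv' (n := 3) hφreg
  have hr2 : ContDiff ℝ 2 (deriv (deriv φ)) := ContDiff.deriv' (n := 2) hr1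
  have hr3 : ContDiff ℝ 1 (deriv (deriv (deriv φ))) := ContDiff.deriv' (n := 1) hr2
  have hd0 : Differentiable ℝ φ := hφreg.differentiable (by norm_num)
  have hJ : IsJetMap α φ (deriv φ) (deriv (deriv φ)) (deriv (deriv (deriv φ))) F := hF
  have hmono : StrictMono fun t => t + α * φ t := by
    refine strictMono_of_deriv_pos fun t => ?_
    have h : HasDerivAt (fun t => t + α * φ t) (1 + α * deriv φ t) t :=
      (hasDerivAt_id' t).add ((hd0 t).hasDerivAt.const_mul α)
    rw [h.deriv]
    exact hlpos t
  have hcont : Continuous F :=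
    hJ.continuous hφreg.continuous hr1.continuous hr2.continuous hr3.continuous
  have hfix : F Up = Up := by
    obtain ⟨e0, e1, e2, e3⟩ := hF Up
    obtain ⟨p0, p1, p2, p3⟩ := hUp
    ext i
    fin_cases i
    · simp [e0, p0, hφb]
    · simp [e1, p1]
    · simp [e2, p1, p2]
    · simp [e3, p1, p2, p3]
  obtain ⟨ε, hε, η, hη0, hη1, hcontr⟩ := exists_contraction (hlpos b).le hl1 hfix
    (hJ.hasFDerivAt_scalar (hd0 b).hasDerivAt
      (hr1.differentiable (by norm_num) b) (hr2.differentiable (by norm_num) b)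
      (hr3.differentiable (by norm_num) b) hUp)
  refine ⟨ε, hε, ⟨η, hη0, hη1, hcontr⟩, fun K hK => ?_⟩
  have hinv (U : EuclideanSpace ℝ (Fin 4)) (hU : ‖U - Up‖ < ε) : ‖F U - Up‖ < ε :=
    ((hcontr U hU).trans (mul_le_of_le_one_left (norm_nonneg _) (by linarith))).trans_lt hU
  -- The points whose orbit lies in the ball at time `n`, hence at all later times.
  let V : ℕ → Set (EuclideanSpace ℝ (Fin 4)) := fun n => {U | ‖F^[n] U - Up‖ < ε}
  have hVopen (n : ℕ) : IsOpen (V n) :=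
    isOpen_lt ((hcont.iterate n).sub continuous_const).norm continuous_const
  have hVmono : Monotone V := monotone_nat_of_le_succ fun n U hU => by
    change ‖F^[n + 1] U - Up‖ < ε
    rw [Function.iterate_succ_apply']
    exact hinv _ hU
  have hS : IsCompact (K ∩ {U | U 0 ∈ Set.Icc (a + ε) (b - ε)}) :=
    hK.inter_right (isClosed_Icc.preimage (by fun_prop :
      Continuous fun U : EuclideanSpace ℝ (Fin 4) => U 0))
  obtain ⟨n, hn⟩ := hS.elim_directed_cover V hVopen (by
    rintro U ⟨-, hU⟩
    have ht : Tendsto (fun k => F^[k] U 0) atTop (𝓝 b) :=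
      tendsto_scalar_orbit hφreg.continuous hα hφb hφpos hmono
        ⟨by simpa using (by linarith [hU.1] : a < U 0),
          by simpa using (by linarith [hU.2] : U 0 < b)⟩
        fun k => by rw [Function.iterate_succ_apply', (hF _).1]
    have hlim := hJ.tendsto_orbit hr1.continuous hr2.continuous hr3.continuous
      (abs_lt.2 ⟨by linarith [hlpos b], hl1⟩) hUp U ht
    obtain ⟨n, hn⟩ := (Metric.tendsto_nhds.1 hlim ε hε).exists
    exact Set.mem_iUnion.2 ⟨n, by rwa [dist_eq_norm] at hn⟩) hVmono.directed_le
  exact ⟨n + 1, n.succ_pos, fun U hUK hU k hk => hVmono (by omega : n ≤ k) (hn ⟨hUK, hU⟩)⟩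
end

section
/- There exist α₀ > 0 and K > 0 such that for every α ∈ (0, α₀] the following holds: if w ∈ C^p([a,b]) satisfies w(a) = w(b) = 0 and the doubly infinite series Σ_{k=−∞}^{∞} w(Φ_α^k t) converges for each t ∈ (a,b) to a value independent of t, then there exists v ∈ C^p([a,b]) with v(Φ_α(t)) − v(t) = w(t) for all t ∈ [a,b] and ‖v‖_{C^p} ≤ (K/α)·‖w‖_{C^p}. -/
/-!
Near `b` the map `Φ(t) = t + α φ(t)` contracts towards the fixed point `b`, and near `a` its inverse
contracts towards `a`. A solution of `v ∘ Φ - v = w` is therefore `-∑_{k ≥ 0} w ∘ Φ^k` near `b` and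
`∑_{k > 0} w ∘ Φ^{-k} - c` near `a`; that the two-sided sum is constantly `c` says precisely that
the two formulas agree in the interior, so they glue to a `C^p` function (`exists_solution`).

What remains is to bound the derivatives of the half-orbit sums by `O(1/α)`, uniformly in `α`. One
step satisfies `(v ∘ Φ)^{(j)} = (Φ')^j · v^{(j)} ∘ Φ + O(α)` with an error involving only derivatives
of `v` of orders `1, …, j - 1` (`pullback_estimate`). On `[m₁, b]` the multiplier `Φ'` need not be
below `1`, but `-φ' + B φ` is bounded below there by a positive constant for large `B`
(`exists_weight`), since `φ` vanishes only at `b`, where `φ' < 0`. Weighting the `j`-th derivative by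
`e^{j B t}` then replaces the multiplier by at most `1 - 2βα`. Induction on `j` shows that the
derivatives of positive order of `w ∘ Φ^k` are `O((1 - βα)^k)` (`decay_of_pullback`), the function
itself is controlled by its first derivative because `w b = 0`, and summing the geometric series
costs `1 / (βα)` (`one_sided_sum`). The same argument applies to `Φ⁻¹` on `[a, m₂]`.
-/

/-- The `C^p` norm on `[a,b]`: `sup_t Σ_{j=0}^p |f^{(j)}(t)|`, with derivatives taken
within `[a,b]` (one-sided at the endpoints). -/
noncomputable def cpNorm (p : ℕ) (a b : ℝ) (f : ℝ → ℝ) : ℝ :=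
  ⨆ t : Set.Icc a b, ∑ j ∈ Finset.range (p + 1),
    |iteratedDerivWithin j f (Set.Icc a b) (t : ℝ)|

open Set Filter Topology

/-! ### Series of `C^p` functions on a closed interval -/

/-- Term-by-term differentiation on a closed interval, with one-sided derivatives at the
endpoints. The terms are extended to the whole line as primitives of the constant extensions of
`f' k`, which reduces the claim to `hasDerivAt_tsum`. -/
lemma hasDerivWithinAt_tsum_Icc {c d : ℝ} (hcd : c < d) (f f' : ℕ → ℝ → ℝ) (u : ℕ → ℝ)
    (hu : Summable u)
    (hf : ∀ k, ∀ t ∈ Icc c d, HasDerivWithinAt (f k) (f' k t) (Icc c d) t)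
    (hc : ∀ k, ContinuousOn (f' k) (Icc c d))
    (hb : ∀ k, ∀ t ∈ Icc c d, |f' k t| ≤ u k)
    (hs : Summable fun k => f k c) :
    ∀ t ∈ Icc c d, HasDerivWithinAt (fun t => ∑' k, f k t) (∑' k, f' k t) (Icc c d) t := by
  let g' : ℕ → ℝ → ℝ := fun k => IccExtend hcd.le ((Icc c d).domRestrict (f' k))
  have g'cont : ∀ k, Continuous (g' k) := fun k =>
    (continuousOn_iff_continuous_domRestrict.1 (hc k)).Icc_extend'
  have g'eq : ∀ k, ∀ t ∈ Icc c d, g' k t = f' k t := fun k t ht =>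
    IccExtend_of_mem hcd.le _ ht
  let g : ℕ → ℝ → ℝ := fun k t => f k c + ∫ x in c..t, g' k x
  have gder : ∀ k t, HasDerivAt (g k) (g' k t) t := fun k t =>
    ((g'cont k).integral_hasStrictDerivAt c t).hasDerivAt.const_add _
  have geq : ∀ k, ∀ t ∈ Icc c d, g k t = f k t := by
    intro k t ht
    have hsub : Icc c t ⊆ Icc c d := Icc_subset_Icc_right ht.2
    have := intervalIntegral.integral_eq_sub_of_hasDerivAt_of_le ht.1
      (f := f k) (f' := g' k) (fun x hx => ((hf k x (hsub hx)).continuousWithinAt).mono hsub)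
      (fun x hx => by
        have hx' : x ∈ Icc c d := hsub (Ioo_subset_Icc_self hx)
        rw [g'eq k x hx']
        exact (hf k x hx').hasDerivAt (Icc_mem_nhds hx.1 (hx.2.trans_le ht.2)))
      ((g'cont k).intervalIntegrable _ _)
    simp only [g]
    linarith
  have g'b : ∀ k t, ‖g' k t‖ ≤ u k := fun k t => hb k _ (projIcc c d hcd.le t).2
  intro t ht
  have key := hasDerivAt_tsum hu gder g'b (y₀ := c) (by simpa [g] using hs) t
  have e : ∑' k, f' k t = ∑' k, g' k t := tsum_congr fun k => (g'eq k t ht).symm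
  rw [e]
  exact key.hasDerivWithinAt.congr (fun x hx => tsum_congr fun k => (geq k x hx).symm)
    (tsum_congr fun k => (geq k t ht).symm)

/-- A chain `V 0, …, V p` in which each function is the derivative of the preceding one, with
`V p` continuous, makes `V 0` of class `C^p` with derivatives `V j`. -/
lemma contDiffOn_of_jet {s : Set ℝ} (hs : UniqueDiffOn ℝ s) (p : ℕ) (V : ℕ → ℝ → ℝ)
    (hV : ∀ j < p, ∀ t ∈ s, HasDerivWithinAt (V j) (V (j + 1) t) s t)
    (hc : ContinuousOn (V p) s) :
    ContDiffOn ℝ p (V 0) s ∧ ∀ j ≤ p, EqOn (iteratedDerivWithin j (V 0) s) (V j) s := by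
  have H : ∀ j ≤ p, EqOn (iteratedDerivWithin j (V 0) s) (V j) s := by
    intro j
    induction j with
    | zero => intro _ t _; simp
    | succ j ih =>
      intro hj t ht
      rw [iteratedDerivWithin_succ, derivWithin_congr (ih (by omega)) (ih (by omega) ht)]
      exact (hV j (by omega) t ht).derivWithin (hs t ht)
  refine ⟨(contDiffOn_nat_iff_continuousOn_differentiableOn_deriv hs).2 ⟨?_, ?_⟩, H⟩
  · intro m hm
    refine ContinuousOn.congr ?_ (H m hm)
    rcases hm.lt_or_eq with h | rfl
    · exact fun t ht => (hV m h t ht).continuousWithinAt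
    · exact hc
  · intro m hm t ht
    exact (hV m hm t ht).differentiableWithinAt.congr (H m hm.le) (H m hm.le ht)

lemma jet_of_contDiffOn {s : Set ℝ} (hs : UniqueDiffOn ℝ s) {p : ℕ} {g : ℝ → ℝ}
    (hg : ContDiffOn ℝ p g s) {j : ℕ} (hj : j < p) {t : ℝ} (ht : t ∈ s) :
    HasDerivWithinAt (iteratedDerivWithin j g s) (iteratedDerivWithin (j + 1) g s t) s t := by
  rw [iteratedDerivWithin_succ]
  exact (hg.differentiableOn_iteratedDerivWithin (by exact_mod_cast hj) hs t ht).hasDerivWithinAt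

/-- A series of `C^p` functions whose derivatives up to order `p` have a common summable
majorant is `C^p`. The terms are differentiated within the larger set `s`, the sum within
`Icc c d`. -/
lemma contDiffOn_tsum_Icc {c d : ℝ} (hcd : c < d) {s : Set ℝ} (hs : UniqueDiffOn ℝ s)
    (hI : Icc c d ⊆ s) (p : ℕ) (z : ℕ → ℝ → ℝ) (u : ℕ → ℝ) (hu : Summable u)
    (hz : ∀ k, ContDiffOn ℝ p (z k) s)
    (hb : ∀ j ≤ p, ∀ k, ∀ t ∈ Icc c d, |iteratedDerivWithin j (z k) s t| ≤ u k) :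
    ContDiffOn ℝ p (fun t => ∑' k, z k t) (Icc c d) ∧
    ∀ j ≤ p, ∀ t ∈ Icc c d,
      |iteratedDerivWithin j (fun t => ∑' k, z k t) (Icc c d) t| ≤ ∑' k, u k := by
  have := contDiffOn_of_jet (uniqueDiffOn_Icc hcd) p
    (fun j t => ∑' k, iteratedDerivWithin j (z k) s t) (by
      intro j hj
      apply hasDerivWithinAt_tsum_Icc hcd _ _ u hu
      · intro k t ht
        exact (jet_of_contDiffOn hs (hz k) hj (hI ht)).mono hI
      · intro k
        exact ((hz k).continuousOn_iteratedDerivWithin (by exact_mod_cast hj) hs).mono hI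
      · intro k t ht
        exact hb (j + 1) hj k t ht
      · exact Summable.of_norm_bounded hu fun k => hb j hj.le k c (left_mem_Icc.2 hcd.le))
    (continuousOn_tsum
      (fun k => ((hz k).continuousOn_iteratedDerivWithin le_rfl hs).mono hI) hu
      (fun k t ht => hb p le_rfl k t ht))
  simp only [iteratedDerivWithin_zero] at this
  refine ⟨this.1, fun j hj t ht => ?_⟩
  rw [this.2 j hj ht]
  exact tsum_of_norm_bounded (f := fun k => iteratedDerivWithin j (z k) s t) hu.hasSum
    fun k => hb j hj k t ht

lemma exists_bound_iteratedDerivWithin {a b : ℝ} (hab : a < b) {p : ℕ} {f : ℝ → ℝ}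
    (hf : ContDiffOn ℝ p f (Icc a b)) :
    ∃ A : ℝ, 0 ≤ A ∧ ∀ j ≤ p, ∀ t ∈ Icc a b, |iteratedDerivWithin j f (Icc a b) t| ≤ A := by
  have h : ∀ j ∈ Finset.range (p + 1), ContinuousOn (iteratedDerivWithin j f (Icc a b)) (Icc a b) :=
    fun j hj => hf.continuousOn_iteratedDerivWithin
      (by exact_mod_cast Finset.mem_range_succ_iff.1 hj) (uniqueDiffOn_Icc hab)
  obtain ⟨A, hA⟩ := isCompact_Icc.exists_bound_of_continuousOn
    (continuousOn_finsetSum (Finset.range (p + 1)) fun j hj => (h j hj).abs)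
  have ha := hA a (left_mem_Icc.2 hab.le)
  refine ⟨A, (norm_nonneg _).trans ha, fun j hj t ht => ?_⟩
  refine le_trans ?_ ((le_abs_self _).trans (hA t ht))
  exact Finset.single_le_sum (f := fun j => |iteratedDerivWithin j f (Icc a b) t|)
    (fun _ _ => abs_nonneg _) (Finset.mem_range_succ_iff.2 hj)

/-! ### One-step pullback estimate -/

/-- Uniform one-step estimate for the pullback by `Φ(t) = t + α φ(t)`: up to order `p`,
`(v ∘ Φ)^{(j)} = (Φ')^j · v^{(j)} ∘ Φ + O(α)`, where the error is `α M` times the derivatives of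
`v` at `Φ t` of orders `1, …, j - 1` only; `M` depends neither on `α` nor on `v`. -/
def PullbackBound (p : ℕ) (a b M : ℝ) (φ : ℝ → ℝ) : Prop :=
  ∀ j ≤ p, ∀ α : ℝ, 0 ≤ α → α ≤ 1 →
    MapsTo (fun t => t + α * φ t) (Icc a b) (Icc a b) →
    ∀ v : ℝ → ℝ, ContDiffOn ℝ j v (Icc a b) → ∀ t ∈ Icc a b,
      |iteratedDerivWithin j (fun x => v (x + α * φ x)) (Icc a b) t
        - (1 + α * derivWithin φ (Icc a b) t) ^ j
          * iteratedDerivWithin j v (Icc a b) (t + α * φ t)|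
      ≤ α * M * ∑ i ∈ Finset.Ico 1 j, |iteratedDerivWithin i v (Icc a b) (t + α * φ t)|

/-- The estimate holds for every `φ` of class `C^{p+1}`. The induction differentiates
`(v ∘ Φ)' = (1 + α φ') · (v' ∘ Φ)` by the Leibniz rule: each term in which a derivative falls on
`1 + α φ'` carries a factor `α`, and the remaining term is the inductive hypothesis for `v'`. -/
lemma pullback_estimate {a b : ℝ} (hab : a < b) {p : ℕ} {φ : ℝ → ℝ}
    (hφ : ContDiffOn ℝ (p + 1 : ℕ) φ (Icc a b)) (n : ℕ) (hn : n ≤ p) :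
    ∃ M : ℝ, 0 ≤ M ∧ PullbackBound n a b M φ := by
  obtain ⟨A, hA0, hA⟩ := exists_bound_iteratedDerivWithin hab hφ
  have hs := uniqueDiffOn_Icc hab
  induction n with
  | zero =>
    refine ⟨0, le_rfl, fun j hj α _ _ _ v _ t _ => ?_⟩
    obtain rfl : j = 0 := by omega
    simp
  | succ n ih =>
    obtain ⟨M, hM0, hM⟩ := ih (by omega)
    set R : ℝ := (1 + A) * M
      + (∑ i ∈ Finset.range n, (n.choose (i + 1) : ℝ)) * (A * ((1 + A) ^ n + M)) with hR
    have hR0 : 0 ≤ R := by positivity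
    refine ⟨M + R, by positivity, fun j hj α hα0 hα1 hmaps v hv t ht => ?_⟩
    rcases Nat.lt_or_ge j (n + 1) with hlt | hge
    · refine (hM j (by omega) α hα0 hα1 hmaps v hv t ht).trans ?_
      gcongr
      linarith
    obtain rfl : j = n + 1 := by omega
    set s := Icc a b with hsdef
    have hΦt : t + α * φ t ∈ s := hmaps ht
    set dv := derivWithin v s with hdv
    set dφ := derivWithin φ s with hdφ
    have hv' : DifferentiableOn ℝ v s := hv.differentiableOn (by simp)
    have hφ' : DifferentiableOn ℝ φ s := hφ.differentiableOn (by simp)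
    have hdvc : ContDiffOn ℝ n dv s :=
      ((contDiffOn_succ_iff_derivWithin hs).1 (by exact_mod_cast hv)).2.2
    have hdφc : ContDiffOn ℝ p dφ s :=
      ((contDiffOn_succ_iff_derivWithin hs).1 (by exact_mod_cast hφ)).2.2
    have hdφn : ContDiffOn ℝ n dφ s := hdφc.of_le (by exact_mod_cast (by omega : n ≤ p))
    have hφn : ContDiffOn ℝ n φ s := hφ.of_le (by exact_mod_cast (by omega : n ≤ p + 1))
    have hΦn : ContDiffOn ℝ n (fun x => x + α * φ x) s :=
      contDiffOn_id.add (contDiffOn_const.mul hφn)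
    have hcomp : ContDiffOn ℝ n (fun x => dv (x + α * φ x)) s := hdvc.comp hΦn hmaps
    have hfac : ContDiffOn ℝ n (fun x => 1 + α * dφ x) s :=
      contDiffOn_const.add (contDiffOn_const.mul hdφn)
    have hder : EqOn (derivWithin (fun x => v (x + α * φ x)) s)
        ((fun x => 1 + α * dφ x) * (fun x => dv (x + α * φ x))) s := by
      intro x hx
      have h1 : HasDerivWithinAt (fun x => x + α * φ x) (1 + α * dφ x) s x :=
        (hasDerivWithinAt_id x s).add ((hφ' x hx).hasDerivWithinAt.const_mul α)
      have h2 : HasDerivWithinAt v (dv (x + α * φ x)) s (x + α * φ x) :=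
        (hv' _ (hmaps hx)).hasDerivWithinAt
      have := (h2.comp x h1 hmaps).derivWithin (hs x hx)
      simp only [Pi.mul_apply]
      rw [mul_comm]
      exact this
    have hfac0 : ∀ i, iteratedDerivWithin (i + 1) (fun x => 1 + α * dφ x) s t
        = α * iteratedDerivWithin (i + 2) φ s t := by
      intro i
      rw [iteratedDerivWithin_const_add (by omega) 1, iteratedDerivWithin_const_mul_field,
        iteratedDerivWithin_succ' (n := i + 1)]
    have hexp : iteratedDerivWithin (n + 1) (fun x => v (x + α * φ x)) s t
        = ∑ i ∈ Finset.range n, (n.choose (i + 1) : ℝ) * (α * iteratedDerivWithin (i + 2) φ s t)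
            * iteratedDerivWithin (n - (i + 1)) (fun x => dv (x + α * φ x)) s t
          + (1 + α * dφ t) * iteratedDerivWithin n (fun x => dv (x + α * φ x)) s t := by
      rw [iteratedDerivWithin_succ', iteratedDerivWithin_congr hder ht,
        iteratedDerivWithin_mul ht hs (hfac t ht) (hcomp t ht), Finset.sum_range_succ']
      simp [hfac0]
    set T := ∑ i ∈ Finset.Ico 1 (n + 1), |iteratedDerivWithin i v s (t + α * φ t)| with hT
    have hT0 : 0 ≤ T := Finset.sum_nonneg fun _ _ => abs_nonneg _
    have hshift : ∀ l ≤ n,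
        ∑ i ∈ Finset.Ico 1 l, |iteratedDerivWithin i dv s (t + α * φ t)| ≤ T := by
      intro l hl
      have : ∑ i ∈ Finset.Ico 1 l, |iteratedDerivWithin i dv s (t + α * φ t)|
          = ∑ i ∈ Finset.Ico (1 + 1) (l + 1), |iteratedDerivWithin i v s (t + α * φ t)| := by
        rw [← Finset.sum_Ico_add']
        simp only [iteratedDerivWithin_succ', hdv]
      rw [this]
      refine Finset.sum_le_sum_of_subset_of_nonneg ?_ fun _ _ _ => abs_nonneg _
      intro i
      simp only [Finset.mem_Ico]
      omega
    have hdφA : |dφ t| ≤ A := by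
      have := hA 1 (by omega) t ht
      rwa [iteratedDerivWithin_one] at this
    have hfacA : |1 + α * dφ t| ≤ 1 + A := by
      refine (abs_add_le _ _).trans ?_
      rw [abs_one, abs_mul, abs_of_nonneg hα0]
      have : α * |dφ t| ≤ 1 * A := by gcongr
      linarith
    have hlow : ∀ l < n, |iteratedDerivWithin l (fun x => dv (x + α * φ x)) s t|
        ≤ ((1 + A) ^ n + M) * T := by
      intro l hl
      have h1 := hM l hl.le α hα0 hα1 hmaps dv (hdvc.of_le (by exact_mod_cast hl.le)) t ht
      have h2 : |iteratedDerivWithin l dv s (t + α * φ t)| ≤ T := by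
        rw [hdv, ← iteratedDerivWithin_succ']
        exact Finset.single_le_sum (f := fun i => |iteratedDerivWithin i v s (t + α * φ t)|)
          (fun _ _ => abs_nonneg _) (Finset.mem_Ico.2 (by omega))
      have h3 : |(1 + α * dφ t) ^ l * iteratedDerivWithin l dv s (t + α * φ t)|
          ≤ (1 + A) ^ n * T := by
        rw [abs_mul, abs_pow]
        have : |1 + α * dφ t| ^ l ≤ (1 + A) ^ n :=
          (pow_le_pow_left₀ (abs_nonneg _) hfacA l).trans
            (pow_le_pow_right₀ (by linarith) hl.le)
        gcongr
      have h4 : α * M * ∑ i ∈ Finset.Ico 1 l, |iteratedDerivWithin i dv s (t + α * φ t)|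
          ≤ 1 * M * T := by
        gcongr
        exact hshift l hl.le
      have h5 := abs_sub_abs_le_abs_sub (iteratedDerivWithin l (fun x => dv (x + α * φ x)) s t)
        ((1 + α * dφ t) ^ l * iteratedDerivWithin l dv s (t + α * φ t))
      linarith
    have htop := hM n le_rfl α hα0 hα1 hmaps dv hdvc t ht
    have hsum : |∑ i ∈ Finset.range n,
          (n.choose (i + 1) : ℝ) * (α * iteratedDerivWithin (i + 2) φ s t)
            * iteratedDerivWithin (n - (i + 1)) (fun x => dv (x + α * φ x)) s t|
        ≤ α * ((∑ i ∈ Finset.range n, (n.choose (i + 1) : ℝ)) * (A * ((1 + A) ^ n + M))) * T := by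
      refine (Finset.abs_sum_le_sum_abs _ _).trans ?_
      rw [show α * ((∑ i ∈ Finset.range n, (n.choose (i + 1) : ℝ)) * (A * ((1 + A) ^ n + M))) * T
        = (∑ i ∈ Finset.range n, (n.choose (i + 1) : ℝ)) * (α * (A * ((1 + A) ^ n + M)) * T) by
          ring, Finset.sum_mul]
      refine Finset.sum_le_sum fun i hi => ?_
      have hi' := Finset.mem_range.1 hi
      rw [abs_mul, abs_mul, abs_mul, abs_of_nonneg hα0, Nat.abs_cast]
      have e1 := hA (i + 2) (by omega) t ht
      have e2 := hlow (n - (i + 1)) (by omega)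
      calc _ ≤ (n.choose (i + 1) : ℝ) * (α * A) * (((1 + A) ^ n + M) * T) := by gcongr
        _ = _ := by ring
    rw [hexp, iteratedDerivWithin_succ' (f := v)]
    have hmul : |(1 + α * dφ t) * (iteratedDerivWithin n (fun x => dv (x + α * φ x)) s t
        - (1 + α * dφ t) ^ n * iteratedDerivWithin n dv s (t + α * φ t))|
        ≤ α * ((1 + A) * M) * T := by
      rw [abs_mul]
      calc _ ≤ (1 + A) * (α * M * T) := by
            refine mul_le_mul hfacA (htop.trans ?_) (abs_nonneg _) (by linarith)
            gcongr
            exact hshift n le_rfl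
        _ = _ := by ring
    calc _ = |∑ i ∈ Finset.range n,
          (n.choose (i + 1) : ℝ) * (α * iteratedDerivWithin (i + 2) φ s t)
            * iteratedDerivWithin (n - (i + 1)) (fun x => dv (x + α * φ x)) s t
          + (1 + α * dφ t) * (iteratedDerivWithin n (fun x => dv (x + α * φ x)) s t
        - (1 + α * dφ t) ^ n * iteratedDerivWithin n dv s (t + α * φ t))| := by
          congr 1; ring
      _ ≤ α * R * T := by
          refine (abs_add_le _ _).trans ?_
          rw [hR]
          linarith
      _ ≤ α * (M + R) * T := by
          gcongr
          linarith

/-! ### Geometric decay of derivatives along iterates -/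

lemma contDiffOn_comp_iterate {p : ℕ} {s : Set ℝ} {θ w : ℝ → ℝ} (hθs : MapsTo θ s s)
    (hθ : ContDiffOn ℝ p θ s) (hw : ContDiffOn ℝ p w s) (k : ℕ) :
    ContDiffOn ℝ p (w ∘ θ^[k]) s := by
  induction k with
  | zero => exact hw
  | succ k ihk =>
    rw [Function.iterate_succ, ← Function.comp_assoc]
    exact ihk.comp hθ hθs

/-- Contraction of derivatives under pullback by `θ` along `I`, in a form satisfied both by a
diffeomorphism and by its inverse. The factor `r < 1` is seen after weighting the `j`-th derivative
by `e^{j B t}`; the error, of size `L`, involves strictly lower derivatives of positive order of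
`g` at `θ t` and of `g ∘ θ` at `t`. -/
def PullbackDecay (p : ℕ) (a b r L B : ℝ) (θ : ℝ → ℝ) (I : Set ℝ) : Prop :=
  ∀ j, 1 ≤ j → j ≤ p → ∀ g : ℝ → ℝ, ContDiffOn ℝ p g (Icc a b) → ∀ t ∈ I,
    |iteratedDerivWithin j (g ∘ θ) (Icc a b) t|
      ≤ r * Real.exp (j * B * (θ t - t)) * |iteratedDerivWithin j g (Icc a b) (θ t)|
        + L * ∑ i ∈ Finset.Ico 1 j, (|iteratedDerivWithin i g (Icc a b) (θ t)|
          + |iteratedDerivWithin i (g ∘ θ) (Icc a b) t|)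

/-- If every step contracts by `1 - 2βα` up to an error `α M`, all derivatives of `w ∘ θ^k` of
positive order decay like `(1 - βα)^k`, with a constant independent of `α`. Induction on the order:
the loss from `2β` to `β` absorbs the lower-order terms, which are `O(α)` and decay at the same
rate. -/
lemma decay_of_pullback {a b : ℝ} {p : ℕ} {M β B : ℝ} (hM : 0 ≤ M) (hβ : 0 < β) (n : ℕ)
    (hn : n ≤ p) :
    ∃ C : ℝ, 0 ≤ C ∧ ∀ (α : ℝ) (θ w : ℝ → ℝ) (I : Set ℝ) (N : ℝ), 0 < α → 2 * β * α ≤ 1 →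
      I ⊆ Icc a b → MapsTo θ I I → MapsTo θ (Icc a b) (Icc a b) →
      ContDiffOn ℝ p θ (Icc a b) → ContDiffOn ℝ p w (Icc a b) →
      PullbackDecay p a b (1 - 2 * β * α) (α * M) B θ I →
      0 ≤ N → (∀ j ≤ p, ∀ t ∈ I, |iteratedDerivWithin j w (Icc a b) t| ≤ N) →
      ∀ j, 1 ≤ j → j ≤ n → ∀ k : ℕ, ∀ t ∈ I,
        |iteratedDerivWithin j (w ∘ θ^[k]) (Icc a b) t| ≤ C * N * (1 - β * α) ^ k := by
  induction n with
  | zero => exact ⟨0, le_rfl, fun _ _ _ _ _ _ _ _ _ _ _ _ _ _ _ j h1 h2 => by omega⟩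
  | succ n ih =>
    obtain ⟨C, hC0, hC⟩ := ih (by omega)
    -- `Q` bounds the exponent of the weight `e^{(n+1) B t}` on `[a, b]`, and `A` is chosen so that the
    -- lower-order error `2 n M C α` is at most `βα` times the weighted bound.
    set Q : ℝ := (n + 1) * |B| * (|a| + |b|) with hQ
    have hQ0 : 0 ≤ Q := by positivity
    set A : ℝ := Real.exp Q * (1 + 2 * n * M * C / β) with hA
    have hA0 : 0 ≤ A := by positivity
    refine ⟨C + A * Real.exp Q, by positivity, ?_⟩
    intro α θ w I N hα h2 hI hθI hθs hθ hw H hN hwN j hj1 hj k t ht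
    have hβα : 0 < β * α := by positivity
    have hρ0 : 0 ≤ 1 - β * α := by nlinarith
    have hr0 : 0 ≤ 1 - 2 * β * α := by linarith
    rcases Nat.lt_or_ge j (n + 1) with hlt | hge
    · refine (hC α θ w I N hα h2 hI hθI hθs hθ hw H hN hwN j hj1 (by omega) k t ht).trans ?_
      have : 0 ≤ A * Real.exp Q := by positivity
      gcongr
      linarith
    obtain rfl : j = n + 1 := by omega
    have hw_k := contDiffOn_comp_iterate hθs hθ hw
    have hbd : ∀ t ∈ I, |((n + 1 : ℕ) : ℝ) * B * t| ≤ Q := by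
      intro t ht
      have h1 := hI ht
      rw [abs_mul, abs_mul, Nat.abs_cast, hQ]
      push_cast
      gcongr
      rw [abs_le]
      constructor
      · linarith [neg_abs_le a, abs_nonneg b, h1.1]
      · linarith [le_abs_self b, abs_nonneg a, h1.2]
    have hexp : ∀ t ∈ I, Real.exp (-Q) ≤ Real.exp (-((n + 1 : ℕ) * B * t)) ∧
        Real.exp (-((n + 1 : ℕ) * B * t)) ≤ Real.exp Q := by
      intro t ht
      have := abs_le.1 (hbd t ht)
      exact ⟨Real.exp_le_exp.2 (by linarith), Real.exp_le_exp.2 (by linarith)⟩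
    have hQQ : Real.exp Q * Real.exp (-Q) = 1 := by rw [← Real.exp_add]; simp
    -- The weighted bound, which gains exactly one factor `1 - βα` at each step.
    have key : ∀ k : ℕ, ∀ t ∈ I, |iteratedDerivWithin (n + 1) (w ∘ θ^[k]) (Icc a b) t|
        ≤ A * N * (1 - β * α) ^ k * Real.exp (-((n + 1 : ℕ) * B * t)) := by
      intro k
      induction k with
      | zero =>
        intro t ht
        have h1 := hwN (n + 1) hn t ht
        have h3 : 1 ≤ A * Real.exp (-((n + 1 : ℕ) * B * t)) := by
          calc (1 : ℝ) ≤ (Real.exp Q * Real.exp (-Q)) * (1 + 2 * n * M * C / β) := by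
                rw [hQQ, one_mul]
                have : 0 ≤ 2 * n * M * C / β := by positivity
                linarith
            _ = A * Real.exp (-Q) := by rw [hA]; ring
            _ ≤ _ := mul_le_mul_of_nonneg_left (hexp t ht).1 hA0
        simp only [Function.iterate_zero, Function.comp_id, pow_zero, mul_one]
        nlinarith
      | succ k ihk =>
        intro t ht
        have h1 := H (n + 1) (by omega) hn (w ∘ θ^[k]) (hw_k k) t ht
        have hcomp : (w ∘ θ^[k]) ∘ θ = w ∘ θ^[k + 1] := by
          rw [Function.comp_assoc, ← Function.iterate_succ]
        rw [hcomp] at h1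
        refine h1.trans ?_
        have h3 := ihk (θ t) (hθI ht)
        have hlow : ∑ i ∈ Finset.Ico 1 (n + 1),
            (|iteratedDerivWithin i (w ∘ θ^[k]) (Icc a b) (θ t)|
              + |iteratedDerivWithin i (w ∘ θ^[k + 1]) (Icc a b) t|)
            ≤ n * (2 * (C * N * (1 - β * α) ^ k)) := by
          have : ∀ i ∈ Finset.Ico 1 (n + 1),
            (|iteratedDerivWithin i (w ∘ θ^[k]) (Icc a b) (θ t)|
              + |iteratedDerivWithin i (w ∘ θ^[k + 1]) (Icc a b) t|)
              ≤ 2 * (C * N * (1 - β * α) ^ k) := by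
            intro i hi
            rw [Finset.mem_Ico] at hi
            have e1 := hC α θ w I N hα h2 hI hθI hθs hθ hw H hN hwN i hi.1 (by omega) k (θ t)
              (hθI ht)
            have e2 := hC α θ w I N hα h2 hI hθI hθs hθ hw H hN hwN i hi.1 (by omega) (k + 1) t ht
            have e3 : C * N * (1 - β * α) ^ (k + 1) ≤ C * N * (1 - β * α) ^ k := by
              have : (1 - β * α) ^ (k + 1) ≤ (1 - β * α) ^ k :=
                pow_le_pow_of_le_one hρ0 (by linarith) (by omega)
              gcongr
            linarith
          refine (Finset.sum_le_card_nsmul _ _ _ this).trans ?_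
          simp
        have hE : Real.exp ((n + 1 : ℕ) * B * (θ t - t)) * Real.exp (-((n + 1 : ℕ) * B * θ t))
            = Real.exp (-((n + 1 : ℕ) * B * t)) := by
          rw [← Real.exp_add]; congr 1; ring
        set ρ := 1 - β * α with hρ
        set W := Real.exp (-((n + 1 : ℕ) * B * t)) with hW
        have hAW : 2 * n * M * C ≤ β * (A * W) := by
          calc 2 * n * M * C ≤ β * (1 + 2 * n * M * C / β) := by
                rw [mul_add, mul_div_cancel₀ _ hβ.ne']; linarith
            _ = β * ((Real.exp Q * Real.exp (-Q)) * (1 + 2 * n * M * C / β)) := by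
                rw [hQQ, one_mul]
            _ = β * (A * Real.exp (-Q)) := by rw [hA]; ring
            _ ≤ _ := by gcongr; exact (hexp t ht).1
        have hfin : 0 ≤ α * N * ρ ^ k := by positivity
        calc _ ≤ (1 - 2 * β * α) * Real.exp ((n + 1 : ℕ) * B * (θ t - t))
              * (A * N * ρ ^ k * Real.exp (-((n + 1 : ℕ) * B * θ t)))
              + α * M * (n * (2 * (C * N * ρ ^ k))) := by gcongr
          _ = (1 - 2 * β * α) * A * N * ρ ^ k * W + (2 * n * M * C) * (α * N * ρ ^ k) := by
              rw [← hE]; ring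
          _ ≤ (1 - 2 * β * α) * A * N * ρ ^ k * W + (β * (A * W)) * (α * N * ρ ^ k) := by
              gcongr
          _ = A * N * ρ ^ (k + 1) * W := by rw [pow_succ, hρ]; ring
    refine (key k t ht).trans ?_
    calc _ ≤ A * N * (1 - β * α) ^ k * Real.exp Q :=
          mul_le_mul_of_nonneg_left (hexp t ht).2 (by positivity)
      _ = A * Real.exp Q * N * (1 - β * α) ^ k := by ring
      _ ≤ _ := by gcongr; linarith

/-- Half-orbit sums `∑_{k ≥ m} w ∘ θ^k` near an attracting fixed point `e` are `C^p`, with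
derivatives of size `O(N / α)`. Order `0` follows from order `1` because `w ∘ θ^k` vanishes at `e`;
the geometric series with ratio `1 - βα` produces the factor `1 / α`. -/
lemma one_sided_sum {a b c d e : ℝ} {p : ℕ} (hp : 1 ≤ p) (hab : a < b) (hcd : c < d)
    (hI : Icc c d ⊆ Icc a b) (he : e ∈ Icc c d) {M β B : ℝ} (hM : 0 ≤ M) (hβ : 0 < β) :
    ∃ C : ℝ, 0 ≤ C ∧ ∀ (α : ℝ) (θ w : ℝ → ℝ) (N : ℝ), 0 < α → 2 * β * α ≤ 1 →
      MapsTo θ (Icc c d) (Icc c d) → MapsTo θ (Icc a b) (Icc a b) →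
      ContDiffOn ℝ p θ (Icc a b) → ContDiffOn ℝ p w (Icc a b) →
      PullbackDecay p a b (1 - 2 * β * α) (α * M) B θ (Icc c d) →
      0 ≤ N → (∀ j ≤ p, ∀ t ∈ Icc c d, |iteratedDerivWithin j w (Icc a b) t| ≤ N) →
      θ e = e → w e = 0 → ∀ m : ℕ,
      ContDiffOn ℝ p (fun t => ∑' k, w (θ^[k + m] t)) (Icc c d) ∧
      ∀ j ≤ p, ∀ t ∈ Icc c d,
        |iteratedDerivWithin j (fun t => ∑' k, w (θ^[k + m] t)) (Icc c d) t| ≤ C / α * N := by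
  obtain ⟨C, hC0, hC⟩ := decay_of_pullback (a := a) (b := b) (B := B) hM hβ p le_rfl
  have hD : 0 ≤ C * (1 + (d - c)) := mul_nonneg hC0 (by linarith)
  refine ⟨C * (1 + (d - c)) / β, by positivity, ?_⟩
  intro α θ w N hα h2 hθI hθs hθ hw H hN hwN hθe hwe m
  have hs := uniqueDiffOn_Icc hab
  have hβα : 0 < β * α := by positivity
  have hρ0 : 0 ≤ 1 - β * α := by nlinarith
  have hρ1 : 1 - β * α < 1 := by linarith
  have hwk := contDiffOn_comp_iterate hθs hθ hw
  have hpos := hC α θ w (Icc c d) N hα h2 hI hθI hθs hθ hw H hN hwN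
  have hall : ∀ j ≤ p, ∀ k : ℕ, ∀ t ∈ Icc c d,
      |iteratedDerivWithin j (w ∘ θ^[k]) (Icc a b) t|
        ≤ C * (1 + (d - c)) * N * (1 - β * α) ^ k := by
    intro j hj k t ht
    rcases Nat.eq_zero_or_pos j with rfl | hj0
    · have hfix : θ^[k] e = e := Function.iterate_fixed hθe k
      have hmv := (convex_Icc c d).norm_image_sub_le_of_norm_hasDerivWithin_le
        (f := w ∘ θ^[k]) (f' := iteratedDerivWithin 1 (w ∘ θ^[k]) (Icc a b))
        (C := C * N * (1 - β * α) ^ k)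
        (fun x hx => by
          have := jet_of_contDiffOn hs (hwk k) (j := 0) (by omega) (hI hx)
          rw [iteratedDerivWithin_zero] at this
          exact this.mono hI)
        (fun x hx => hpos 1 le_rfl hp k x hx) he ht
      simp only [Function.comp_apply, hfix, hwe, sub_zero, Real.norm_eq_abs] at hmv
      rw [iteratedDerivWithin_zero, Function.comp_apply]
      have h1 : |t - e| ≤ 1 + (d - c) := by
        rw [abs_le]
        constructor <;> linarith [ht.1, ht.2, he.1, he.2]
      refine hmv.trans ?_
      calc _ ≤ C * N * (1 - β * α) ^ k * (1 + (d - c)) := by gcongr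
        _ = _ := by ring
    · refine (hpos j hj0 hj k t ht).trans ?_
      have : C * 1 ≤ C * (1 + (d - c)) := by gcongr; linarith
      rw [mul_one] at this
      gcongr
  have hgeo := (hasSum_geometric_of_lt_one hρ0 hρ1).mul_left (C * (1 + (d - c)) * N)
  have := contDiffOn_tsum_Icc hcd hs hI p (fun k => w ∘ θ^[k + m])
    (fun k => C * (1 + (d - c)) * N * (1 - β * α) ^ k) hgeo.summable (fun k => hwk _)
    (fun j hj k t ht => (hall j hj (k + m) t ht).trans (by
      have : (1 - β * α) ^ (k + m) ≤ (1 - β * α) ^ k :=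
        pow_le_pow_of_le_one hρ0 hρ1.le (by omega)
      gcongr))
  refine ⟨this.1, fun j hj t ht => (this.2 j hj t ht).trans_eq ?_⟩
  rw [hgeo.tsum_eq]
  have : 1 - (1 - β * α) = β * α := by ring
  rw [this]
  field_simp

/-! ### Contraction for the map and for its inverse -/

lemma pow_le_of_le_exp {q r x : ℝ} (hq : 0 ≤ q) (hr0 : 0 ≤ r) (hr1 : r ≤ 1)
    (h : q ≤ r * Real.exp x) {j : ℕ} (hj : 1 ≤ j) : q ^ j ≤ r * Real.exp (j * x) := by
  calc q ^ j ≤ (r * Real.exp x) ^ j := pow_le_pow_left₀ hq h j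
    _ = r ^ j * Real.exp (j * x) := by rw [mul_pow, Real.exp_nat_mul]
    _ ≤ r * Real.exp (j * x) := by
      gcongr
      exact pow_le_of_le_one hr0 hr1 (by omega)

lemma pullbackDecay_forward {p : ℕ} {a b M α r B : ℝ} {φ : ℝ → ℝ} {I : Set ℝ}
    (hPB : PullbackBound p a b M φ) (hM : 0 ≤ M) (hα0 : 0 ≤ α) (hα1 : α ≤ 1)
    (hr0 : 0 ≤ r) (hr1 : r ≤ 1)
    (hmaps : MapsTo (fun t => t + α * φ t) (Icc a b) (Icc a b)) (hI : I ⊆ Icc a b)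
    (hpos : ∀ t ∈ I, 0 ≤ 1 + α * derivWithin φ (Icc a b) t)
    (hle : ∀ t ∈ I, 1 + α * derivWithin φ (Icc a b) t ≤ r * Real.exp (B * (α * φ t))) :
    PullbackDecay p a b r (α * M) B (fun t => t + α * φ t) I := by
  intro j hj1 hj g hg t ht
  have h := hPB j hj α hα0 hα1 hmaps g (hg.of_le (by exact_mod_cast hj)) t (hI ht)
  have hq := pow_le_of_le_exp (hpos t ht) hr0 hr1 (hle t ht) hj1
  have hcomp : g ∘ (fun t => t + α * φ t) = fun x => g (x + α * φ x) := rfl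
  rw [hcomp]
  have h1 := abs_sub_abs_le_abs_sub (iteratedDerivWithin j (fun x => g (x + α * φ x)) (Icc a b) t)
    ((1 + α * derivWithin φ (Icc a b) t) ^ j
          * iteratedDerivWithin j g (Icc a b) (t + α * φ t))
  rw [abs_mul, abs_of_nonneg (pow_nonneg (hpos t ht) j)] at h1
  have h2 : (1 + α * derivWithin φ (Icc a b) t) ^ j
      * |iteratedDerivWithin j g (Icc a b) (t + α * φ t)|
      ≤ r * Real.exp (j * B * (t + α * φ t - t))
        * |iteratedDerivWithin j g (Icc a b) (t + α * φ t)| := by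
    gcongr
    refine hq.trans_eq ?_
    congr 2; ring
  have h3 : α * M * ∑ i ∈ Finset.Ico 1 j, |iteratedDerivWithin i g (Icc a b) (t + α * φ t)|
      ≤ α * M * ∑ i ∈ Finset.Ico 1 j, (|iteratedDerivWithin i g (Icc a b) (t + α * φ t)|
          + |iteratedDerivWithin i (fun x => g (x + α * φ x)) (Icc a b) t|) := by
    gcongr
    exact le_add_of_nonneg_right (abs_nonneg _)
  linarith

/-- The pullback estimate for `Φ`, applied to `g ∘ θ` with `θ = Φ⁻¹` and divided by `(Φ')^j`,
gives the corresponding estimate for the inverse map. The weight changes sign because `θ` moves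
points in the opposite direction. -/
lemma pullbackDecay_backward {p : ℕ} {a b M α r B : ℝ} {φ θ : ℝ → ℝ} {I : Set ℝ}
    (hPB : PullbackBound p a b M φ) (hM : 0 ≤ M) (hα0 : 0 ≤ α) (hα1 : α ≤ 1)
    (hr0 : 0 ≤ r) (hr1 : r ≤ 1)
    (hmaps : MapsTo (fun t => t + α * φ t) (Icc a b) (Icc a b)) (hI : I ⊆ Icc a b)
    (hθs : MapsTo θ (Icc a b) (Icc a b)) (hθc : ContDiffOn ℝ p θ (Icc a b))
    (hleft : ∀ t ∈ Icc a b, θ (t + α * φ t) = t)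
    (hright : ∀ t ∈ Icc a b, θ t + α * φ (θ t) = t)
    (hpos : ∀ t ∈ I, 1 / 2 ≤ 1 + α * derivWithin φ (Icc a b) (θ t))
    (hle : ∀ t ∈ I, 1 ≤ r * Real.exp (B * (α * φ (θ t)))
      * (1 + α * derivWithin φ (Icc a b) (θ t))) :
    PullbackDecay p a b r (α * (2 ^ p * M)) (-B) θ I := by
  intro j hj1 hj g hg t ht
  have htI := hI ht
  have hG : ContDiffOn ℝ p (g ∘ θ) (Icc a b) := hg.comp hθc hθs
  have h := hPB j hj α hα0 hα1 hmaps (g ∘ θ) (hG.of_le (by exact_mod_cast hj)) (θ t) (hθs htI)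
  have hcongr : EqOn (fun x => (g ∘ θ) (x + α * φ x)) g (Icc a b) := fun x hx => by
    simp [hleft x hx]
  rw [iteratedDerivWithin_congr hcongr (hθs htI), hright t htI] at h
  set P := 1 + α * derivWithin φ (Icc a b) (θ t) with hP
  have hP0 : 0 < P := by linarith [hpos t ht]
  have hq : P⁻¹ ≤ r * Real.exp (B * (α * φ (θ t))) := by
    rw [inv_le_iff_one_le_mul₀ hP0]
    exact hle t ht
  have hqj := pow_le_of_le_exp (inv_nonneg.2 hP0.le) hr0 hr1 hq hj1
  have hq2 : P⁻¹ ^ j ≤ 2 ^ p := by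
    have : P⁻¹ ≤ 2 := by
      rw [inv_le_comm₀ hP0 two_pos]
      linarith [hpos t ht]
    exact (pow_le_pow_left₀ (inv_nonneg.2 hP0.le) this j).trans
      (pow_le_pow_right₀ one_le_two hj)
  set T := ∑ i ∈ Finset.Ico 1 j, |iteratedDerivWithin i (g ∘ θ) (Icc a b) t|
  have hS0 : 0 ≤ T := Finset.sum_nonneg fun _ _ => abs_nonneg _
  have hφe : α * φ (θ t) = t - θ t := by linarith [hright t htI]
  rw [abs_sub_comm] at h
  have h1 := abs_sub_abs_le_abs_sub (P ^ j * iteratedDerivWithin j (g ∘ θ) (Icc a b) t)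
    (iteratedDerivWithin j g (Icc a b) (θ t))
  rw [abs_mul, abs_of_nonneg (pow_nonneg hP0.le j)] at h1
  have h2 : P ^ j * |iteratedDerivWithin j (g ∘ θ) (Icc a b) t|
      ≤ |iteratedDerivWithin j g (Icc a b) (θ t)| + α * M * T := by linarith
  have hinv : P⁻¹ ^ j * P ^ j = 1 := by rw [← mul_pow, inv_mul_cancel₀ hP0.ne', one_pow]
  calc |iteratedDerivWithin j (g ∘ θ) (Icc a b) t|
      = P⁻¹ ^ j * (P ^ j * |iteratedDerivWithin j (g ∘ θ) (Icc a b) t|) := by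
        rw [← mul_assoc, hinv, one_mul]
    _ ≤ P⁻¹ ^ j * (|iteratedDerivWithin j g (Icc a b) (θ t)| + α * M * T) := by
        gcongr
    _ = P⁻¹ ^ j * |iteratedDerivWithin j g (Icc a b) (θ t)| + P⁻¹ ^ j * (α * M * T) := by ring
    _ ≤ r * Real.exp (j * -B * (θ t - t)) * |iteratedDerivWithin j g (Icc a b) (θ t)|
        + 2 ^ p * (α * M * T) := by
        gcongr
        refine hqj.trans_eq ?_
        rw [hφe]
        congr 2; ring
    _ ≤ _ := by
        have : T ≤ ∑ i ∈ Finset.Ico 1 j, (|iteratedDerivWithin i g (Icc a b) (θ t)|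
          + |iteratedDerivWithin i (g ∘ θ) (Icc a b) t|) :=
          Finset.sum_le_sum fun i _ => le_add_of_nonneg_left (abs_nonneg _)
        have e : 2 ^ p * (α * M * T) = α * (2 ^ p * M) * T := by ring
        rw [e]
        gcongr

/-- If `F > 0` at the zeros of `G ≥ 0` on a compact set, then `F + B G` is bounded below by a
positive constant for some `B`. With `F = ∓φ'` and `G = φ`, this is what makes the multiplier
contracting away from the fixed point as well, after an exponential change of weight. -/
lemma exists_weight {K : Set ℝ} (hK : IsCompact K) {F G : ℝ → ℝ} (hF : Continuous F)
    (hG : Continuous G) (hG0 : ∀ x ∈ K, 0 ≤ G x) (h : ∀ x ∈ K, G x = 0 → 0 < F x) :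
    ∃ lam B : ℝ, 0 < lam ∧ 0 ≤ B ∧ ∀ x ∈ K, lam ≤ F x + B * G x := by
  -- Increasing open cover; the absolute value makes it increasing on the whole line.
  let U : ℕ → Set ℝ := fun n => {x | 1 / ((n : ℝ) + 1) < F x + n * |G x|}
  have hmono : ∀ m n : ℕ, m ≤ n → U m ⊆ U n := by
    intro m n hmn x hx
    have h1 : 1 / ((n : ℝ) + 1) ≤ 1 / ((m : ℝ) + 1) := by gcongr
    have h2 : (m : ℝ) * |G x| ≤ n * |G x| := by gcongr
    simp only [U, mem_ofPred_eq] at hx ⊢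
    linarith
  obtain ⟨n, hn⟩ := hK.elim_directed_cover U
    (fun n => isOpen_lt continuous_const (hF.add (continuous_const.mul hG.abs)))
    (fun x hx => by
      rw [mem_iUnion]
      rcases (hG0 x hx).eq_or_lt with h0 | h0
      · obtain ⟨n, hn⟩ := exists_nat_one_div_lt (h x hx h0.symm)
        exact ⟨n, by simpa [U, ← h0] using hn⟩
      · obtain ⟨n, hn⟩ := exists_nat_gt ((1 - F x) / G x)
        rw [div_lt_iff₀ h0] at hn
        refine ⟨n, ?_⟩
        have : 1 / ((n : ℝ) + 1) ≤ 1 := by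
          rw [div_le_one (by positivity)]
          linarith [n.cast_nonneg (α := ℝ)]
        simp only [U, mem_ofPred_eq, abs_of_pos h0]
        linarith)
    (fun m n => ⟨max m n, hmono _ _ (le_max_left _ _), hmono _ _ (le_max_right _ _)⟩)
  refine ⟨1 / ((n : ℝ) + 1), n, by positivity, by positivity, fun x hx => ?_⟩
  have := hn hx
  simp only [U, mem_ofPred_eq, abs_of_nonneg (hG0 x hx)] at this
  exact this.le

/-- The weighted multiplier of `Φ` is at most `1 - (lam / 4) α`; `f`, `f'` stand for the values
of `φ`, `φ'` at a point. -/
lemma forward_rate {α lam B f' f : ℝ} (hα : 0 ≤ α) (hlam : 0 ≤ lam) (hsmall : α * lam ≤ 1)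
    (h : lam ≤ -f' + B * f) :
    1 + α * f' ≤ (1 - lam / 4 * α) * Real.exp (B * (α * f)) := by
  have h1 : 1 + α * f' ≤ Real.exp (α * f') := by linarith [Real.add_one_le_exp (α * f')]
  have h2 : Real.exp (α * f') ≤ Real.exp (-(α * lam)) * Real.exp (B * (α * f)) := by
    rw [← Real.exp_add]
    apply Real.exp_le_exp.2
    nlinarith [mul_le_mul_of_nonneg_left h hα]
  have h3 : Real.exp (-(α * lam)) ≤ 1 - lam / 4 * α := by
    have h0 : 0 ≤ α * lam := mul_nonneg hα hlam
    have := Real.add_one_le_exp (α * lam)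
    rw [Real.exp_neg, inv_le_comm₀ (Real.exp_pos _) (by nlinarith), inv_eq_one_div,
      div_le_iff₀ (by nlinarith)]
    have : (α * lam + 1) * (1 - lam / 4 * α) ≤ Real.exp (α * lam) * (1 - lam / 4 * α) :=
      mul_le_mul_of_nonneg_right this (by nlinarith)
    nlinarith
  exact h1.trans (h2.trans (mul_le_mul_of_nonneg_right h3 (Real.exp_pos _).le))

/-- The weighted multiplier of `Φ⁻¹` is at most `1 - (lam / 4) α`. The second-order term
`α² B f f'` in `(1 + α B f)(1 + α f')` is what forces `α` to be small relative to `B`. -/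
lemma backward_rate {α lam B f' f A : ℝ} (hα : 0 ≤ α) (hlam : 0 ≤ lam) (hsmall : α * lam ≤ 1)
    (hB : 0 ≤ B) (hf : 0 ≤ f) (hfA : f ≤ A) (hf'A : -A ≤ f') (hA : 0 ≤ A)
    (hsmall2 : α * (A * (B * A)) ≤ lam / 4) (hpos : 0 ≤ 1 + α * f') (h : lam ≤ f' + B * f) :
    1 ≤ (1 - lam / 4 * α) * Real.exp (B * (α * f)) * (1 + α * f') := by
  have h0 : 0 ≤ α * lam := mul_nonneg hα hlam
  have h1 : 1 + α * (B * f) ≤ Real.exp (B * (α * f)) := by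
    have := Real.add_one_le_exp (B * (α * f))
    linarith
  have h2 : (1 + α * (B * f)) * (1 + α * f') ≤ Real.exp (B * (α * f)) * (1 + α * f') :=
    mul_le_mul_of_nonneg_right h1 hpos
  have h3 : -(A * (B * A)) ≤ (B * f) * f' := by
    have e1 : B * f ≤ B * A := mul_le_mul_of_nonneg_left hfA hB
    have e2 : 0 ≤ B * f := mul_nonneg hB hf
    nlinarith [mul_le_mul_of_nonneg_left hf'A e2, mul_le_mul_of_nonneg_right e1 hA]
  have h4 : 1 + 3 / 4 * (α * lam) ≤ (1 + α * (B * f)) * (1 + α * f') := by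
    have e1 := mul_le_mul_of_nonneg_left h hα
    have e2 := mul_le_mul_of_nonneg_left h3 (mul_nonneg hα hα)
    have e3 := mul_le_mul_of_nonneg_left hsmall2 hα
    nlinarith
  have h5 : (1 - lam / 4 * α) * (1 + 3 / 4 * (α * lam))
      ≤ (1 - lam / 4 * α) * (Real.exp (B * (α * f)) * (1 + α * f')) :=
    mul_le_mul_of_nonneg_left (h4.trans h2) (by nlinarith)
  rw [mul_assoc]
  refine le_trans ?_ h5
  nlinarith

/-! ### Smoothness of the inverse, gluing, and two-sided sums -/

/-- Inverse function theorem on a closed interval: if a `C^{p+1}` map `f` with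
nonvanishing derivative has a Lipschitz inverse `θ`, then `θ` is `C^p`, because
`θ' = 1 / (f' ∘ θ)` gains one derivative at a time. -/
lemma contDiffOn_inverse_Icc {a b : ℝ} (hab : a < b) {p : ℕ} {f θ : ℝ → ℝ}
    (hf : ContDiffOn ℝ (p + 1 : ℕ) f (Icc a b)) (hθs : MapsTo θ (Icc a b) (Icc a b))
    (hright : ∀ t ∈ Icc a b, f (θ t) = t)
    (hexp : ∀ x ∈ Icc a b, ∀ y ∈ Icc a b, |x - y| ≤ 2 * |f x - f y|)
    (hne : ∀ t ∈ Icc a b, derivWithin f (Icc a b) t ≠ 0) :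
    ContDiffOn ℝ p θ (Icc a b) := by
  have hs := uniqueDiffOn_Icc hab
  have hcont : ContinuousOn θ (Icc a b) := by
    have : LipschitzOnWith 2 θ (Icc a b) := LipschitzOnWith.of_dist_le_mul fun x hx y hy => by
      have := hexp _ (hθs hx) _ (hθs hy)
      rw [hright x hx, hright y hy] at this
      simpa [Real.dist_eq] using this
    exact this.continuousOn
  have hdf : ContDiffOn ℝ p (derivWithin f (Icc a b)) (Icc a b) :=
    ((contDiffOn_succ_iff_derivWithin hs).1 (by exact_mod_cast hf)).2.2
  have hder : ∀ t ∈ Icc a b,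
      HasDerivWithinAt θ (derivWithin f (Icc a b) (θ t))⁻¹ (Icc a b) t := by
    intro t ht
    have h1 : HasDerivWithinAt f (derivWithin f (Icc a b) (θ t)) (Icc a b) (θ t) :=
      (hf.differentiableOn (by simp) _ (hθs ht)).hasDerivWithinAt
    have h2 : Tendsto θ (𝓝[Icc a b] t) (𝓝[Icc a b] (θ t)) :=
      (hcont t ht).tendsto_nhdsWithin hθs
    exact HasFDerivWithinAt.of_local_left_inverse
      (f' := ContinuousLinearEquiv.unitsEquivAut ℝ (Units.mk0 _ (hne _ (hθs ht)))) h2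
      (h1.hasFDerivWithinAt.congr_fderiv (by ext; simp)) ht
      (eventually_nhdsWithin_of_forall hright) |>.hasDerivWithinAt.congr_deriv (by simp)
  have H : ∀ n ≤ p, ContDiffOn ℝ n θ (Icc a b) := by
    intro n
    induction n with
    | zero => intro _; exact contDiffOn_zero.2 hcont
    | succ n ih =>
      intro hn
      have h := ih (by omega)
      push_cast
      refine (contDiffOn_succ_iff_derivWithin hs).2
        ⟨fun t ht => (hder t ht).differentiableWithinAt, by simp, ?_⟩
      refine ContDiffOn.congr (f := fun t => (derivWithin f (Icc a b) (θ t))⁻¹) ?_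
        fun t ht => (hder t ht).derivWithin (hs t ht)
      refine ContDiffOn.inv ?_ fun t ht => hne _ (hθs ht)
      exact (hdf.of_le (by exact_mod_cast (by omega : n ≤ p))).comp h hθs
  exact H p le_rfl

/-- Functions of class `C^p` on two overlapping intervals that agree with `v` glue to a `C^p`
function, and derivative bounds carry over because within-derivatives depend only on the germ of
the set. -/
lemma glue {a b m₁ m₂ D : ℝ} {p : ℕ} (h1 : a < m₁) (h12 : m₁ < m₂) (h2 : m₂ < b)
    {v vL vR : ℝ → ℝ} (hL : EqOn v vL (Icc a m₂)) (hR : EqOn v vR (Icc m₁ b))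
    (hLc : ContDiffOn ℝ p vL (Icc a m₂)) (hRc : ContDiffOn ℝ p vR (Icc m₁ b))
    (hLb : ∀ j ≤ p, ∀ t ∈ Icc a m₂, |iteratedDerivWithin j vL (Icc a m₂) t| ≤ D)
    (hRb : ∀ j ≤ p, ∀ t ∈ Icc m₁ b, |iteratedDerivWithin j vR (Icc m₁ b) t| ≤ D) :
    ContDiffOn ℝ p v (Icc a b) ∧
      ∀ j ≤ p, ∀ t ∈ Icc a b, |iteratedDerivWithin j v (Icc a b) t| ≤ D := by
  have heL : ∀ t, t < m₂ → (Icc a b : Set ℝ) =ᶠ[𝓝 t] Icc a m₂ := fun t ht => by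
    filter_upwards [Iio_mem_nhds ht] with x hx
    exact propext ⟨fun h => ⟨h.1, le_of_lt hx⟩, fun h => ⟨h.1, h.2.trans h2.le⟩⟩
  have heR : ∀ t, m₁ < t → (Icc a b : Set ℝ) =ᶠ[𝓝 t] Icc m₁ b := fun t ht => by
    filter_upwards [Ioi_mem_nhds ht] with x hx
    exact propext ⟨fun h => ⟨le_of_lt hx, h.2⟩, fun h => ⟨h1.le.trans h.1, h.2⟩⟩
  constructor
  · intro t ht
    rcases lt_or_ge t m₂ with h | h
    · have htL : t ∈ Icc a m₂ := ⟨ht.1, h.le⟩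
      exact (contDiffWithinAt_congr_set (heL t h)).2
        ((hLc t htL).congr hL (hL htL))
    · have htR : t ∈ Icc m₁ b := ⟨h12.le.trans h, ht.2⟩
      exact (contDiffWithinAt_congr_set (heR t (h12.trans_le h))).2
        ((hRc t htR).congr hR (hR htR))
  · intro j hj t ht
    rcases lt_or_ge t m₂ with h | h
    · have htL : t ∈ Icc a m₂ := ⟨ht.1, h.le⟩
      have := hLb j hj t htL
      rwa [← iteratedDerivWithin_congr hL htL, iteratedDerivWithin,
        ← iteratedFDerivWithin_congr_set (heL t h)] at this
    · have htR : t ∈ Icc m₁ b := ⟨h12.le.trans h, ht.2⟩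
      have := hRb j hj t htR
      rwa [← iteratedDerivWithin_congr hR htR, iteratedDerivWithin,
        ← iteratedFDerivWithin_congr_set (heR t (h12.trans_le h))] at this

lemma tsum_nat_add_tsum_neg {f : ℤ → ℝ} {c : ℝ} (h : HasSum f c) :
    ∑' k : ℕ, f k + ∑' k : ℕ, f (-(k + 1 : ℕ)) = c := by
  have h1 : Summable fun k : ℕ => f k := h.summable.comp_injective Nat.cast_injective
  have h2 : Summable fun k : ℕ => f (-(k + 1 : ℤ)) :=
    h.summable.comp_injective fun x y hxy => by simpa using hxy
  push_cast
  exact (HasSum.of_nat_of_neg_add_one h1.hasSum h2.hasSum).unique h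

/-- If `α sup |φ'| ≤ 1/2`, the map `t ↦ t + α φ(t)` shrinks distances by at most a factor `2`;
in particular it is injective with Lipschitz inverse. -/
lemma expand_of_deriv_le {a b α S : ℝ} {φ : ℝ → ℝ} (hφ : Differentiable ℝ φ)
    (hS : ∀ t ∈ Icc a b, |deriv φ t| ≤ S) (hα : 0 ≤ α) (hαS : α * S ≤ 1 / 2) :
    ∀ x ∈ Icc a b, ∀ y ∈ Icc a b, |x - y| ≤ 2 * |(x + α * φ x) - (y + α * φ y)| := by
  intro x hx y hy
  have h := (convex_Icc a b).norm_image_sub_le_of_norm_deriv_le (f := φ)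
    (fun t _ => hφ t) hS hy hx
  simp only [Real.norm_eq_abs] at h
  have h1 : α * |φ x - φ y| ≤ 1 / 2 * |x - y| := by
    calc _ ≤ α * (S * |x - y|) := by gcongr
      _ = α * S * |x - y| := by ring
      _ ≤ _ := by gcongr
  have h2 : |x - y| ≤ |(x + α * φ x) - (y + α * φ y)| + |α * (φ x - φ y)| := by
    have := abs_sub ((x + α * φ x) - (y + α * φ y)) (α * (φ x - φ y))
    calc |x - y| = |((x + α * φ x) - (y + α * φ y)) - (α * (φ x - φ y))| := by congr 1; ring
      _ ≤ _ := this
  rw [abs_mul, abs_of_nonneg hα] at h2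
  linarith

/-! ### Solving the cohomological equation -/

lemma iteratedDerivWithin_sub_const_abs_le {s : Set ℝ} {p : ℕ} {F : ℝ → ℝ} {c D : ℝ}
    (hF : ∀ j ≤ p, ∀ t ∈ s, |iteratedDerivWithin j F s t| ≤ D) :
    ∀ j ≤ p, ∀ t ∈ s, |iteratedDerivWithin j (fun t => F t - c) s t| ≤ D + |c| := by
  intro j hj t ht
  have h := hF j hj t ht
  rcases Nat.eq_zero_or_pos j with rfl | hj0
  · rw [iteratedDerivWithin_zero] at h ⊢
    exact (abs_sub _ _).trans (by gcongr)
  · have e : (fun t => F t - c) = fun t => -c + F t := by ext; ring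
    rw [e, iteratedDerivWithin_const_add hj0]
    linarith [abs_nonneg c]

/-- The solution is `-∑_{k ≥ 0} w ∘ f^k` near `b` and `∑_{k > 0} w ∘ θ^k - c` near `a`. The two
formulas agree in the interior since the two-sided sum is constantly `c`; evaluating the half-sums
at one interior point also gives `|c| ≤ 2 D`. -/
lemma exists_solution {a b m₁ m₂ c D : ℝ} {p : ℕ} {f θ w : ℝ → ℝ}
    (h1 : a < m₁) (h12 : m₁ < m₂) (h2 : m₂ < b)
    (hfs : MapsTo f (Ioo a b) (Ioo a b)) (hfa : f a = a) (hfb : f b = b)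
    (hwa : w a = 0) (hwb : w b = 0)
    (hsum : ∀ t ∈ Ioo a b, Summable fun k => w (f^[k] t))
    (hc : ∀ t ∈ Ioo a b, ∑' k, w (f^[k] t) + ∑' k, w (θ^[k + 1] t) = c)
    (hR : ContDiffOn ℝ p (fun t => ∑' k, w (f^[k] t)) (Icc m₁ b) ∧ ∀ j ≤ p, ∀ t ∈ Icc m₁ b,
      |iteratedDerivWithin j (fun t => ∑' k, w (f^[k] t)) (Icc m₁ b) t| ≤ D)
    (hL : ContDiffOn ℝ p (fun t => ∑' k, w (θ^[k + 1] t)) (Icc a m₂) ∧ ∀ j ≤ p, ∀ t ∈ Icc a m₂,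
      |iteratedDerivWithin j (fun t => ∑' k, w (θ^[k + 1] t)) (Icc a m₂) t| ≤ D) :
    ∃ v : ℝ → ℝ, ContDiffOn ℝ p v (Icc a b) ∧ (∀ t ∈ Icc a b, v (f t) - v t = w t) ∧
      ∀ j ≤ p, ∀ t ∈ Icc a b, |iteratedDerivWithin j v (Icc a b) t| ≤ 3 * D := by
  set R : ℝ → ℝ := fun t => ∑' k, w (f^[k] t) with hRdef
  set L : ℝ → ℝ := fun t => ∑' k, w (θ^[k + 1] t) with hLdef
  have hRb := hR.2 0 (by omega) m₁ ⟨le_rfl, (h12.trans h2).le⟩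
  have hLb := hL.2 0 (by omega) m₁ ⟨h1.le, h12.le⟩
  rw [iteratedDerivWithin_zero] at hRb hLb
  have hD : 0 ≤ D := (abs_nonneg _).trans hRb
  have hcD : |c| ≤ 2 * D := by
    rw [← hc m₁ ⟨h1, h12.trans h2⟩]
    exact (abs_add_le _ _).trans (by linarith)
  have hLR : ∀ t ∈ Ioo a b, L t - c = -R t := fun t ht => by linarith [hc t ht]
  set v : ℝ → ℝ := fun t => if t ≤ m₁ then L t - c else -R t with hv
  have hvL : EqOn v (fun t => L t - c) (Icc a m₂) := by
    intro t ht
    by_cases h : t ≤ m₁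
    · simp [hv, h]
    · simp only [hv, h, if_false]
      exact (hLR t ⟨h1.trans (not_le.1 h), ht.2.trans_lt h2⟩).symm
  have hvR : EqOn v (fun t => -R t) (Icc m₁ b) := by
    intro t ht
    by_cases h : t ≤ m₁
    · simp only [hv, h, if_true]
      exact hLR t ⟨h1.trans_le ht.1, h.trans_lt (h12.trans h2)⟩
    · simp [hv, h]
  have hvI : ∀ t ∈ Ioo a b, v t = -R t := by
    intro t ht
    rcases le_total t m₁ with h | h
    · rw [hvL ⟨ht.1.le, h.trans h12.le⟩]
      exact hLR t ht
    · exact hvR ⟨h, ht.2.le⟩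
  obtain ⟨g1, g2⟩ := glue (D := 3 * D) h1 h12 h2 hvL hvR (hL.1.sub contDiffOn_const) hR.1.neg
    (fun j hj t ht => (iteratedDerivWithin_sub_const_abs_le hL.2 j hj t ht).trans (by linarith))
    (fun j hj t ht => by
      rw [iteratedDerivWithin_fun_neg, abs_neg]
      linarith [hR.2 j hj t ht])
  refine ⟨v, g1, fun t ht => ?_, g2⟩
  rcases ht.1.eq_or_lt with rfl | hta
  · simp [hfa, hwa]
  rcases ht.2.eq_or_lt with rfl | htb
  · simp [hfb, hwb]
  rw [hvI t ⟨hta, htb⟩, hvI _ (hfs ⟨hta, htb⟩)]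
  have := (hsum t ⟨hta, htb⟩).tsum_eq_zero_add
  simp only [Function.iterate_zero, id, Function.iterate_succ, Function.comp_apply] at this
  simp only [hRdef]
  linarith

lemma abs_iteratedDerivWithin_le_cpNorm {p : ℕ} {a b : ℝ} (hab : a < b) {w : ℝ → ℝ}
    (hw : ContDiffOn ℝ p w (Icc a b)) :
    ∀ j ≤ p, ∀ t ∈ Icc a b, |iteratedDerivWithin j w (Icc a b) t| ≤ cpNorm p a b w := by
  intro j hj t ht
  obtain ⟨A, hA0, hA⟩ := exists_bound_iteratedDerivWithin hab hw
  have hbdd : BddAbove (range fun t : Icc a b => ∑ j ∈ Finset.range (p + 1),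
      |iteratedDerivWithin j w (Icc a b) (t : ℝ)|) := by
    refine ⟨∑ j ∈ Finset.range (p + 1), A, ?_⟩
    rintro _ ⟨x, rfl⟩
    exact Finset.sum_le_sum fun i hi => hA i (Finset.mem_range_succ_iff.1 hi) x x.2
  refine le_trans ?_ (le_ciSup hbdd ⟨t, ht⟩)
  exact Finset.single_le_sum (f := fun j => |iteratedDerivWithin j w (Icc a b) t|)
    (fun _ _ => abs_nonneg _) (Finset.mem_range_succ_iff.2 hj)

lemma cpNorm_le {p : ℕ} {a b D : ℝ} (hab : a < b) {v : ℝ → ℝ}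
    (h : ∀ j ≤ p, ∀ t ∈ Icc a b, |iteratedDerivWithin j v (Icc a b) t| ≤ D) :
    cpNorm p a b v ≤ (p + 1) * D := by
  have : Nonempty (Icc a b) := ⟨⟨a, left_mem_Icc.2 hab.le⟩⟩
  refine ciSup_le fun t => ?_
  refine (Finset.sum_le_card_nsmul _ _ D fun j hj =>
    h j (Finset.mem_range_succ_iff.1 hj) t t.2).trans ?_
  simp

/-- The given `ℤ`-indexed iterates are the usual iterates of `f` and of its inverse `θ`. -/
lemma orbit_eq {a b : ℝ} {f θ : ℝ → ℝ} {Ψ : ℤ → ℝ → ℝ}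
    (hinj : InjOn f (Icc a b)) (hΨ0 : ∀ t ∈ Icc a b, Ψ 0 t = t)
    (hΨsucc : ∀ k, ∀ t ∈ Icc a b, Ψ (k + 1) t = f (Ψ k t))
    (hΨmem : ∀ k, ∀ t ∈ Icc a b, Ψ k t ∈ Icc a b)
    (hθs : MapsTo θ (Icc a b) (Icc a b)) (hright : ∀ t ∈ Icc a b, f (θ t) = t) :
    ∀ k : ℕ, ∀ t ∈ Icc a b, Ψ k t = f^[k] t ∧ Ψ (-(k : ℤ)) t = θ^[k] t := by
  intro k
  induction k with
  | zero => intro t ht; simp [hΨ0 t ht]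
  | succ k ih =>
    intro t ht
    obtain ⟨e1, e2⟩ := ih t ht
    constructor
    · push_cast
      rw [hΨsucc _ t ht, e1, Function.iterate_succ_apply']
    · rw [Function.iterate_succ_apply', ← e2]
      refine hinj (hΨmem _ t ht) (hθs (hΨmem _ t ht)) ?_
      rw [hright _ (hΨmem _ t ht), ← hΨsucc _ t ht]
      congr 1
      push_cast
      ring

theorem stmt_19
    (p : ℕ) (hp : 1 ≤ p)
    (a b : ℝ) (hab : a < b)
    (φ : ℝ → ℝ) (hφreg : ContDiff ℝ (p + 1 : ℕ) φ)
    (hφa : φ a = 0) (hφb : φ b = 0)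
    (hφpos : ∀ t ∈ Set.Ioo a b, 0 < φ t)
    (hda : 0 < deriv φ a) (hdb : deriv φ b < 0)
    (S : ℝ) (hS : S = ⨆ t : Set.Icc a b, |deriv φ (t : ℝ)|)
    (Ψ : ℝ → ℤ → ℝ → ℝ)
    (hΨ0 : ∀ α : ℝ, 0 < α → α * S < 1 → ∀ t ∈ Set.Icc a b, Ψ α 0 t = t)
    (hΨsucc : ∀ α : ℝ, 0 < α → α * S < 1 → ∀ (k : ℤ), ∀ t ∈ Set.Icc a b,
      Ψ α (k + 1) t = Ψ α k t + α * φ (Ψ α k t))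
    (hΨmem : ∀ α : ℝ, 0 < α → α * S < 1 → ∀ (k : ℤ), ∀ t ∈ Set.Icc a b,
      Ψ α k t ∈ Set.Icc a b) :
    ∃ α₀ : ℝ, 0 < α₀ ∧ α₀ * S < 1 ∧ ∃ K : ℝ, 0 < K ∧
      ∀ α : ℝ, 0 < α → α ≤ α₀ →
        ∀ w : ℝ → ℝ, ContDiffOn ℝ (p : ℕ) w (Set.Icc a b) → w a = 0 → w b = 0 →
          (∃ c : ℝ, ∀ t ∈ Set.Ioo a b, HasSum (fun k : ℤ => w (Ψ α k t)) c) →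
          ∃ v : ℝ → ℝ, ContDiffOn ℝ (p : ℕ) v (Set.Icc a b) ∧
            (∀ t ∈ Set.Icc a b, v (t + α * φ t) - v t = w t) ∧
            cpNorm p a b v ≤ (K / α) * cpNorm p a b w := by
  have hs := uniqueDiffOn_Icc hab
  have hφd : Differentiable ℝ φ := hφreg.differentiable (by simp)
  have hφ'c : Continuous (deriv φ) := hφreg.continuous_deriv (by exact_mod_cast Nat.le_add_left 1 p)
  have hφc : Continuous φ := hφd.continuous
  have hdw : ∀ t ∈ Icc a b, derivWithin φ (Icc a b) t = deriv φ t := fun t ht =>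
    (hφd t).derivWithin (hs t ht)
  have hSle : ∀ t ∈ Icc a b, |deriv φ t| ≤ S := by
    intro t ht
    obtain ⟨A, hA⟩ := isCompact_Icc.exists_bound_of_continuousOn (hφ'c.continuousOn (s := Icc a b))
    rw [hS]
    exact le_ciSup (f := fun t : Icc a b => |deriv φ (t : ℝ)|)
      ⟨A, by rintro _ ⟨x, rfl⟩; exact hA x x.2⟩ ⟨t, ht⟩
  have hS0 : 0 < S := hda.trans_le ((le_abs_self _).trans (hSle a (left_mem_Icc.2 hab.le)))
  have hφ0 : ∀ t ∈ Icc a b, 0 ≤ φ t := by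
    intro t ht
    rcases ht.1.eq_or_lt with rfl | hta
    · exact hφa.ge
    rcases ht.2.eq_or_lt with rfl | htb
    · exact hφb.ge
    exact (hφpos t ⟨hta, htb⟩).le
  obtain ⟨A₁, hA₁⟩ := isCompact_Icc.exists_bound_of_continuousOn (hφc.continuousOn (s := Icc a b))
  obtain ⟨m₁, ham₁, hm₁b⟩ := exists_between hab
  obtain ⟨m₂, hm₁₂, hm₂b⟩ := exists_between hm₁b
  have hIR : Icc m₁ b ⊆ Icc a b := Icc_subset_Icc_left ham₁.le
  have hIL : Icc a m₂ ⊆ Icc a b := Icc_subset_Icc_right hm₂b.le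
  -- Near `b` the forward map contracts since `φ' b < 0`; near `a` the inverse map contracts since
  -- `φ' a > 0`.
  obtain ⟨lR, BR, hlR, hBR, hrateR⟩ := exists_weight (isCompact_Icc (a := m₁) (b := b))
    hφ'c.neg hφc (fun x hx => hφ0 x (hIR hx)) (fun x hx hx0 => by
      rcases hx.2.eq_or_lt with rfl | hxb
      · exact neg_pos.2 hdb
      · exact absurd hx0 (hφpos x ⟨ham₁.trans_le hx.1, hxb⟩).ne')
  obtain ⟨lL, BL, hlL, hBL, hrateL⟩ := exists_weight (isCompact_Icc (a := a) (b := m₂))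
    hφ'c hφc (fun x hx => hφ0 x (hIL hx)) (fun x hx hx0 => by
      rcases hx.1.eq_or_lt with rfl | hxa
      · exact hda
      · exact absurd hx0 (hφpos x ⟨hxa, hx.2.trans_lt hm₂b⟩).ne')
  obtain ⟨M, hM0, hPB⟩ := pullback_estimate hab hφreg.contDiffOn p le_rfl
  -- The rate `lam / 8` is half of the one-step rate `lam / 4` of `forward_rate` and
  -- `backward_rate`, as `one_sided_sum` asks for a contraction by `1 - 2βα`.
  obtain ⟨CR, hCR0, hCR⟩ := one_sided_sum (B := BR) hp hab hm₁b hIR (right_mem_Icc.2 hm₁b.le) hM0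
    (by positivity : 0 < lR / 8)
  obtain ⟨CL, hCL0, hCL⟩ := one_sided_sum (B := -BL) hp hab (ham₁.trans hm₁₂) hIL
    (left_mem_Icc.2 (ham₁.trans hm₁₂).le) (by positivity : 0 ≤ 2 ^ p * M)
    (by positivity : 0 < lL / 8)
  set A : ℝ := max S (max A₁ 0) with hA
  have hA0 : 0 ≤ A := le_max_of_le_right (le_max_right _ _)
  have hSA : S ≤ A := le_max_left _ _
  have hφA : ∀ t ∈ Icc a b, φ t ≤ A := fun t ht =>
    (le_abs_self _).trans ((hA₁ t ht).trans ((le_max_left _ _).trans (le_max_right _ _)))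
  obtain ⟨α₀, hα₀, hα₀1, hα₀S, hα₀R, hα₀L, hα₀B⟩ : ∃ α₀ : ℝ, 0 < α₀ ∧ α₀ ≤ 1 ∧ α₀ * S ≤ 1 / 2 ∧
      α₀ * lR ≤ 1 ∧ α₀ * lL ≤ 1 ∧ α₀ * (A * (BL * A)) ≤ lL / 4 := by
    -- Each condition holds for all sufficiently small positive `α₀`.
    have key : ∀ X Y : ℝ, 0 < Y → ∀ᶠ x in 𝓝[>] (0 : ℝ), x * X ≤ Y := fun X Y hY => by
      have : Tendsto (fun x : ℝ => x * X) (𝓝[>] 0) (𝓝 0) := by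
        have : Tendsto (fun x : ℝ => x * X) (𝓝 0) (𝓝 (0 * X)) := tendsto_id.mul_const X
        rw [zero_mul] at this
        exact this.mono_left nhdsWithin_le_nhds
      exact (this.eventually_lt_const hY).mono fun _ h => h.le
    obtain ⟨x, h0, h1, h2, h3, h4, h5⟩ := (eventually_mem_nhdsWithin.and ((key 1 1 one_pos).and
      ((key S (1 / 2) (by norm_num)).and ((key lR 1 one_pos).and ((key lL 1 one_pos).and
        (key (A * (BL * A)) (lL / 4) (by positivity))))))).exists
    exact ⟨x, h0, by linarith, h2, h3, h4, h5⟩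
  refine ⟨α₀, hα₀, by linarith, (p + 1) * (3 * (CR + CL + 1)), by positivity, ?_⟩
  intro α hα hαle w hw hwa hwb ⟨c, hc⟩
  have hα1 : α ≤ 1 := hαle.trans hα₀1
  have hmul : ∀ X Y : ℝ, 0 ≤ X → α₀ * X ≤ Y → α * X ≤ Y := fun X Y hX h =>
    (mul_le_mul_of_nonneg_right hαle hX).trans h
  have hαS := hmul S _ hS0.le hα₀S
  have hαR := hmul lR _ hlR.le hα₀R
  have hαL := hmul lL _ hlL.le hα₀L
  have hαB := hmul (A * (BL * A)) _ (by positivity) hα₀B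
  have hαS1 : α * S < 1 := by linarith
  have hΨ0 := hΨ0 α hα hαS1
  have hΨsucc := hΨsucc α hα hαS1
  have hΨmem := hΨmem α hα hαS1
  set f : ℝ → ℝ := fun t => t + α * φ t with hf
  set θ : ℝ → ℝ := Ψ α (-1) with hθ
  have hexp := expand_of_deriv_le hφd hSle hα.le hαS
  have hfinj : InjOn f (Icc a b) := fun x hx y hy hxy => by
    have h := hexp x hx y hy
    have e : x + α * φ x - (y + α * φ y) = 0 := sub_eq_zero.2 hxy
    rw [e, abs_zero, mul_zero] at h
    exact sub_eq_zero.1 (abs_nonpos_iff.1 h)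
  have hfs : MapsTo f (Icc a b) (Icc a b) := fun t ht => by
    have h1 := hΨmem (0 + 1) t ht
    rwa [hΨsucc 0 t ht, hΨ0 t ht] at h1
  have hθs : MapsTo θ (Icc a b) (Icc a b) := fun t ht => hΨmem _ t ht
  have hright : ∀ t ∈ Icc a b, f (θ t) = t := fun t ht => by
    have h1 := hΨsucc (-1) t ht
    rw [neg_add_cancel, hΨ0 t ht] at h1
    exact h1.symm
  have hleft : ∀ t ∈ Icc a b, θ (f t) = t := fun t ht =>
    hfinj (hθs (hfs ht)) ht (hright _ (hfs ht))
  have hfa : f a = a := by simp [hf, hφa]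
  have hfb : f b = b := by simp [hf, hφb]
  have hθa : θ a = a := by simpa [hfa] using hleft a (left_mem_Icc.2 hab.le)
  have hfI : MapsTo f (Ioo a b) (Ioo a b) := fun t ht => by
    have ht' := Ioo_subset_Icc_self ht
    have h := hfs ht'
    refine ⟨h.1.lt_of_ne fun e => ht.1.ne ?_, h.2.lt_of_ne fun e => ht.2.ne ?_⟩
    · exact hfinj (left_mem_Icc.2 hab.le) ht' (hfa.trans e)
    · exact hfinj ht' (right_mem_Icc.2 hab.le) (e.trans hfb.symm)
  have hfR : MapsTo f (Icc m₁ b) (Icc m₁ b) := fun t ht => by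
    have h := mul_nonneg hα.le (hφ0 t (hIR ht))
    exact ⟨ht.1.trans (le_add_of_nonneg_right h), (hfs (hIR ht)).2⟩
  have hθle : ∀ t ∈ Icc a b, θ t ≤ t := fun t ht => by
    have h := mul_nonneg hα.le (hφ0 _ (hθs ht))
    have h' : θ t + α * φ (θ t) = t := hright t ht
    linarith
  have hθL : MapsTo θ (Icc a m₂) (Icc a m₂) := fun t ht =>
    ⟨(hθs (hIL ht)).1, (hθle t (hIL ht)).trans ht.2⟩
  have hfc : ContDiff ℝ (p + 1 : ℕ) f := contDiff_id.add (contDiff_const.mul hφreg)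
  have hfder : ∀ t ∈ Icc a b, 1 / 2 ≤ 1 + α * derivWithin φ (Icc a b) t := fun t ht => by
    rw [hdw t ht]
    have := mul_le_mul_of_nonneg_left (abs_le.1 (hSle t ht)).1 hα.le
    linarith
  have hθc : ContDiffOn ℝ p θ (Icc a b) := by
    refine contDiffOn_inverse_Icc hab hfc.contDiffOn hθs hright hexp fun t ht => ?_
    have : HasDerivWithinAt f (1 + α * derivWithin φ (Icc a b) t) (Icc a b) t :=
      (hasDerivWithinAt_id t _).add (((hφd t).differentiableWithinAt.hasDerivWithinAt).const_mul α)
    rw [this.derivWithin (hs t ht)]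
    linarith [hfder t ht]
  have hN := abs_iteratedDerivWithin_le_cpNorm hab hw
  set N := cpNorm p a b w with hNdef
  have hN0 : 0 ≤ N := (abs_nonneg _).trans (hN 0 (by omega) a (left_mem_Icc.2 hab.le))
  have hrR : 2 * (lR / 8) * α = lR / 4 * α := by ring
  have hrL : 2 * (lL / 8) * α = lL / 4 * α := by ring
  have hlRα : 0 ≤ lR / 4 * α := by positivity
  have hlLα : 0 ≤ lL / 4 * α := by positivity
  have hR := hCR α f w N hα (by linarith) hfR hfs
    (hfc.of_le (by exact_mod_cast Nat.le_succ p)).contDiffOn hw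
    (pullbackDecay_forward hPB hM0 hα.le hα1 (by linarith) (by linarith) hfs hIR
      (fun t ht => by linarith [hfder t (hIR ht)])
      (fun t ht => by
        rw [hdw t (hIR ht), hrR]
        exact forward_rate hα.le hlR.le hαR (hrateR t ht)))
    hN0 (fun j hj t ht => hN j hj t (hIR ht)) hfb hwb 0
  have hL := hCL α θ w N hα (by linarith) hθL hθs hθc hw
    (pullbackDecay_backward hPB hM0 hα.le hα1 (by linarith) (by linarith) hfs hIL hθs hθc
      hleft hright (fun t ht => hfder _ (hθs (hIL ht)))
      (fun t ht => by
        have htθ := hθs (hIL ht)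
        have h1 := hfder _ htθ
        rw [hdw _ htθ] at h1 ⊢
        rw [hrL]
        exact backward_rate hα.le hlL.le hαL hBL (hφ0 _ htθ) (hφA _ htθ)
          (by linarith [(abs_le.1 (hSle _ htθ)).1]) hA0 hαB (by linarith)
          (hrateL _ (hθL ht))))
    hN0 (fun j hj t ht => hN j hj t (hIL ht)) hθa hwa 1
  have horb := orbit_eq (Ψ := Ψ α) hfinj hΨ0 hΨsucc hΨmem hθs hright
  set D := (CR + CL) / α * N with hD
  have hRD : CR / α * N ≤ D := by rw [hD]; gcongr; linarith
  have hLD : CL / α * N ≤ D := by rw [hD]; gcongr; linarith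
  obtain ⟨v, hv1, hv2, hv3⟩ := exists_solution (θ := θ) (c := c) (D := D) ham₁ hm₁₂ hm₂b hfI hfa hfb
    hwa hwb
    (fun t ht => by
      have h := (hc t ht).summable.comp_injective (Nat.cast_injective (R := ℤ))
      refine h.congr fun k => ?_
      simp [(horb k t (Ioo_subset_Icc_self ht)).1])
    (fun t ht => by
      have h := tsum_nat_add_tsum_neg (hc t ht)
      simpa only [(horb _ t (Ioo_subset_Icc_self ht)).1, (horb _ t (Ioo_subset_Icc_self ht)).2]
        using h)
    ⟨hR.1, fun j hj t ht => (hR.2 j hj t ht).trans hRD⟩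
    ⟨hL.1, fun j hj t ht => (hL.2 j hj t ht).trans hLD⟩
  refine ⟨v, hv1, hv2, (cpNorm_le hab hv3).trans ?_⟩
  have : D ≤ (CR + CL + 1) / α * N :=
    mul_le_mul_of_nonneg_right (div_le_div_of_nonneg_right (by linarith) hα.le) hN0
  calc (p + 1 : ℝ) * (3 * D) ≤ (p + 1) * (3 * ((CR + CL + 1) / α * N)) := by gcongr
    _ = _ := by ring
end
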